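/- arXiv:2407.04429 — 9 statements merged into one kernel-verified Lean document; each statement's English description precedes it below -/
import Mathlib

section
/- Let s ≥ 1 be an integer and let P and Q be s×s real matrices that are substochastic, i.e., all entries are nonnegative and every row sum is at most 1. Then |det(P − Q)| ≤ 1. -/
/-!
Every substochastic vector is a convex combination of integral substochastic vectors (the zero
vector and the unit vectors), so every row of `P - Q` is a convex combination of differences of
such vectors. Since `det` is linear in each row and `[-1, 1]` is convex, it suffices to treat
integral `P` and `Q`. There, either all row sums of `P - Q` vanish and the determinant is zero, or
some row of `P - Q` has absolute row sum at most one and Laplace expansion along it reduces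
the dimension.
-/

open Finset
open scoped Pointwise

/-- The sub-probability vectors indexed by `ι`, i.e. the possible rows of a substochastic matrix;
the analogue of `stdSimplex` with total mass at most one. -/
def subStdSimplex (R ι : Type*) [Semiring R] [PartialOrder R] [Fintype ι] : Set (ι → R) :=
  {v | (∀ j, 0 ≤ v j) ∧ ∑ j, v j ≤ 1}

theorem multilinearMap_apply_mem_of_mem_convexHull {𝕜 ι F : Type*} {E : ι → Type*}
    [Semiring 𝕜] [PartialOrder 𝕜] [Finite ι]
    [∀ i, AddCommMonoid (E i)] [∀ i, Module 𝕜 (E i)] [AddCommMonoid F] [Module 𝕜 F]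
    (f : MultilinearMap 𝕜 E F) {S : ∀ i, Set (E i)} {C : Set F} (hC : Convex 𝕜 C)
    (hS : ∀ v, (∀ i, v i ∈ S i) → f v ∈ C) {v : ∀ i, E i}
    (hv : ∀ i, v i ∈ convexHull 𝕜 (S i)) : f v ∈ C := by
  classical
  have := Fintype.ofFinite ι
  suffices mixed_mem : ∀ (s : Finset ι) (v : ∀ i, E i), (∀ i ∈ s, v i ∈ convexHull 𝕜 (S i)) →
      (∀ i ∉ s, v i ∈ S i) → f v ∈ C from mixed_mem univ v (fun i _ ↦ hv i) (by simp)
  intro s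
  induction s using Finset.induction_on with
  | empty => exact fun v _ hv ↦ hS v fun i ↦ hv i (notMem_empty i)
  | insert a s ha ih =>
    intro v hs hS'
    have vertex_subset : S a ⊆ f.toLinearMap v a ⁻¹' C := by
      intro x hx
      refine ih (Function.update v a x) (fun i hi ↦ ?_) (fun i hi ↦ ?_)
      · rw [Function.update_of_ne (ne_of_mem_of_not_mem hi ha)]
        exact hs i (mem_insert_of_mem hi)
      · obtain rfl | hia := eq_or_ne i a
        · rwa [Function.update_self]
        · rw [Function.update_of_ne hia]
          exact hS' i (by simp [hia, hi])
    simpa using convexHull_min vertex_subset (hC.linear_preimage _) (hs a (mem_insert_self a s))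

theorem subStdSimplex_subset_convexHull_intCast (𝕜 ι : Type*) [Field 𝕜] [LinearOrder 𝕜]
    [IsStrictOrderedRing 𝕜] [Fintype ι] :
    subStdSimplex 𝕜 ι ⊆
      convexHull 𝕜 ((fun (w : ι → ℤ) j ↦ (w j : 𝕜)) '' subStdSimplex ℤ ι) := by
  classical
  rintro v ⟨hv_nonneg, hv_sum⟩
  let weight : Option ι → 𝕜 := fun o ↦ o.elim (1 - ∑ j, v j) v
  let vertex : Option ι → ι → ℤ := fun o ↦ o.elim 0 (Pi.single · 1)
  have weight_nonneg : ∀ o, 0 ≤ weight o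
    | none => sub_nonneg.2 hv_sum
    | some j => hv_nonneg j
  have vertex_mem : ∀ o, vertex o ∈ subStdSimplex ℤ ι
    | none => ⟨fun _ ↦ le_rfl, by simp [vertex]⟩
    | some j => ⟨(single_mem_stdSimplex ℤ j).1, (single_mem_stdSimplex ℤ j).2.le⟩
  have v_eq : ∑ o, weight o • (fun j ↦ (vertex o j : 𝕜)) = v := by
    ext j
    simp [Fintype.sum_option, weight, vertex, Pi.single_apply]
  rw [← v_eq]
  exact (convex_convexHull 𝕜 _).sum_mem (fun o _ ↦ weight_nonneg o)
    (by simp [Fintype.sum_option, weight])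
    fun o _ ↦ subset_convexHull 𝕜 _ ⟨vertex o, vertex_mem o, rfl⟩

theorem comp_mem_subStdSimplex {R ι κ : Type*} [Semiring R] [PartialOrder R] [IsOrderedAddMonoid R]
    [Fintype ι] [Fintype κ] {v : ι → R} (hv : v ∈ subStdSimplex R ι) {e : κ → ι}
    (he : Function.Injective e) : v ∘ e ∈ subStdSimplex R κ := by
  refine ⟨fun k ↦ hv.1 (e k), le_trans ?_ hv.2⟩
  calc ∑ k, v (e k) = ∑ j ∈ univ.map ⟨e, he⟩, v j := by rw [sum_map]; rfl
    _ ≤ ∑ j, v j := sum_le_univ_sum_of_nonneg hv.1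

theorem det_eq_zero_of_row_sum_eq_zero {R n : Type*} [CommRing R] [Fintype n] [DecidableEq n]
    [Nonempty n] {A : Matrix n n R} (hA : ∀ i, ∑ j, A i j = 0) : A.det = 0 := by
  have mulVec_one_eq_zero : A.mulVec 1 = 0 := by
    ext i
    simpa [Matrix.mulVec, dotProduct] using hA i
  have det_smul_one : A.det • (1 : n → R) = 0 := by
    calc A.det • (1 : n → R) = (A.adjugate * A).mulVec 1 := by
          rw [Matrix.adjugate_mul, Matrix.smul_mulVec, Matrix.one_mulVec]
      _ = 0 := by rw [← Matrix.mulVec_mulVec, mulVec_one_eq_zero, Matrix.mulVec_zero]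
  simpa using congrFun det_smul_one (Classical.arbitrary n)

theorem abs_det_le_sum_abs_row_of_minors {R : Type*} [CommRing R] [LinearOrder R]
    [IsOrderedRing R] {n : ℕ} {A : Matrix (Fin (n + 1)) (Fin (n + 1)) R} (i : Fin (n + 1))
    (h_minor : ∀ j, |(A.submatrix i.succAbove (Fin.succAbove j)).det| ≤ 1) :
    |A.det| ≤ ∑ j, |A i j| := by
  rw [Matrix.det_succ_row A i]
  refine (abs_sum_le_sum_abs _ _).trans (sum_le_sum fun j _ ↦ ?_)
  rw [abs_mul, abs_mul, abs_neg_one_pow, one_mul]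
  exact mul_le_of_le_one_right (abs_nonneg _) (h_minor j)

theorem sum_abs_sub_le_one_of_sum_ne {ι : Type*} [Fintype ι] {p q : ι → ℤ}
    (hp : p ∈ subStdSimplex ℤ ι) (hq : q ∈ subStdSimplex ℤ ι) (hne : ∑ j, p j ≠ ∑ j, q j) :
    ∑ j, |p j - q j| ≤ 1 := by
  have hp_sum : 0 ≤ ∑ j, p j := sum_nonneg fun j _ ↦ hp.1 j
  have hq_sum : 0 ≤ ∑ j, q j := sum_nonneg fun j _ ↦ hq.1 j
  have hp_le := hp.2
  have hq_le := hq.2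
  calc ∑ j, |p j - q j| ≤ ∑ j, (p j + q j) := sum_le_sum fun j _ ↦ by
        have := hp.1 j
        have := hq.1 j
        exact abs_le.2 ⟨by omega, by omega⟩
    _ = ∑ j, p j + ∑ j, q j := sum_add_distrib
    _ ≤ 1 := by omega

theorem abs_det_sub_le_one_of_fin_int {n : ℕ} {P Q : Matrix (Fin n) (Fin n) ℤ}
    (hP : ∀ i, P i ∈ subStdSimplex ℤ (Fin n)) (hQ : ∀ i, Q i ∈ subStdSimplex ℤ (Fin n)) :
    |(P - Q).det| ≤ 1 := by
  induction n with
  | zero => simp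
  | succ n ih =>
    by_cases h_sum : ∀ i, ∑ j, P i j = ∑ j, Q i j
    · have h_det : (P - Q).det = 0 :=
        det_eq_zero_of_row_sum_eq_zero fun i ↦ by simp [sum_sub_distrib, h_sum i]
      simp [h_det]
    · obtain ⟨i, hi⟩ := not_forall.1 h_sum
      have h_minor (j : Fin (n + 1)) :
          |((P - Q).submatrix i.succAbove (Fin.succAbove j)).det| ≤ 1 :=
        ih (P := P.submatrix i.succAbove j.succAbove) (Q := Q.submatrix i.succAbove j.succAbove)
          (fun k ↦ comp_mem_subStdSimplex (hP (i.succAbove k)) Fin.succAbove_right_injective)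
          (fun k ↦ comp_mem_subStdSimplex (hQ (i.succAbove k)) Fin.succAbove_right_injective)
      exact (abs_det_le_sum_abs_row_of_minors i h_minor).trans
        (sum_abs_sub_le_one_of_sum_ne (hP i) (hQ i) hi)

theorem abs_det_sub_le_one_of_int {ι : Type*} [Fintype ι] [DecidableEq ι] {P Q : Matrix ι ι ℤ}
    (hP : ∀ i, P i ∈ subStdSimplex ℤ ι) (hQ : ∀ i, Q i ∈ subStdSimplex ℤ ι) :
    |(P - Q).det| ≤ 1 := by
  let e := (Fintype.equivFin ι).symm
  rw [← Matrix.det_submatrix_equiv_self e]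
  exact abs_det_sub_le_one_of_fin_int (P := P.submatrix e e) (Q := Q.submatrix e e)
    (fun i ↦ comp_mem_subStdSimplex (hP (e i)) e.injective)
    (fun i ↦ comp_mem_subStdSimplex (hQ (e i)) e.injective)

theorem abs_det_sub_le_one_of_substochastic_general {𝕜 ι : Type*} [Field 𝕜] [LinearOrder 𝕜]
    [IsStrictOrderedRing 𝕜] [Fintype ι] [DecidableEq ι] {P Q : Matrix ι ι 𝕜}
    (hP : ∀ i, P i ∈ subStdSimplex 𝕜 ι) (hQ : ∀ i, Q i ∈ subStdSimplex 𝕜 ι) :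
    |(P - Q).det| ≤ 1 := by
  let V : Set (ι → 𝕜) := (fun (w : ι → ℤ) j ↦ (w j : 𝕜)) '' subStdSimplex ℤ ι
  have row_mem (i : ι) : (P - Q) i ∈ convexHull 𝕜 (V - V) := by
    rw [convexHull_sub]
    exact Set.sub_mem_sub (subStdSimplex_subset_convexHull_intCast 𝕜 ι (hP i))
      (subStdSimplex_subset_convexHull_intCast 𝕜 ι (hQ i))
  have det_vertex_mem (A : Matrix ι ι 𝕜) (hA : ∀ i, A i ∈ V - V) : A.det ∈ Set.Icc (-1) 1 := by
    have row_eq (i : ι) : ∃ p ∈ subStdSimplex ℤ ι, ∃ q ∈ subStdSimplex ℤ ι,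
        ∀ j, A i j = p j - q j := by
      obtain ⟨_, ⟨p, hp, rfl⟩, _, ⟨q, hq, rfl⟩, hpq⟩ := hA i
      exact ⟨p, hp, q, hq, fun j ↦ (congrFun hpq j).symm⟩
    choose P' hP' Q' hQ' hA_eq using row_eq
    have A_eq : A = (Matrix.of P' - Matrix.of Q').map (fun z ↦ (z : 𝕜)) := by
      ext i j
      simp [hA_eq]
    rw [A_eq, ← Int.cast_det, Set.mem_Icc, ← abs_le]
    exact_mod_cast abs_det_sub_le_one_of_int hP' hQ'
  exact abs_le.2 <| multilinearMap_apply_mem_of_mem_convexHull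
    Matrix.detRowAlternating.toMultilinearMap (convex_Icc (-1) 1) det_vertex_mem row_mem

/-- If `P` and `Q` are `s × s` real substochastic matrices
(nonnegative entries, each row sum at most 1), then `|det (P - Q)| ≤ 1`. -/
theorem abs_det_sub_le_one_of_substochastic (s : ℕ) (hs : 1 ≤ s)
    (P Q : Matrix (Fin s) (Fin s) ℝ)
    (hPnonneg : ∀ i j, 0 ≤ P i j) (hProw : ∀ i, ∑ j, P i j ≤ 1)
    (hQnonneg : ∀ i j, 0 ≤ Q i j) (hQrow : ∀ i, ∑ j, Q i j ≤ 1) :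
    |(P - Q).det| ≤ 1 :=
  abs_det_sub_le_one_of_substochastic_general
    (fun i ↦ ⟨hPnonneg i, hProw i⟩) (fun i ↦ ⟨hQnonneg i, hQrow i⟩)
end

section
/- Let n ≥ 2 and let d₁,…,d_n ≥ 1 be integers. Let ε and τ be n×n matrices with nonnegative integer entries such that for every i, the i-th row of ε has entry sum d_i and the i-th row of τ has entry sum d_i. Set H := ε − τ. Then for all i, k ∈ {1,…,n}, the minor Δ_{ik}(H) (the determinant of the (n−1)×(n−1) matrix obtained from H by deleting row i and column k) satisfies |Δ_{ik}(H)| ≤ ∏_{ℓ ∈ {1,…,n}, ℓ ≠ i} d_ℓ. -/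
/-!
By induction on the size, a determinant `det (E - T)` with `E` and `T` nonnegative of row sums at
most `d i` satisfies `|det (E - T)| ≤ ∏ i, d i` (an inequality of Schinzel). Expand along a row and
let `P` be the product of the `d i` over the other rows. Each cofactor `c j` is at most `P` in
absolute value. So is each difference `c j - c k`: it is a cofactor of the matrix obtained by adding
column `j` to column `k`, and once column `j` is deleted, this merging of columns preserves the row
sums of `E` and of `T`. Hence `0` and all the `c j` lie in one interval `[a, a + P]`, and the
expansion `∑ j, (E i j - T i j) * c j` is at most `d i * (a + P) - d i * a = d i * P`.
-/

section Adjugate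

open Matrix

variable {n R : Type*} [Fintype n] [DecidableEq n] [CommRing R] {j k : n}

theorem adjugate_transvection (hjk : j ≠ k) (c : R) :
    adjugate (transvection j k c) = transvection j k (-c) := by
  have hinv : transvection j k c * transvection j k (-c) = 1 := by
    rw [transvection_mul_transvection_same _ _ hjk, add_neg_cancel, transvection_zero]
  rw [← mul_one (adjugate _), ← hinv, ← Matrix.mul_assoc, adjugate_mul,
    det_transvection_of_ne _ _ hjk, one_smul, Matrix.one_mul]

theorem adjugate_mul_transvection_apply (hjk : j ≠ k) (A : Matrix n n R) (c : R) (i : n) :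
    adjugate (A * transvection j k c) j i = adjugate A j i - c * adjugate A k i := by
  rw [adjugate_mul_distrib, adjugate_transvection hjk, transvection_mul_apply_same, neg_mul,
    ← sub_eq_add_neg]

theorem abs_adjugate_apply [LinearOrder R] [IsOrderedRing R] {m : ℕ}
    (A : Matrix (Fin (m + 1)) (Fin (m + 1)) R) (i j : Fin (m + 1)) :
    |adjugate A i j| = |(A.submatrix j.succAbove i.succAbove).det| := by
  rw [adjugate_fin_succ_eq_det_submatrix]
  obtain h | h := neg_one_pow_eq_or R (j + i : ℕ) <;> simp [h]

end Adjugate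

/-- `IsRowBounded A d` says that `A` is a matrix with nonnegative entries whose `i`-th row has sum
at most `d i`. Both sides of a difference `E - T` are required to be of this form; asking only for
an upper bound on the row sums lets the notion pass to minors. -/
structure IsRowBounded {n p R : Type*} [Fintype p] [AddCommMonoid R] [LE R]
    (A : Matrix n p R) (d : n → R) : Prop where
  nonneg : ∀ i j, 0 ≤ A i j
  sum_le : ∀ i, ∑ j, A i j ≤ d i

namespace IsRowBounded

theorem submatrix {ι κ n p R : Type*} [Fintype κ] [Fintype p] [AddCommMonoid R] [PartialOrder R]
    [IsOrderedAddMonoid R] {A : Matrix n p R} {d : n → R} (hA : IsRowBounded A d)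
    (r : ι → n) {c : κ → p} (hc : Function.Injective c) :
    IsRowBounded (A.submatrix r c) (d ∘ r) where
  nonneg a b := hA.nonneg (r a) (c b)
  sum_le a :=
    calc ∑ b, A (r a) (c b) = ∑ j ∈ Finset.univ.map ⟨c, hc⟩, A (r a) j := by simp
      _ ≤ ∑ j, A (r a) j := Finset.sum_le_univ_sum_of_nonneg (hA.nonneg (r a))
      _ ≤ d (r a) := hA.sum_le (r a)

theorem submatrix_mul_transvection {n R : Type*} [CommRing R] [PartialOrder R]
    [IsOrderedAddMonoid R] {m : ℕ} {A : Matrix n (Fin (m + 1)) R} {d : n → R}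
    (hA : IsRowBounded A d) {j k : Fin (m + 1)} (hjk : j ≠ k) :
    IsRowBounded ((A * Matrix.transvection j k (1 : R)).submatrix id j.succAbove) d := by
  obtain ⟨k, rfl⟩ := Fin.exists_succAbove_eq hjk.symm
  have merged_apply (a : n) (b : Fin m) :
      (A * Matrix.transvection j (j.succAbove k) (1 : R)) a (j.succAbove b) =
        A a (j.succAbove b) + if b = k then A a j else 0 := by
    split_ifs with h
    · rw [h, Matrix.mul_transvection_apply_same, one_mul]
    · rw [Matrix.mul_transvection_apply_of_ne _ _ _ _ (Fin.succAbove_right_injective.ne h),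
        add_zero]
  refine ⟨fun a b => ?_, fun a => ?_⟩
  · rw [Matrix.submatrix_apply, merged_apply]
    exact add_nonneg (hA.nonneg _ _) (ite_nonneg (hA.nonneg _ _) le_rfl)
  · calc ∑ b, (A * Matrix.transvection j (j.succAbove k) (1 : R)) a (j.succAbove b)
          = ∑ b, A a (j.succAbove b) + A a j := by simp [merged_apply, Finset.sum_add_distrib]
      _ = ∑ b, A a b := by rw [Fin.sum_univ_succAbove _ j, add_comm]
      _ ≤ d a := hA.sum_le a

end IsRowBounded

theorem sum_sub_mul_le_of_mem_Icc {ι R : Type*} [Fintype ι] [Ring R] [PartialOrder R]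
    [IsOrderedRing R] {u w c : ι → R} {d a b : R}
    (hu : ∀ j, 0 ≤ u j) (hw : ∀ j, 0 ≤ w j) (hud : ∑ j, u j ≤ d) (hwd : ∑ j, w j ≤ d)
    (h0 : 0 ∈ Set.Icc a b) (hc : ∀ j, c j ∈ Set.Icc a b) :
    ∑ j, (u j - w j) * c j ≤ d * (b - a) :=
  calc ∑ j, (u j - w j) * c j ≤ ∑ j, (u j * b - w j * a) := by
        refine Finset.sum_le_sum fun j _ => ?_
        rw [sub_mul]
        exact sub_le_sub (mul_le_mul_of_nonneg_left (hc j).2 (hu j))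
          (mul_le_mul_of_nonneg_left (hc j).1 (hw j))
    _ = (∑ j, u j) * b - (∑ j, w j) * a := by
        rw [Finset.sum_sub_distrib, Finset.sum_mul, Finset.sum_mul]
    _ ≤ d * b - d * a :=
        sub_le_sub (mul_le_mul_of_nonneg_right hud h0.2) (mul_le_mul_of_nonpos_right hwd h0.1)
    _ = d * (b - a) := (mul_sub d b a).symm

theorem exists_Icc_of_abs_sub_le {ι R : Type*} [Finite ι] [Nonempty ι] [AddCommGroup R]
    [LinearOrder R] [IsOrderedAddMonoid R] {c : ι → R} {P : R}
    (hc : ∀ j, |c j| ≤ P) (hcc : ∀ j k, |c j - c k| ≤ P) :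
    ∃ a, 0 ∈ Set.Icc a (a + P) ∧ ∀ j, c j ∈ Set.Icc a (a + P) := by
  obtain ⟨k, hk⟩ := Finite.exists_min c
  obtain h | h := le_total 0 (c k)
  · refine ⟨0, ?_, fun j => ⟨h.trans (hk j), ?_⟩⟩ <;> rw [zero_add]
    · exact ⟨le_rfl, (abs_nonneg _).trans (hc k)⟩
    · exact (le_abs_self _).trans (hc j)
  · refine ⟨c k, ⟨h, neg_le_iff_add_nonneg.1 (neg_le_of_abs_le (hc k))⟩, fun j => ⟨hk j, ?_⟩⟩
    exact sub_le_iff_le_add'.1 ((le_abs_self _).trans (hcc j k))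

theorem abs_sum_sub_mul_le {ι R : Type*} [Fintype ι] [Nonempty ι] [Ring R] [LinearOrder R]
    [IsOrderedRing R] {u w c : ι → R} {d P : R}
    (hu : ∀ j, 0 ≤ u j) (hw : ∀ j, 0 ≤ w j) (hud : ∑ j, u j ≤ d) (hwd : ∑ j, w j ≤ d)
    (hc : ∀ j, |c j| ≤ P) (hcc : ∀ j k, |c j - c k| ≤ P) :
    |∑ j, (u j - w j) * c j| ≤ d * P := by
  obtain ⟨a, h0, ha⟩ := exists_Icc_of_abs_sub_le hc hcc
  rw [← add_sub_cancel_left a P, abs_le']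
  refine ⟨sum_sub_mul_le_of_mem_Icc hu hw hud hwd h0 ha, ?_⟩
  calc -∑ j, (u j - w j) * c j = ∑ j, (w j - u j) * c j := by
        simp only [← Finset.sum_neg_distrib, ← neg_mul, neg_sub]
    _ ≤ d * (a + P - a) := sum_sub_mul_le_of_mem_Icc hw hu hwd hud h0 ha

section Schinzel

variable {R : Type*} [CommRing R] [LinearOrder R] [IsOrderedRing R]

theorem abs_det_sub_le_prod_fin {m : ℕ} {E T : Matrix (Fin m) (Fin m) R} {d : Fin m → R}
    (hE : IsRowBounded E d) (hT : IsRowBounded T d) : |(E - T).det| ≤ ∏ i, d i := by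
  induction m with
  | zero => simp
  | succ m ih =>
    have cofactor_le (j : Fin (m + 1)) : |(E - T).adjugate j 0| ≤ ∏ a, d (Fin.succ a) := by
      rw [abs_adjugate_apply]
      exact ih (hE.submatrix _ Fin.succAbove_right_injective)
        (hT.submatrix _ Fin.succAbove_right_injective)
    have cofactor_sub_le (j k : Fin (m + 1)) :
        |(E - T).adjugate j 0 - (E - T).adjugate k 0| ≤ ∏ a, d (Fin.succ a) := by
      obtain rfl | hjk := eq_or_ne j k
      · simpa using (abs_nonneg _).trans (cofactor_le j)
      · rw [← one_mul ((E - T).adjugate k 0), ← adjugate_mul_transvection_apply hjk,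
          abs_adjugate_apply, Matrix.sub_mul]
        exact ih ((hE.submatrix_mul_transvection hjk).submatrix _ Function.injective_id)
          ((hT.submatrix_mul_transvection hjk).submatrix _ Function.injective_id)
    rw [Matrix.det_eq_sum_mul_adjugate_row _ 0, Fin.prod_univ_succ]
    exact abs_sum_sub_mul_le (hE.nonneg 0) (hT.nonneg 0) (hE.sum_le 0) (hT.sum_le 0)
      cofactor_le cofactor_sub_le

theorem abs_det_sub_le_prod {n : Type*} [Fintype n] [DecidableEq n] {E T : Matrix n n R}
    {d : n → R} (hE : IsRowBounded E d) (hT : IsRowBounded T d) : |(E - T).det| ≤ ∏ i, d i := by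
  let e := (Fintype.equivFin n).symm
  rw [← Matrix.det_submatrix_equiv_self e, ← e.prod_comp]
  exact abs_det_sub_le_prod_fin (hE.submatrix e e.injective) (hT.submatrix e e.injective)

theorem abs_minor_le_prod_degrees_general {ι n p : Type*} [Fintype ι] [DecidableEq ι] [Fintype p]
    {ε τ : Matrix n p R} {d : n → R} (hε₀ : ∀ i j, 0 ≤ ε i j) (hτ₀ : ∀ i j, 0 ≤ τ i j)
    (hε : ∀ i, ∑ j, ε i j ≤ d i) (hτ : ∀ i, ∑ j, τ i j ≤ d i)
    (r : ι → n) {c : ι → p} (hc : Function.Injective c) :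
    |((ε - τ).submatrix r c).det| ≤ ∏ a, d (r a) :=
  abs_det_sub_le_prod (IsRowBounded.submatrix ⟨hε₀, hε⟩ r hc)
    (IsRowBounded.submatrix ⟨hτ₀, hτ⟩ r hc)

end Schinzel

/-- Let `n = m + 1 ≥ 2` and `d₁,…,dₙ ≥ 1`. If `ε` and `τ` are `n × n`
matrices of nonnegative integers whose `i`-th row sums are both `d i`, and
`H = ε - τ` (over `ℤ`), then every `(n-1) × (n-1)` minor `Δ_{ik}(H)` of `H`
satisfies `|Δ_{ik}(H)| ≤ ∏_{ℓ ≠ i} d ℓ`. -/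
theorem abs_minor_le_prod_degrees (m : ℕ) (hm : 1 ≤ m)
    (d : Fin (m + 1) → ℕ) (hd : ∀ i, 1 ≤ d i)
    (ε τ : Matrix (Fin (m + 1)) (Fin (m + 1)) ℕ)
    (hε : ∀ i, ∑ j, ε i j = d i) (hτ : ∀ i, ∑ j, τ i j = d i)
    (i k : Fin (m + 1)) :
    |((Matrix.of fun a b => (ε a b : ℤ) - (τ a b : ℤ)).submatrix
        i.succAbove k.succAbove).det|
      ≤ ∏ l ∈ Finset.univ.erase i, (d l : ℤ) := by
  rw [Fin.univ_succAbove m i, Finset.erase_cons, Finset.prod_map]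
  exact abs_minor_le_prod_degrees_general (d := fun a => (d a : ℤ))
    (ε := Matrix.of fun a b => (ε a b : ℤ)) (τ := Matrix.of fun a b => (τ a b : ℤ))
    (fun a b => (ε a b).cast_nonneg) (fun a b => (τ a b).cast_nonneg)
    (fun a => by simp [← Nat.cast_sum, hε]) (fun a => by simp [← Nat.cast_sum, hτ])
    _ Fin.succAbove_right_injective
end

section
/- Let R ∈ ℚ[a] be multihomogeneous of multidegree (δ₁,…,δ_m), and suppose there exists a multiindex γ₀ ∈ ℕⁿ such that R satisfies Bézout(γ₀). Then for every transversal ε (an m×n matrix with nonnegative integer entries whose i-th row ε_{i*} satisfies |ε_{i*}| = d_i), R satisfies Bézout(δᵀε), where δᵀε := Σ_{i=1}^m δ_i ε_{i*} ∈ ℕⁿ. -/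
/-!
Over a ring in which `t i = u i (ε i)` is invertible, the form `F i = ∑ e, u i e * a (i, e)` can be
solved for the variable `a (i, ε i)`: substituting `a (i, ε i) - F i / t i` for it is congruent to
the identity modulo the ideal of the forms and kills each of them. A nonzerodivisor `g` of the
coefficient ring is fixed by this substitution, so if `g * R` is in the ideal then the substitution
kills `R` as well. To clear denominators, multiply the image of every variable of row `i` by `t i`;
on a multihomogeneous `R` of multidegree `δ` this only introduces the factor `∏ i, t i ^ δ i`, which
is therefore all that is needed to bring `R` into the ideal. The case of the generic forms is that
of the coefficient ring `ℚ[x]`, with `u i α = x ^ α`.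
-/

open MvPolynomial

/-- Variables of the big polynomial ring `ℚ[a, x]`: the `a`-variables are indexed by
pairs `(i, α)` with `i ∈ [m]` and `α ∈ ℕⁿ` (only those with `|α| = dᵢ` are actually
used), and the `x`-variables by `Fin n`. -/
abbrev Var (m n : ℕ) := (Fin m × (Fin n → ℕ)) ⊕ Fin n

/-- The generic form `Fᵢ = Σ_{|α| = dᵢ} a_{i,α} x^α`. -/
noncomputable def genForm (m n : ℕ) (d : Fin m → ℕ) (i : Fin m) :
    MvPolynomial (Var m n) ℚ :=
  ∑ α ∈ Finset.Nat.antidiagonalTuple n (d i),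
    X (Sum.inl (i, α)) * ∏ j, (X (Sum.inr j)) ^ α j

/-- The monomial `x^γ` in `ℚ[a, x]`. -/
noncomputable def xPow (m n : ℕ) (γ : Fin n → ℕ) : MvPolynomial (Var m n) ℚ :=
  ∏ j, (X (Sum.inr j) : MvPolynomial (Var m n) ℚ) ^ γ j

/-- `R` (a polynomial in the `a`-variables only) satisfies Bézout(γ) if `x^γ · R`
lies in the ideal of `ℚ[a, x]` generated by the generic forms `F₁, …, F_m`. -/
def Bezout (m n : ℕ) (d : Fin m → ℕ)
    (R : MvPolynomial (Fin m × (Fin n → ℕ)) ℚ) (γ : Fin n → ℕ) : Prop :=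
  xPow m n γ * rename Sum.inl R ∈ Ideal.span (Set.range (genForm m n d))

/-- `R` is multihomogeneous of multidegree `δ`: every monomial `a^A` occurring in `R`
is supported on the diagram (`A (i, α) ≠ 0 → |α| = dᵢ`) and has `i`-th row sum `δᵢ`. -/
def MultiHom (m n : ℕ) (d : Fin m → ℕ) (δ : Fin m → ℕ)
    (R : MvPolynomial (Fin m × (Fin n → ℕ)) ℚ) : Prop :=
  ∀ A ∈ R.support,
    (∀ i α, A (i, α) ≠ 0 → ∑ j, α j = d i) ∧
    (∀ i, (∑ p ∈ A.support, if p.1 = i then A p else 0) = δ i)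

section Substitution

variable {σ A S : Type*}

theorem C_mem_nonZeroDivisors [CommSemiring A] {g : A} (hg : g ∈ nonZeroDivisors A) :
    (C g : MvPolynomial σ A) ∈ nonZeroDivisors (MvPolynomial σ A) := by
  refine mem_nonZeroDivisors_iff_left.mpr fun p hp ↦ MvPolynomial.ext _ _ fun k ↦ ?_
  have hk : g * coeff k p = 0 := by rw [← coeff_C_mul, hp, coeff_zero]
  exact (mul_left_mem_nonZeroDivisors_eq_zero_iff hg).mp hk

theorem aeval_sub_aeval_mem [CommSemiring A] [CommRing S] [Algebra A S] {I : Ideal S}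
    {f g : σ → S} (hfg : ∀ p, f p - g p ∈ I) (φ : MvPolynomial σ A) :
    aeval f φ - aeval g φ ∈ I := by
  have hcomp : (Ideal.Quotient.mkₐ A I).comp (aeval f) =
      (Ideal.Quotient.mkₐ A I).comp (aeval g) := by
    ext p
    simpa using Ideal.Quotient.eq.mpr (hfg p)
  exact Ideal.Quotient.eq.mp (DFunLike.congr_fun hcomp φ)

theorem isWeightedHomogeneous_map {B M : Type*} [CommSemiring A] [CommSemiring B]
    [AddCommMonoid M] {w : σ → M} {m : M} {φ : MvPolynomial σ A}
    (hφ : IsWeightedHomogeneous w φ m) (f : A →+* B) :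
    IsWeightedHomogeneous w (map f φ) m := fun _ hk ↦
  hφ (mem_support_iff.mp (support_map_subset f φ (mem_support_iff.mpr hk)))

theorem aeval_mul_of_isWeightedHomogeneous {M : Type*} [CommSemiring A] [CommSemiring S]
    [Algebra A S] [AddCommMonoid M] {w : σ → M} {m : M} {φ : MvPolynomial σ A}
    (hφ : IsWeightedHomogeneous w φ m) (χ : Multiplicative M →* S) (f : σ → S) :
    aeval (fun p ↦ χ (.ofAdd (w p)) * f p) φ = χ (.ofAdd m) * aeval f φ := by
  have weight_eq {k : σ →₀ ℕ} (hk : k ∈ φ.support) :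
      ∏ p ∈ k.support, χ (.ofAdd (w p)) ^ k p = χ (.ofAdd m) := by
    rw [← hφ (mem_support_iff.mp hk), Finsupp.weight_apply, Finsupp.sum, ofAdd_sum, map_prod]
    simp only [ofAdd_nsmul, map_pow]
  rw [aeval_def, aeval_def, eval₂_eq, eval₂_eq, Finset.mul_sum]
  refine Finset.sum_congr rfl fun k hk ↦ ?_
  simp only [mul_pow, Finset.prod_mul_distrib, weight_eq hk]
  ring

end Substitution

section RowForm

variable {ι E A S : Type*}

/-- The weight for which `MvPolynomial.IsWeightedHomogeneous` is multihomogeneity in the rows of a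
matrix of variables: `δ i` is the degree in the variables of row `i`. -/
def rowWeight [DecidableEq ι] (p : ι × E) : ι → ℕ := Pi.single p.1 1

/-- The character `v ↦ ∏ i, t i ^ v i` of the monoid of multidegrees: rescaling the variables of
each row `i` by `t i` multiplies a polynomial of multidegree `v` by its value at `v`. -/
def multiPow [Fintype ι] [CommMonoid S] (t : ι → S) : Multiplicative (ι → ℕ) →* S where
  toFun v := ∏ i, t i ^ v.toAdd i
  map_one' := by simp
  map_mul' v w := by simp [pow_add, Finset.prod_mul_distrib]

theorem multiPow_ofAdd [Fintype ι] [CommMonoid S] (t : ι → S) (v : ι → ℕ) :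
    multiPow t (.ofAdd v) = ∏ i, t i ^ v i := rfl

theorem prod_pow_rowWeight [Fintype ι] [DecidableEq ι] [CommMonoid S] (t : ι → S) (p : ι × E) :
    ∏ i, t i ^ rowWeight p i = t p.1 := by
  simp [rowWeight, Pi.single_apply, pow_ite]

theorem aeval_row_mul [Fintype ι] [DecidableEq ι] [CommSemiring A] [CommSemiring S] [Algebra A S]
    {δ : ι → ℕ} {R : MvPolynomial (ι × E) A} (hR : IsWeightedHomogeneous rowWeight R δ)
    (t : ι → S) (f : ι × E → S) :
    aeval (fun p ↦ t p.1 * f p) R = (∏ i, t i ^ δ i) * aeval f R := by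
  simpa only [multiPow_ofAdd, prod_pow_rowWeight] using
    aeval_mul_of_isWeightedHomogeneous hR (multiPow t) f

/-- The linear form `F i = ∑ e ∈ s i, u i e * a (i, e)` in the variables of row `i`, whose support
`s i` plays the role of row `i` of the diagram. -/
noncomputable def rowForm [CommSemiring A] (s : ι → Finset E) (u : ι → E → A) (i : ι) :
    MvPolynomial (ι × E) A :=
  ∑ e ∈ s i, C (u i e) * X (i, e)

variable [CommRing A]

/-- Elimination of the variables `a (i, ε i)` by means of the equations `F i = 0`, with the
denominator of row `i` cleared by the factor `u i (ε i)`. -/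
noncomputable def pivotSubst [DecidableEq E] (s : ι → Finset E) (u : ι → E → A) (ε : ι → E)
    (p : ι × E) : MvPolynomial (ι × E) A :=
  C (u p.1 (ε p.1)) * X p - if p.2 = ε p.1 then rowForm s u p.1 else 0

theorem aeval_pivotSubst_rowForm [DecidableEq E] {s : ι → Finset E} (u : ι → E → A) {ε : ι → E}
    {i : ι} (hε : ε i ∈ s i) : aeval (pivotSubst s u ε) (rowForm s u i) = 0 := by
  have cleared : ∑ e ∈ s i, C (u i e) * (C (u i (ε i)) * X (i, e)) =
      C (u i (ε i)) * rowForm s u i := by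
    rw [rowForm, Finset.mul_sum]
    exact Finset.sum_congr rfl fun e _ ↦ mul_left_comm ..
  have pivot : ∑ e ∈ s i, C (u i e) * (if e = ε i then rowForm s u i else 0) =
      C (u i (ε i)) * rowForm s u i := by
    simp [hε]
  calc aeval (pivotSubst s u ε) (rowForm s u i)
      = ∑ e ∈ s i, C (u i e) * pivotSubst s u ε (i, e) := by simp [rowForm, algebraMap_eq]
    _ = 0 := by simp only [pivotSubst, mul_sub, Finset.sum_sub_distrib, cleared, pivot, sub_self]

theorem aeval_pivotSubst_eq_zero_of_mem_span [DecidableEq E] {s : ι → Finset E} {u : ι → E → A}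
    {ε : ι → E} (hε : ∀ i, ε i ∈ s i) {P : MvPolynomial (ι × E) A}
    (hP : P ∈ Ideal.span (Set.range (rowForm s u))) : aeval (pivotSubst s u ε) P = 0 := by
  suffices Ideal.span (Set.range (rowForm s u)) ≤ RingHom.ker (aeval (pivotSubst s u ε)) from
    this hP
  rw [Ideal.span_le]
  rintro _ ⟨i, rfl⟩
  exact aeval_pivotSubst_rowForm u (hε i)

theorem mul_X_sub_pivotSubst_mem_span [DecidableEq E] (s : ι → Finset E) (u : ι → E → A)
    (ε : ι → E) (p : ι × E) :
    C (u p.1 (ε p.1)) * X p - pivotSubst s u ε p ∈ Ideal.span (Set.range (rowForm s u)) := by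
  rw [pivotSubst, sub_sub_cancel]
  split_ifs
  · exact Ideal.subset_span (Set.mem_range_self p.1)
  · exact zero_mem _

theorem bezout_of_bezout_transversal_general [Fintype ι] [DecidableEq ι] (s : ι → Finset E)
    (u : ι → E → A) {δ : ι → ℕ} {R : MvPolynomial (ι × E) A}
    (hR : IsWeightedHomogeneous rowWeight R δ) {g : A} (hg : g ∈ nonZeroDivisors A)
    (hgR : C g * R ∈ Ideal.span (Set.range (rowForm s u))) {ε : ι → E} (hε : ∀ i, ε i ∈ s i) :
    C (∏ i, u i (ε i) ^ δ i) * R ∈ Ideal.span (Set.range (rowForm s u)) := by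
  classical
  have killed : aeval (pivotSubst s u ε) R = 0 := by
    have hgR_killed := aeval_pivotSubst_eq_zero_of_mem_span hε hgR
    rw [map_mul, aeval_C, algebraMap_eq] at hgR_killed
    exact (mul_left_mem_nonZeroDivisors_eq_zero_iff (C_mem_nonZeroDivisors hg)).mp hgR_killed
  have scaled : aeval (fun p ↦ C (u p.1 (ε p.1)) * X p) R = C (∏ i, u i (ε i) ^ δ i) * R := by
    simpa only [aeval_X_left_apply, map_prod, map_pow] using
      aeval_row_mul hR (fun i ↦ C (u i (ε i))) X
  simpa only [scaled, killed, sub_zero] using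
    aeval_sub_aeval_mem (mul_X_sub_pivotSubst_mem_span s u ε) R

end RowForm

section GenericForms

variable {m n : ℕ}

/-- The monomial `x^γ` in `ℚ[x]`, as opposed to `xPow`, which lives in `ℚ[a, x]`. -/
noncomputable def xMonomial (γ : Fin n → ℕ) : MvPolynomial (Fin n) ℚ :=
  ∏ j, X j ^ γ j

theorem xMonomial_ne_zero (γ : Fin n → ℕ) : xMonomial γ ≠ 0 :=
  Finset.prod_ne_zero_iff.mpr fun j _ ↦ pow_ne_zero _ (X_ne_zero j)

theorem prod_xMonomial_pow {ι : Type*} [Fintype ι] (δ : ι → ℕ) (ε : ι → Fin n → ℕ) :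
    ∏ i, xMonomial (ε i) ^ δ i = xMonomial fun j ↦ ∑ i, δ i * ε i j := by
  simp only [xMonomial, ← Finset.prod_pow, ← pow_mul, ← Finset.prod_pow_eq_pow_sum]
  rw [Finset.prod_comm]
  simp only [mul_comm]

theorem sumAlgEquiv_xPow (γ : Fin n → ℕ) :
    sumAlgEquiv ℚ (Fin m × (Fin n → ℕ)) (Fin n) (xPow m n γ) = C (xMonomial γ) := by
  simp [xPow, xMonomial]

theorem sumAlgEquiv_genForm (d : Fin m → ℕ) (i : Fin m) :
    sumAlgEquiv ℚ (Fin m × (Fin n → ℕ)) (Fin n) (genForm m n d i) =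
      rowForm (fun i ↦ Finset.Nat.antidiagonalTuple n (d i)) (fun _ ↦ xMonomial) i := by
  simp [genForm, rowForm, xMonomial, mul_comm]

theorem sumAlgEquiv_rename_inl {σ τ K : Type*} [CommSemiring K] (R : MvPolynomial σ K) :
    sumAlgEquiv K σ τ (rename Sum.inl R) = map C R :=
  DFunLike.congr_fun (sumAlgEquiv_comp_rename_inl K σ τ) R

theorem bezout_iff (d : Fin m → ℕ) (R : MvPolynomial (Fin m × (Fin n → ℕ)) ℚ) (γ : Fin n → ℕ) :
    Bezout m n d R γ ↔ C (xMonomial γ) * map C R ∈ Ideal.span (Set.range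
      (rowForm (fun i ↦ Finset.Nat.antidiagonalTuple n (d i)) fun _ ↦ xMonomial)) := by
  let φ := sumAlgEquiv ℚ (Fin m × (Fin n → ℕ)) (Fin n)
  have image_range : φ '' Set.range (genForm m n d) = Set.range
      (rowForm (fun i ↦ Finset.Nat.antidiagonalTuple n (d i)) fun _ ↦ xMonomial) := by
    rw [← Set.range_comp]
    exact congrArg Set.range (funext (sumAlgEquiv_genForm d))
  rw [Bezout, ← Ideal.comap_map_of_bijective φ φ.bijective (I := Ideal.span _), Ideal.mem_comap,
    Ideal.map_span, image_range, map_mul, sumAlgEquiv_xPow, sumAlgEquiv_rename_inl]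

theorem isWeightedHomogeneous_of_multiHom {d δ : Fin m → ℕ}
    {R : MvPolynomial (Fin m × (Fin n → ℕ)) ℚ} (hR : MultiHom m n d δ R) :
    IsWeightedHomogeneous rowWeight R δ := by
  refine fun k hk ↦ funext fun i ↦ ?_
  rw [← (hR k (mem_support_iff.mpr hk)).2 i, Finsupp.weight_apply, Finsupp.sum, Finset.sum_apply]
  simp [rowWeight, Pi.single_apply, eq_comm]

end GenericForms

/-- If `R` is multihomogeneous of multidegree `δ` and satisfies
Bézout(γ₀) for some multiindex `γ₀`, then for every transversal `ε` (an `m × n`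
matrix of nonnegative integers with `i`-th row sum `dᵢ`), `R` satisfies
Bézout(δᵀε) where `(δᵀε)_j = Σᵢ δᵢ ε_{ij}`. -/
theorem bezout_of_bezout_transversal (m n : ℕ) (hm : 1 ≤ m) (hn : 1 ≤ n)
    (d : Fin m → ℕ) (hd : ∀ i, 1 ≤ d i) (δ : Fin m → ℕ)
    (R : MvPolynomial (Fin m × (Fin n → ℕ)) ℚ)
    (hMH : MultiHom m n d δ R)
    (hB : ∃ γ₀ : Fin n → ℕ, Bezout m n d R γ₀)
    (ε : Fin m → Fin n → ℕ) (hε : ∀ i, ∑ j, ε i j = d i) :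
    Bezout m n d R (fun j => ∑ i, δ i * ε i j) := by
  obtain ⟨γ₀, hγ₀⟩ := hB
  rw [bezout_iff, ← prod_xMonomial_pow]
  exact bezout_of_bezout_transversal_general _ _
    (isWeightedHomogeneous_map (isWeightedHomogeneous_of_multiHom hMH) C)
    (mem_nonZeroDivisors_of_ne_zero (xMonomial_ne_zero γ₀)) ((bezout_iff d R γ₀).mp hγ₀)
    fun i ↦ Finset.Nat.mem_antidiagonalTuple.mpr (hε i)
end

section
/- Let n ≥ 1 and d₁,…,d_n ≥ 1. Let R be an inertia form of degree zero for the format (n,n,(d₁,…,d_n)) which is multihomogeneous of multidegree (δ₁,…,δ_n). If there exists i ∈ {1,…,n} with δ_i < ∏_{j ∈ {1,…,n}, j ≠ i} d_j, then R = 0. -/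
open MvPolynomial

/-- `R` is an inertia form of degree zero. -/
def IsIFDZ (m n : ℕ) (d : Fin m → ℕ)
    (R : MvPolynomial (Fin m × (Fin n → ℕ)) ℚ) : Prop :=
  ∃ q : ℕ, ∀ γ : Fin n → ℕ, ∑ j, γ j = q → Bezout m n d R γ

/-!
Evaluating a Bézout relation at a point `x` with `xᵢ = 1` shows that `R` vanishes, modulo any
ideal, at every system of forms that vanishes at `x` modulo that ideal.

Let `F⁰` be a system whose forms `F⁰ⱼ = ∏_{l < dⱼ} (xⱼ - l xᵢ)`, `j ≠ i`, meet in a grid of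
`∏_{j ≠ i} dⱼ` points on which `F⁰ᵢ` takes distinct values.  Join `F⁰` to an arbitrary system by
a line with parameter `t`, and let `p(T)` be the value of `R` on that line after `T xᵢ ^ dᵢ` is
added to the `i`-th form.  By Newton iteration each grid point lifts to a common zero modulo
`t ^ m` of the forms of index `j ≠ i` on the line.  If `s` is the value of the `i`-th form at this
zero, then `t ^ m` divides `p(-s)`.  These `s` are distinct modulo `t`, and they outnumber the
degree of `p`, which is at most the degree of `R` in the coefficients of the `i`-th form.  As `m` is
arbitrary, `p = 0`.  At `T = 0`, `t = 1` this says that `R` vanishes at the arbitrary system.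
-/

open scoped Polynomial

section Line

variable {σ k A : Type*} [CommSemiring k] [CommSemiring A] [Algebra k A]

lemma natDegree_aeval_le_weightedTotalDegree (w : σ → ℕ) (f : σ → A[X])
    (hf : ∀ a, (f a).natDegree ≤ w a) (R : MvPolynomial σ k) :
    (aeval f R).natDegree ≤ weightedTotalDegree w R := by
  rw [aeval_def, eval₂_eq]
  refine Polynomial.natDegree_sum_le_of_forall_le _ _ fun s hs => ?_
  rw [IsScalarTower.algebraMap_apply k A A[X], Polynomial.algebraMap_eq]
  calc (Polynomial.C (algebraMap k A (coeff s R)) * ∏ a ∈ s.support, f a ^ s a).natDegree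
      ≤ (∏ a ∈ s.support, f a ^ s a).natDegree := Polynomial.natDegree_C_mul_le _ _
    _ ≤ ∑ a ∈ s.support, (f a ^ s a).natDegree := Polynomial.natDegree_prod_le _ _
    _ ≤ ∑ a ∈ s.support, s a * w a := Finset.sum_le_sum fun a _ =>
        Polynomial.natDegree_pow_le.trans (Nat.mul_le_mul_left _ (hf a))
    _ = Finsupp.weight w s := by simp [Finsupp.weight_apply, Finsupp.sum]
    _ ≤ weightedTotalDegree w R := le_weightedTotalDegree w hs

/-- The point with polynomial coordinates that runs through the line `c + t • v`; the parameter
`t` is the variable of `A[X]`. -/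
noncomputable def polyLine (c v : σ → A) : σ → A[X] :=
  algebraMap A A[X] ∘ c + (Polynomial.X : A[X]) • (algebraMap A A[X] ∘ v)

lemma eval_aeval_polyLine (c v : σ → A) (s : A) (R : MvPolynomial σ k) :
    (aeval (polyLine c v) R).eval s = aeval (c + s • v) R := by
  have : ((Polynomial.aeval s).restrictScalars k).comp (aeval (polyLine c v)) =
      aeval (c + s • v) := by
    refine algHom_ext fun a => ?_
    simp [polyLine, mul_comm s]
  rw [← this, AlgHom.comp_apply, AlgHom.restrictScalars_apply, Polynomial.coe_aeval_eq_eval]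

end Line

section ApproximateZeros

variable {A : Type*} [CommRing A]

lemma C_dvd_of_forall_dvd_eval {κ : Type*} [Fintype κ] {π : A} (hπ : Prime π) {p : A[X]}
    (hdeg : p.natDegree < Fintype.card κ) {s : κ → A}
    (hs : ∀ k k', π ∣ s k - s k' → k = k') (hp : ∀ k, π ∣ p.eval (s k)) :
    Polynomial.C π ∣ p := by
  let q := Ideal.Quotient.mk (Ideal.span {π})
  have q_eq_zero (a : A) : q a = 0 ↔ π ∣ a := Ideal.Quotient.eq_zero_iff_dvd π a
  have : (Ideal.span {π}).IsPrime := (Ideal.span_singleton_prime hπ.ne_zero).2 hπ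
  have hinj : Function.Injective (q ∘ s) := fun k k' h =>
    hs k k' (by rw [← q_eq_zero, map_sub, sub_eq_zero]; exact h)
  have hmap : p.map q = 0 := by
    refine Polynomial.eq_zero_of_natDegree_lt_card_of_eval_eq_zero _ hinj (fun k => ?_)
      (Polynomial.natDegree_map_le.trans_lt hdeg)
    rw [Function.comp_apply, Polynomial.eval_map_apply, q_eq_zero]
    exact hp k
  refine (Polynomial.C_dvd_iff_dvd_coeff π p).2 fun a => ?_
  rw [← q_eq_zero, ← Polynomial.coeff_map, hmap, Polynomial.coeff_zero]

lemma eq_zero_of_forall_pow_dvd_eval [IsDomain A] [WfDvdMonoid A] {κ : Type*} [Fintype κ]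
    {π : A} (hπ : Prime π) {p : A[X]} (hdeg : p.natDegree < Fintype.card κ)
    (hroots : ∀ m : ℕ, ∃ s : κ → A,
      (∀ k k', π ∣ s k - s k' → k = k') ∧ ∀ k, π ^ (m + 1) ∣ p.eval (s k)) :
    p = 0 := by
  by_contra hp
  have hfin : FiniteMultiplicity (Polynomial.C π) p :=
    .of_not_isUnit (fun h => hπ.not_isUnit (Polynomial.isUnit_C.1 h)) hp
  obtain ⟨r, hpr, hr⟩ := hfin.exists_eq_pow_mul_and_not_dvd
  set m := multiplicity (Polynomial.C π) p
  obtain ⟨s, hs, hsp⟩ := hroots m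
  have hdeg_r : r.natDegree = p.natDegree := by
    rw [hpr, ← Polynomial.C_pow, Polynomial.natDegree_C_mul (pow_ne_zero m hπ.ne_zero)]
  refine hr (C_dvd_of_forall_dvd_eval hπ (hdeg_r.trans_lt hdeg) hs fun k => ?_)
  have := hsp k
  rwa [hpr, ← Polynomial.C_pow, Polynomial.eval_C_mul, pow_succ,
    mul_dvd_mul_iff_left (pow_ne_zero m hπ.ne_zero)] at this

/- Newton iteration.  As `G` gains a factor `J` on differences, only the diagonal derivatives
of `P` enter the linearised system. -/
lemma exists_approx_zero_of_diagonal_add_contracting {ι : Type*} (J : Ideal A) (P : ι → A[X])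
    (G : (ι → A) → ι → A)
    (hG : ∀ (m : ℕ) (x y : ι → A), (∀ j, x j - y j ∈ J ^ m) →
      ∀ j, G x j - G y j ∈ J ^ (m + 1))
    (x₀ : ι → A) (hx₀ : ∀ j, (P j).eval (x₀ j) + G x₀ j ∈ J)
    (hP : ∀ j, IsUnit ((P j).derivative.eval (x₀ j))) (m : ℕ) :
    ∃ x : ι → A, (∀ j, x j - x₀ j ∈ J) ∧ ∀ j, (P j).eval (x j) + G x j ∈ J ^ (m + 1) := by
  induction m with
  | zero => exact ⟨x₀, by simp, by simpa using hx₀⟩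
  | succ m ih =>
    obtain ⟨x, hxx₀, hx⟩ := ih
    choose u hu using fun j => (hP j).exists_right_inv
    let f : ι → A := fun j => (P j).eval (x j) + G x j
    let h : ι → A := fun j => -(u j * f j)
    have hh (j : ι) : h j ∈ J ^ (m + 1) := neg_mem (Ideal.mul_mem_left _ _ (hx j))
    refine ⟨x + h, fun j => ?_, fun j => ?_⟩
    · have : h j ∈ J := Ideal.pow_le_self m.succ_ne_zero (hh j)
      simpa [add_sub_right_comm] using add_mem (hxx₀ j) this
    · obtain ⟨r, hr⟩ := (P j).binomExpansion (x j) (h j)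
      have hΔG : G (x + h) j - G x j ∈ J ^ (m + 1 + 1) := hG _ _ _ (by simpa using hh) j
      have hderiv : 1 - (P j).derivative.eval (x j) * u j ∈ J := by
        have : (P j).derivative.eval (x j) - (P j).derivative.eval (x₀ j) ∈ J :=
          J.mem_of_dvd (Polynomial.sub_dvd_eval_sub _ _ _) (hxx₀ j)
        rw [← hu j, ← sub_mul, ← neg_sub, neg_mul]
        exact neg_mem (J.mul_mem_right _ this)
      have hlin : f j * (1 - (P j).derivative.eval (x j) * u j) ∈ J ^ (m + 1 + 1) := by
        rw [pow_succ]
        exact Ideal.mul_mem_mul (hx j) hderiv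
      have hquad : r * h j ^ 2 ∈ J ^ (m + 1 + 1) := by
        have := Ideal.pow_mem_pow (hh j) 2
        rw [← pow_mul] at this
        exact Ideal.mul_mem_left _ _ (Ideal.pow_le_pow_right (by lia) this)
      convert add_mem (add_mem hlin hquad) hΔG using 1
      simp only [Pi.add_apply, hr, f, h]
      ring

end ApproximateZeros

lemma exists_weights_injective {K ι κ : Type*} [Field K] [Infinite K] [Fintype ι] [Finite κ]
    {y : κ → ι → K} (hy : Function.Injective y) :
    ∃ w : ι → K, Function.Injective fun k => ∑ l, w l * y k l := by
  classical
  obtain ⟨φ, hφ⟩ := Module.exists_dual_forall_apply_ne_zero (K := K)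
    (fun q : {q : κ × κ // q.1 ≠ q.2} => y q.1.1 - y q.1.2)
    fun q => sub_ne_zero.2 (hy.ne q.2)
  let w (l : ι) : K := φ fun l' => if l = l' then 1 else 0
  have hφ_apply (x : ι → K) : φ x = ∑ l, w l * x l := by
    simp [w, LinearMap.pi_apply_eq_sum_univ φ x, mul_comm]
  refine ⟨w, fun k k' h => ?_⟩
  by_contra hk
  refine hφ ⟨(k, k'), hk⟩ ?_
  rw [map_sub, hφ_apply, hφ_apply, sub_eq_zero]
  exact h

section FormValue

variable {m n : ℕ} {A : Type*} [CommSemiring A]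

/-- The value at `x` of the `j`-th form of the system with coefficients `c`. -/
def formValue (d : Fin m → ℕ) (c : Fin m × (Fin n → ℕ) → A) (x : Fin n → A) (j : Fin m) : A :=
  ∑ α ∈ Finset.Nat.antidiagonalTuple n (d j), c (j, α) * ∏ l, x l ^ α l

variable (d : Fin m → ℕ)

lemma aeval_genForm [Algebra ℚ A] (c : Fin m × (Fin n → ℕ) → A) (x : Fin n → A) (j : Fin m) :
    aeval (Sum.elim c x) (genForm m n d j) = formValue d c x j := by
  simp [genForm, formValue]

lemma formValue_add_smul (c v : Fin m × (Fin n → ℕ) → A) (s : A) (x : Fin n → A) (j : Fin m) :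
    formValue d (c + s • v) x j = formValue d c x j + s * formValue d v x j := by
  simp only [formValue, Pi.add_apply, Pi.smul_apply, smul_eq_mul, add_mul, mul_assoc,
    Finset.sum_add_distrib, Finset.mul_sum]

lemma formValue_sub_mem {A : Type*} [CommRing A] (c : Fin m × (Fin n → ℕ) → A) (J : Ideal A)
    {x y : Fin n → A} (h : ∀ l, x l - y l ∈ J) (j : Fin m) :
    formValue d c x j - formValue d c y j ∈ J := by
  have h' (l : Fin n) : Ideal.Quotient.mk J (x l) = Ideal.Quotient.mk J (y l) :=
    Ideal.Quotient.eq.2 (h l)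
  rw [← Ideal.Quotient.eq]
  simp only [formValue, map_sum, map_mul, map_prod, map_pow, h']

/-- The coefficients of a system of forms `P`, indexed like the variables `a_{i,α}`. -/
noncomputable def formCoeff {k : Type*} [CommSemiring k] (P : Fin m → MvPolynomial (Fin n) k) :
    Fin m × (Fin n → ℕ) → k :=
  fun q => coeff (Finsupp.equivFunOnFinite.symm q.2) (P q.1)

lemma formValue_formCoeff {k : Type*} [CommSemiring k] [Algebra k A]
    {P : Fin m → MvPolynomial (Fin n) k} {j : Fin m} (hP : (P j).IsHomogeneous (d j))
    (x : Fin n → A) :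
    formValue d (algebraMap k A ∘ formCoeff P) x j = aeval x (P j) := by
  rw [aeval_def, eval₂_eq']
  symm
  refine Finset.sum_of_injOn (fun s : Fin n →₀ ℕ => ⇑s) DFunLike.coe_injective.injOn
    (fun s hs => ?_) (fun α _ hα => ?_) fun s _ => by simp [formCoeff]
  · rw [Finset.mem_coe, Finset.Nat.mem_antidiagonalTuple,
      hP.degree_eq_sum_deg_support hs, ← Finsupp.degree_apply, Finsupp.degree_eq_sum]
  · have : coeff (Finsupp.equivFunOnFinite.symm α) (P j) = 0 := by
      by_contra h
      exact hα ⟨Finsupp.equivFunOnFinite.symm α, by simpa using h, by simp⟩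
    simp [formCoeff, this]

lemma IsIFDZ.aeval_mem [Algebra ℚ A] {d : Fin m → ℕ} {R : MvPolynomial (Fin m × (Fin n → ℕ)) ℚ}
    (hR : IsIFDZ m n d R) (J : Ideal A) (c : Fin m × (Fin n → ℕ) → A) (x : Fin n → A)
    {i : Fin n} (hxi : x i = 1) (hJ : ∀ j, formValue d c x j ∈ J) : aeval c R ∈ J := by
  obtain ⟨q, hq⟩ := hR
  have hbez : Bezout m n d R (Pi.single i q) := hq _ (by simp)
  let φ : MvPolynomial (Var m n) ℚ →ₐ[ℚ] A := aeval (Sum.elim c x)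
  have hspan : Ideal.span (Set.range (genForm m n d)) ≤ J.comap φ := by
    rw [Ideal.span_le]
    rintro _ ⟨j, rfl⟩
    simpa [φ, aeval_genForm] using hJ j
  have hpow : φ (xPow m n (Pi.single i q)) = 1 := by
    simp [φ, xPow, Pi.single_apply, hxi, Finset.prod_ite_eq']
  have hφR : φ (rename Sum.inl R) = aeval c R := by
    simp [φ, aeval_rename]
  simpa [hpow, hφR] using hspan hbez

end FormValue

section Grid

variable {n : ℕ}

/-- The point of the affine chart `xᵢ = 1` with the remaining coordinates `y`. -/
def chartPoint {A : Type*} [One A] (i : Fin n) (y : {j // j ≠ i} → A) : Fin n → A :=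
  fun j => if h : j = i then 1 else y ⟨j, h⟩

@[simp]
lemma chartPoint_self {A : Type*} [One A] (i : Fin n) (y : {j // j ≠ i} → A) :
    chartPoint i y i = 1 := by
  simp [chartPoint]

lemma chartPoint_of_ne {A : Type*} [One A] {i j : Fin n} (hj : j ≠ i)
    (y : {j // j ≠ i} → A) : chartPoint i y j = y ⟨j, hj⟩ := by
  simp [chartPoint, hj]

lemma chartPoint_comp {A B : Type*} [One A] [One B] (i : Fin n) (y : {j // j ≠ i} → A)
    {f : A → B} (hf : f 1 = 1) : chartPoint i (f ∘ y) = f ∘ chartPoint i y := by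
  ext j
  by_cases hj : j = i
  · simp [hj, hf]
  · simp [chartPoint_of_ne hj]

lemma chartPoint_sub_mem {A : Type*} [CommRing A] {J : Ideal A} {i : Fin n}
    {y z : {j // j ≠ i} → A} (h : ∀ j, y j - z j ∈ J) (l : Fin n) :
    chartPoint i y l - chartPoint i z l ∈ J := by
  by_cases hl : l = i
  · simp [hl]
  · simpa [chartPoint_of_ne hl] using h ⟨l, hl⟩

variable {S : Type*} [CommRing S] (d : Fin n → ℕ) (i : Fin n) (w : Fin n → S)

/-- A system whose forms of index `j ≠ i` cut out, in the chart `xᵢ = 1`, the grid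
`∏_{j ≠ i} {0, …, d_j - 1}`, and whose `i`-th form is there the linear form with weights `w`.
The truncated exponent makes the latter homogeneous of degree `dᵢ` only for `1 ≤ dᵢ`. -/
noncomputable def gridForm (j : Fin n) : MvPolynomial (Fin n) S :=
  if j = i then X i ^ (d i - 1) * ∑ l, C (w l) * X l
  else ∏ l ∈ Finset.range (d j), (X j - C (l : S) * X i)

variable {d i} in
lemma gridForm_isHomogeneous (hdi : 1 ≤ d i) (j : Fin n) :
    (gridForm d i w j).IsHomogeneous (d j) := by
  unfold gridForm
  split_ifs with hj
  · subst hj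
    have := (isHomogeneous_X_pow (R := S) j (d j - 1)).mul
      (IsHomogeneous.sum Finset.univ _ 1 fun l _ => isHomogeneous_C_mul_X (w l) l)
    rwa [Nat.sub_add_cancel hdi] at this
  · simpa using IsHomogeneous.prod (Finset.range (d j)) _ (fun _ => 1) fun l _ =>
      (isHomogeneous_X S j).sub (isHomogeneous_C_mul_X (l : S) i)

lemma aeval_gridForm_self {A : Type*} [CommRing A] [Algebra S A] (y : {j // j ≠ i} → A) :
    aeval (chartPoint i y) (gridForm d i w i) =
      ∑ l, algebraMap S A (w l) * chartPoint i y l := by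
  simp [gridForm]

lemma aeval_gridForm_coe {A : Type*} [CommRing A] [Algebra S A] (y : {j // j ≠ i} → A)
    (j : {j // j ≠ i}) :
    aeval (chartPoint i y) (gridForm d i w j) =
      (Lagrange.nodal (Finset.range (d j)) (Nat.cast : ℕ → A)).eval (y j) := by
  simp [gridForm, j.2, chartPoint_of_ne j.2, Lagrange.eval_nodal]

/-- The coefficients of the line `F⁰ + t • G` of systems through the grid system `F⁰`, in the
direction given by the coefficients `g`. -/
noncomputable def gridLine (g : Fin n × (Fin n → ℕ) → S) : Fin n × (Fin n → ℕ) → S[X] :=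
  polyLine (formCoeff (gridForm d i w)) g

variable {d i}

lemma formValue_gridLine (hdi : 1 ≤ d i) (g : Fin n × (Fin n → ℕ) → S) (x : Fin n → S[X])
    (j : Fin n) :
    formValue d (gridLine d i w g) x j = aeval x (gridForm d i w j) +
      Polynomial.X * formValue d (algebraMap S S[X] ∘ g) x j := by
  rw [gridLine, polyLine, formValue_add_smul,
    formValue_formCoeff d (gridForm_isHomogeneous w hdi j)]

lemma formValue_gridLine_self_sub_mem (hdi : 1 ≤ d i) (g : Fin n × (Fin n → ℕ) → S)
    {y : {j // j ≠ i} → S[X]} {z : {j // j ≠ i} → S}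
    (h : ∀ j, y j - Polynomial.C (z j) ∈ Ideal.span {(Polynomial.X : S[X])}) :
    formValue d (gridLine d i w g) (chartPoint i y) i -
      Polynomial.C (∑ l, w l * chartPoint i z l) ∈ Ideal.span {(Polynomial.X : S[X])} := by
  have hchart (l : Fin n) : chartPoint i y l - Polynomial.C (chartPoint i z l) ∈
      Ideal.span {(Polynomial.X : S[X])} := by
    simpa [chartPoint_comp i z (map_one (Polynomial.C (R := S)))] using
      chartPoint_sub_mem (z := Polynomial.C ∘ z) h l
  rw [formValue_gridLine w hdi, aeval_gridForm_self, map_sum, add_sub_right_comm,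
    ← Finset.sum_sub_distrib]
  refine add_mem (sum_mem fun l _ => ?_)
    (Ideal.mul_mem_right _ _ (Ideal.mem_span_singleton_self _))
  rw [Polynomial.algebraMap_eq, Polynomial.C_mul, ← mul_sub]
  exact Ideal.mul_mem_left _ _ (hchart l)

lemma isUnit_eval_derivative_nodal_natCast {K : Type*} [Field K] [CharZero K] {D k : ℕ}
    (hk : k < D) :
    IsUnit ((Lagrange.nodal (Finset.range D) (Nat.cast : ℕ → K[X])).derivative.eval
      (k : K[X])) := by
  rw [Lagrange.eval_nodal_derivative_eval_node_eq (Finset.mem_range.2 hk), Lagrange.eval_nodal,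
    IsUnit.prod_iff]
  intro l hl
  have hne : (k : K) - l ≠ 0 :=
    sub_ne_zero.2 (Nat.cast_injective.ne (Finset.ne_of_mem_erase hl).symm)
  simpa using Polynomial.isUnit_C.2 hne.isUnit

lemma exists_approx_zero_gridLine {K : Type*} [Field K] [CharZero K] (hdi : 1 ≤ d i)
    (w : Fin n → K) (g : Fin n × (Fin n → ℕ) → K)
    (k : ∀ j : {j // j ≠ i}, Fin (d j)) (m : ℕ) :
    ∃ y : {j // j ≠ i} → K[X],
      (∀ j, y j - ((k j : ℕ) : K[X]) ∈ Ideal.span {(Polynomial.X : K[X])}) ∧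
      ∀ j : {j // j ≠ i}, formValue d (gridLine d i w g) (chartPoint i y) j ∈
        Ideal.span {(Polynomial.X : K[X])} ^ (m + 1) := by
  let J : Ideal K[X] := Ideal.span {Polynomial.X}
  have hX : Polynomial.X ∈ J := Ideal.mem_span_singleton_self _
  let P (j : {j // j ≠ i}) : K[X][X] := Lagrange.nodal (Finset.range (d j)) Nat.cast
  let G (y : {j // j ≠ i} → K[X]) (j : {j // j ≠ i}) : K[X] :=
    Polynomial.X * formValue d (algebraMap K K[X] ∘ g) (chartPoint i y) j
  have hG (m : ℕ) (y z : {j // j ≠ i} → K[X]) (h : ∀ j, y j - z j ∈ J ^ m)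
      (j : {j // j ≠ i}) : G y j - G z j ∈ J ^ (m + 1) := by
    rw [← mul_sub, pow_succ']
    exact Ideal.mul_mem_mul hX (formValue_sub_mem d _ _ (chartPoint_sub_mem h) j)
  have hroot (j : {j // j ≠ i}) : (P j).eval ((k j : ℕ) : K[X]) = 0 :=
    Lagrange.eval_nodal_at_node (Finset.mem_range.2 (k j).2)
  obtain ⟨y, hyk, hy⟩ := exists_approx_zero_of_diagonal_add_contracting J P G hG
    (fun j => ((k j : ℕ) : K[X]))
    (fun j => by rw [hroot, zero_add]; exact J.mul_mem_right _ hX)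
    (fun j => isUnit_eval_derivative_nodal_natCast (k j).2) m
  refine ⟨y, hyk, fun j => ?_⟩
  rw [formValue_gridLine w hdi, aeval_gridForm_coe]
  exact hy j

end Grid

/-- The degree of `R` in the coefficients of the `i`-th form. -/
noncomputable def formDegree {k : Type*} [CommSemiring k] {m n : ℕ} (i : Fin m)
    (R : MvPolynomial (Fin m × (Fin n → ℕ)) k) : ℕ :=
  weightedTotalDegree (fun q => if q.1 = i then 1 else 0) R

lemma MultiHom.formDegree_le {m n : ℕ} {d δ : Fin m → ℕ}
    {R : MvPolynomial (Fin m × (Fin n → ℕ)) ℚ} (hR : MultiHom m n d δ R) (i : Fin m) :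
    formDegree i R ≤ δ i := by
  refine Finset.sup_le fun s hs => ?_
  rw [← (hR s hs).2 i]
  simp [Finsupp.weight_apply, Finsupp.sum]

section LowDegree

variable {n : ℕ} {d : Fin n → ℕ} {i : Fin n}

lemma exists_weights_injective_grid {K : Type*} [Field K] [CharZero K] (d : Fin n → ℕ)
    (i : Fin n) :
    ∃ w : Fin n → K, Function.Injective fun k : ∀ j : {j // j ≠ i}, Fin (d j) =>
      ∑ l, w l * chartPoint i (fun j => ((k j : ℕ) : K)) l := by
  have : Infinite K := CharZero.infinite K
  refine exists_weights_injective fun k k' h => ?_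
  ext j
  simpa [chartPoint_of_ne j.2] using congrFun h j

variable {S : Type*} [CommRing S]

/-- The coefficients of the system whose `i`-th form is `xᵢ ^ dᵢ` and whose other forms vanish. -/
noncomputable def powCoeff (d : Fin n → ℕ) (i : Fin n) : Fin n × (Fin n → ℕ) → S :=
  formCoeff (Pi.single i (X i ^ d i))

lemma formValue_powCoeff {A : Type*} [CommRing A] [Algebra S A] (x : Fin n → A) (j : Fin n) :
    formValue d (algebraMap S A ∘ powCoeff d i) x j = if j = i then x i ^ d i else 0 := by
  rw [powCoeff, formValue_formCoeff]
  · split_ifs with hj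
    · subst hj; simp
    · simp [hj]
  · by_cases hj : j = i
    · subst hj; simpa using isHomogeneous_X_pow j (d j)
    · simpa [hj] using isHomogeneous_zero (Fin n) S (d j)

/-- `R` on the grid line, its `i`-th form shifted by `T • xᵢ ^ dᵢ`, as a polynomial in `T`. -/
noncomputable def shiftPolynomial (d : Fin n → ℕ) (i : Fin n) (w : Fin n → S)
    (g : Fin n × (Fin n → ℕ) → S) (R : MvPolynomial (Fin n × (Fin n → ℕ)) S) : S[X][X] :=
  aeval (polyLine (gridLine d i w g) (algebraMap S S[X] ∘ powCoeff d i)) R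

lemma eval_shiftPolynomial (w : Fin n → S) (g : Fin n × (Fin n → ℕ) → S)
    (R : MvPolynomial (Fin n × (Fin n → ℕ)) S) (s : S[X]) :
    (shiftPolynomial d i w g R).eval s =
      aeval (gridLine d i w g + s • (algebraMap S S[X] ∘ powCoeff d i)) R :=
  eval_aeval_polyLine _ _ s R

lemma natDegree_shiftPolynomial_le (w : Fin n → S) (g : Fin n × (Fin n → ℕ) → S)
    (R : MvPolynomial (Fin n × (Fin n → ℕ)) S) :
    (shiftPolynomial d i w g R).natDegree ≤ formDegree i R := by
  refine natDegree_aeval_le_weightedTotalDegree _ _ (fun q => ?_) R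
  simp only [polyLine, Pi.add_apply, Pi.smul_apply, Function.comp_apply, smul_eq_mul,
    Polynomial.algebraMap_eq]
  split_ifs with hq
  · compute_degree
  · simp [powCoeff, formCoeff, hq]

lemma IsIFDZ.pow_dvd_eval_shiftPolynomial {R : MvPolynomial (Fin n × (Fin n → ℕ)) ℚ}
    (hR : IsIFDZ n n d R) (w : Fin n → ℚ) (g : Fin n × (Fin n → ℕ) → ℚ) {m : ℕ}
    {y : {j // j ≠ i} → ℚ[X]}
    (hy : ∀ j : {j // j ≠ i}, formValue d (gridLine d i w g) (chartPoint i y) j ∈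
      Ideal.span {(Polynomial.X : ℚ[X])} ^ m) :
    Polynomial.X ^ m ∣ (shiftPolynomial d i w g R).eval
      (-formValue d (gridLine d i w g) (chartPoint i y) i) := by
  rw [eval_shiftPolynomial, ← Ideal.mem_span_singleton, ← Ideal.span_singleton_pow]
  refine hR.aeval_mem _ _ (chartPoint i y) (chartPoint_self i y) fun j => ?_
  rw [formValue_add_smul, formValue_powCoeff]
  by_cases hj : j = i
  · simp [hj]
  · simpa [hj] using hy ⟨j, hj⟩

lemma IsIFDZ.shiftPolynomial_eq_zero (hdi : 1 ≤ d i)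
    {R : MvPolynomial (Fin n × (Fin n → ℕ)) ℚ} (hR : IsIFDZ n n d R)
    (hlow : formDegree i R < ∏ j ∈ Finset.univ.erase i, d j) {w : Fin n → ℚ}
    (hw : Function.Injective fun k : ∀ j : {j // j ≠ i}, Fin (d j) =>
      ∑ l, w l * chartPoint i (fun j => ((k j : ℕ) : ℚ)) l)
    (g : Fin n × (Fin n → ℕ) → ℚ) : shiftPolynomial d i w g R = 0 := by
  have hcard : Fintype.card (∀ j : {j // j ≠ i}, Fin (d j)) =
      ∏ j ∈ Finset.univ.erase i, d j := by
    simp [Fintype.card_pi, Finset.prod_subtype (Finset.univ.erase i) (p := (· ≠ i)) (by simp)]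
  refine eq_zero_of_forall_pow_dvd_eval Polynomial.prime_X (κ := ∀ j : {j // j ≠ i}, Fin (d j))
    (by rw [hcard]; exact (natDegree_shiftPolynomial_le w g R).trans_lt hlow) fun m => ?_
  choose y hyk hy using fun k => exists_approx_zero_gridLine hdi w g k m
  refine ⟨fun k => -formValue d (gridLine d i w g) (chartPoint i (y k)) i,
    fun k k' h => hw ?_, fun k => hR.pow_dvd_eval_shiftPolynomial w g (hy k)⟩
  have hval (k : ∀ j : {j // j ≠ i}, Fin (d j)) := formValue_gridLine_self_sub_mem w hdi g
    (z := fun j => ((k j : ℕ) : ℚ)) (by simpa using hyk k)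
  simp only [Ideal.mem_span_singleton, Polynomial.X_dvd_iff, Polynomial.coeff_sub,
    Polynomial.coeff_neg, Polynomial.coeff_C_zero] at hval h
  linear_combination hval k' - hval k - h

end LowDegree

theorem ifdz_eq_zero_of_low_multidegree_general {n : ℕ} {d : Fin n → ℕ} {i : Fin n}
    (hdi : 1 ≤ d i) {R : MvPolynomial (Fin n × (Fin n → ℕ)) ℚ} (hIF : IsIFDZ n n d R)
    (hlow : formDegree i R < ∏ j ∈ Finset.univ.erase i, d j) : R = 0 := by
  obtain ⟨w, hw⟩ := exists_weights_injective_grid (K := ℚ) d i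
  refine MvPolynomial.funext fun b => ?_
  let c₀ := formCoeff (gridForm d i w)
  have hline : aeval (gridLine d i w (b - c₀)) R = 0 := by
    have := eval_shiftPolynomial (d := d) (i := i) w (b - c₀) R 0
    rwa [hIF.shiftPolynomial_eq_zero hdi hlow hw, Polynomial.eval_zero, zero_smul, add_zero,
      eq_comm] at this
  have heval_one : (aeval (gridLine d i w (b - c₀)) R).eval 1 = eval b R := by
    rw [gridLine, eval_aeval_polyLine, one_smul, add_sub_cancel, aeval_eq_eval]
  rw [← heval_one, hline, Polynomial.eval_zero, map_zero]

/-- If `R` is an inertia form of degree zero for the format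
`(n, n, (d₁,…,d_n))`, multihomogeneous of multidegree `(δ₁,…,δ_n)`, and some
`δᵢ < ∏_{j ≠ i} d_j`, then `R = 0`. -/
theorem ifdz_eq_zero_of_low_multidegree (n : ℕ) (hn : 1 ≤ n)
    (d : Fin n → ℕ) (hd : ∀ i, 1 ≤ d i) (δ : Fin n → ℕ)
    (R : MvPolynomial (Fin n × (Fin n → ℕ)) ℚ)
    (hIF : IsIFDZ n n d R) (hMH : MultiHom n n d δ R)
    (hlow : ∃ i, δ i < ∏ j ∈ Finset.univ.erase i, d j) :
    R = 0 := by
  obtain ⟨i, hi⟩ := hlow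
  exact ifdz_eq_zero_of_low_multidegree_general (hd i) hIF ((hMH.formDegree_le i).trans_lt hi)
end

section
/- Let m < n be positive integers and d₁,…,d_m ≥ 1. If R is an inertia form of degree zero for the format (m,n,(d₁,…,d_m)) which is multihomogeneous of multidegree (δ₁,…,δ_m) for some (δ₁,…,δ_m) ∈ ℕ^m, then R = 0. -/
open MvPolynomial

/-!
Specialise the coefficients of the `Fᵢ` to a point `a` over an algebraically closed field. The
specialised forms vanish at the origin, and since there are fewer of them than variables, Krull's
height theorem together with the Nullstellensatz prevents the origin from being their only common
zero. At a common zero with `x_j ≠ 0`, Bézout for `x_j ^ q` reads `x_j ^ q * R(a) = 0`, so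
`R(a) = 0`. As `a` was arbitrary and the field is infinite, `R = 0`.
-/

section CommonZeros

theorem height_eq_natCard_of_isMaximal {σ K : Type*} [Finite σ] [Field K]
    (M : Ideal (MvPolynomial σ K)) [M.IsMaximal] : M.height = Nat.card σ := by
  induction σ using Finite.induction_empty_option with
  | of_equiv e ih =>
    have hcomap := ih (M.comap (renameEquiv K e).toRingEquiv)
    rwa [RingEquiv.height_comap, Nat.card_congr e] at hcomap
  | h_empty =>
    rw [Nat.card_of_isEmpty, Nat.cast_zero, Ideal.height_eq_zero_iff_eq_bot]
    let _ : Field (MvPolynomial PEmpty K) :=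
      ((isEmptyRingEquiv K PEmpty).toMulEquiv.isField (Field.toIsField K)).toField
    exact Ideal.eq_bot_of_prime M
  | @h_option τ _ ih =>
    let P := M.comap (optionEquivLeft K τ).symm.toRingEquiv
    let p := P.under (MvPolynomial τ K)
    have hP : P.IsMaximal := Ideal.comap_isMaximal_of_equiv _
    have hp : p.IsMaximal := Polynomial.isMaximal_comap_C_of_isJacobsonRing P
    have hover : P.LiesOver p := ⟨rfl⟩
    have hheight : P.height = p.height + 1 := Polynomial.height_eq_height_add_one p P
    rwa [ih, RingEquiv.height_comap, ← Nat.cast_add_one, ← Finite.card_option] at hheight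

variable {ι σ K : Type*} [Finite ι] [Finite σ] [Field K] [IsAlgClosed K]

theorem natCard_le_of_zeroLocus_span_range_eq_singleton {f : ι → MvPolynomial σ K} {p : σ → K}
    (hf : zeroLocus K (Ideal.span (Set.range f)) = {p}) : Nat.card σ ≤ Nat.card ι := by
  have hradical : (Ideal.span (Set.range f)).radical = vanishingIdeal K {p} := by
    rw [← vanishingIdeal_zeroLocus_eq_radical (K := K), hf]
  have hminimal : vanishingIdeal K {p} ∈ (Ideal.span (Set.range f)).minimalPrimes := by
    rw [← Ideal.radical_minimalPrimes, hradical, Ideal.minimalPrimes_eq_subsingleton_self]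
    exact Set.mem_singleton _
  have hheight := Ideal.height_le_card_of_mem_minimalPrimes_span (Set.finite_range f) hminimal
  rw [height_eq_natCard_of_isMaximal] at hheight
  exact (Nat.cast_le.mp hheight).trans (Finite.card_range_le f)

theorem exists_ne_forall_eval_eq_zero (hcard : Nat.card ι < Nat.card σ)
    {f : ι → MvPolynomial σ K} {p : σ → K} (hp : ∀ i, eval p (f i) = 0) :
    ∃ x ≠ p, ∀ i, eval x (f i) = 0 := by
  by_contra! hunique
  refine hcard.not_ge (natCard_le_of_zeroLocus_span_range_eq_singleton (f := f) (p := p) ?_)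
  ext x
  simp only [zeroLocus_span, Set.forall_mem_range, Set.mem_ofPred_eq, Set.mem_singleton_iff]
  constructor
  · contrapose!
    exact hunique x
  · rintro rfl
    exact hp

end CommonZeros

section GenericForms

variable {m n : ℕ} {d : Fin m → ℕ} {R : MvPolynomial (Fin m × (Fin n → ℕ)) ℚ}

theorem aeval_genForm_zero_right {K : Type*} [CommSemiring K] [Algebra ℚ K] {i : Fin m}
    (hi : d i ≠ 0) (a : Fin m × (Fin n → ℕ) → K) :
    aeval (Sum.elim a 0) (genForm m n d i) = 0 := by
  simp only [genForm, map_sum, map_mul, map_prod, map_pow, aeval_X, Sum.elim_inl, Sum.elim_inr,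
    Pi.zero_apply]
  refine Finset.sum_eq_zero fun α hα => ?_
  have hsum : ∑ j, α j ≠ 0 := by rwa [Finset.Nat.mem_antidiagonalTuple.mp hα]
  obtain ⟨j, hj, hαj⟩ := Finset.exists_ne_zero_of_sum_ne_zero hsum
  rw [Finset.prod_eq_zero hj (zero_pow hαj), mul_zero]

theorem exists_ne_zero_forall_aeval_genForm_eq_zero {K : Type*} [Field K] [IsAlgClosed K]
    [Algebra ℚ K] (hmn : m < n) (hd : ∀ i, d i ≠ 0) (a : Fin m × (Fin n → ℕ) → K) :
    ∃ x : Fin n → K, x ≠ 0 ∧ ∀ i, aeval (Sum.elim a x) (genForm m n d i) = 0 := by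
  let f (i : Fin m) : MvPolynomial (Fin n) K := aeval (Sum.elim (C ∘ a) X) (genForm m n d i)
  have eval_f (x : Fin n → K) (i : Fin m) :
      eval x (f i) = aeval (Sum.elim a x) (genForm m n d i) := by
    simp [f, genForm]
  simp only [← eval_f]
  refine exists_ne_forall_eval_eq_zero (by simpa using hmn) fun i => ?_
  rw [eval_f, aeval_genForm_zero_right (hd i)]

theorem Bezout.prod_pow_mul_aeval_eq_zero {K : Type*} [CommSemiring K] [Algebra ℚ K]
    {γ : Fin n → ℕ} (hR : Bezout m n d R γ) {a : Fin m × (Fin n → ℕ) → K} {x : Fin n → K}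
    (hx : ∀ i, aeval (Sum.elim a x) (genForm m n d i) = 0) :
    (∏ j, x j ^ γ j) * aeval a R = 0 := by
  have hspan : Ideal.span (Set.range (genForm m n d)) ≤ RingHom.ker (aeval (Sum.elim a x)) :=
    Ideal.span_le.mpr (Set.range_subset_iff.mpr hx)
  simpa [xPow, aeval_rename] using hspan hR

theorem IsIFDZ.aeval_eq_zero {K : Type*} [CommSemiring K] [NoZeroDivisors K] [Algebra ℚ K]
    (hR : IsIFDZ m n d R) {a : Fin m × (Fin n → ℕ) → K} {x : Fin n → K} (hx₀ : x ≠ 0)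
    (hx : ∀ i, aeval (Sum.elim a x) (genForm m n d i) = 0) : aeval a R = 0 := by
  obtain ⟨q, hq⟩ := hR
  obtain ⟨j, hj⟩ := Function.ne_iff.mp hx₀
  have hmul : x j ^ q * aeval a R = 0 := by
    simpa [Pi.single_apply, pow_ite] using
      (hq (Pi.single j q) (by simp)).prod_pow_mul_aeval_eq_zero hx
  exact (mul_eq_zero.mp hmul).resolve_left (pow_ne_zero q hj)

theorem ifdz_eq_zero_of_lt_general (hmn : m < n) (hd : ∀ i, 1 ≤ d i) (hIF : IsIFDZ m n d R) :
    R = 0 := by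
  let K := AlgebraicClosure ℚ
  have haeval (a : Fin m × (Fin n → ℕ) → K) : aeval a R = 0 := by
    obtain ⟨x, hx₀, hx⟩ := exists_ne_zero_forall_aeval_genForm_eq_zero hmn
      (fun i => Nat.ne_zero_of_lt (hd i)) a
    exact hIF.aeval_eq_zero hx₀ hx
  apply map_injective (algebraMap ℚ K) (algebraMap ℚ K).injective
  refine MvPolynomial.funext fun a => ?_
  rw [eval_map, map_zero, map_zero, ← haeval a, aeval_def]

end GenericForms

/-- If `m < n` and `R` is an inertia form of degree zero for the format
`(m, n, (d₁,…,d_m))` which is multihomogeneous of some multidegree `(δ₁,…,δ_m)`,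
then `R = 0`. -/
theorem ifdz_eq_zero_of_lt (m n : ℕ) (hm : 1 ≤ m) (hmn : m < n)
    (d : Fin m → ℕ) (hd : ∀ i, 1 ≤ d i) (δ : Fin m → ℕ)
    (R : MvPolynomial (Fin m × (Fin n → ℕ)) ℚ)
    (hIF : IsIFDZ m n d R) (hMH : MultiHom m n d δ R) :
    R = 0 :=
  ifdz_eq_zero_of_lt_general hmn hd hIF
end

section
/- Let n ≥ 1 and d₁,…,d_n ≥ 1, and define the canonical multidegree by δ_i := ∏_{j ∈ {1,…,n}, j ≠ i} d_j. Let R be an inertia form of degree zero for the format (n,n,(d₁,…,d_n)) which is multihomogeneous of multidegree (δ₁,…,δ_n). If A : D → ℕ is an effective filling with Row_i(A) = δ_i for all i whose weight vector wt(A) := Σ_{(i,α)∈D} A_{i,α}·α is not equal to d₁⋯d_n·(1,1,…,1), then the coefficient of the monomial ∏_{(i,α)∈D} a_{i,α}^{A_{i,α}} in R is zero. -/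
open MvPolynomial

/-!
The idea is to bound the weight of each variable from below: every monomial `a^A` of an inertia
form `R` satisfies `wt(A)_j ≥ d₁⋯d_n` for each `j`. Since the row sums force
`Σ_j wt(A)_j = n d₁⋯d_n`, all these inequalities are equalities.

For the bound, let `P` be the component of `R` of `x_j`-weight `k < N = d₁⋯d_n`. Being an inertia
form, `R` vanishes on every system with a zero in the chart `x_j = 1`, and rescaling the other
variables shows that `P` does too. Homogenize a system `f(y) + z` in `n` affine variables after
declaring `t = y_j` a parameter: the coefficient of `x^α` has degree at most `α_j` in `t`, so
`P` becomes a polynomial in `t` of degree at most `k`. It vanishes at the `t`-coordinate of each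
zero of the system, in particular at that of the generic zero, whose minimal polynomial can be
arranged to have degree `N > k`; so it is zero. Deforming such an `f` to an arbitrary system with
a formal parameter `ε` keeps the bound on the degree, and the vanishing propagates through the
powers of `ε`, so that `P` vanishes everywhere.
-/

universe u

section WeightedHomogeneous

variable {ι K B : Type*} [CommSemiring K] [CommSemiring B] [Algebra K B]

lemma coeff_aeval_C_mul_X_pow (w : ι → ℕ) (a : ι → B) (P : MvPolynomial ι K) (k : ℕ) :
    (aeval (fun s => Polynomial.C (a s) * Polynomial.X ^ w s) P).coeff k =
      aeval a (weightedHomogeneousComponent w k P) := by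
  classical
  induction P using MvPolynomial.induction_on' with
  | monomial A r =>
    have scaled : aeval (fun s => Polynomial.C (a s) * Polynomial.X ^ w s) (monomial A r) =
        Polynomial.C (aeval a (monomial A r)) * Polynomial.X ^ Finsupp.weight w A := by
      simp only [aeval_monomial, Finsupp.prod, Finsupp.weight_apply, Finsupp.sum, mul_pow, map_mul,
        map_prod, map_pow, ← pow_mul, Finset.prod_mul_distrib, Finset.prod_pow_eq_pow_sum,
        smul_eq_mul, mul_comm (w _), Polynomial.algebraMap_apply, mul_assoc]
    rw [scaled, Polynomial.coeff_C_mul_X_pow,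
      weightedHomogeneousComponent_of_mem (isWeightedHomogeneous_monomial w A r rfl)]
    split_ifs <;> simp
  | add P Q hP hQ => simp only [map_add, Polynomial.coeff_add, hP, hQ]

lemma natDegree_aeval_le_of_isWeightedHomogeneous {w : ι → ℕ} {P : MvPolynomial ι K} {k : ℕ}
    (hP : IsWeightedHomogeneous w P k) {g : ι → Polynomial B}
    (hg : ∀ s, (g s).natDegree ≤ w s) : (aeval g P).natDegree ≤ k := by
  rw [aeval_def, eval₂_eq]
  refine Polynomial.natDegree_sum_le_of_forall_le _ _ fun A hA => ?_
  rw [Polynomial.algebraMap_apply]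
  refine (Polynomial.natDegree_C_mul_le _ _).trans ((Polynomial.natDegree_prod_le _ _).trans ?_)
  rw [← hP (mem_support_iff.mp hA), Finsupp.weight_apply]
  exact Finset.sum_le_sum fun s _ =>
    Polynomial.natDegree_pow_le.trans (Nat.mul_le_mul_left _ (hg s))

end WeightedHomogeneous

section Forms

variable {n : ℕ} {B : Type*} [CommSemiring B]

/-- The value at `x` of the form `Σ_{|α| = e} c_α x^α` of degree `e`. -/
def evalForm (e : ℕ) (c : (Fin n → ℕ) → B) (x : Fin n → B) : B :=
  ∑ α ∈ Finset.Nat.antidiagonalTuple n e, c α * ∏ l, x l ^ α l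

lemma pow_mul_prod_update_one_pow (y : Fin n → B) (j : Fin n) (α : Fin n → ℕ) :
    y j ^ α j * ∏ l, Function.update y j 1 l ^ α l = ∏ l, y l ^ α l := by
  rw [← Finset.mul_prod_erase _ _ (Finset.mem_univ j),
    ← Finset.mul_prod_erase _ (fun l => y l ^ α l) (Finset.mem_univ j), Function.update_self,
    one_pow, one_mul]
  congr 1
  exact Finset.prod_congr rfl fun l hl => by
    rw [Function.update_of_ne (Finset.ne_of_mem_erase hl)]

lemma prod_update_one_pow_update (y : Fin n → B) (j : Fin n) (α : Fin n → ℕ) (k : ℕ) :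
    ∏ l, Function.update y j 1 l ^ Function.update α j k l =
      ∏ l, Function.update y j 1 l ^ α l :=
  Finset.prod_congr rfl fun l _ => by
    rcases eq_or_ne l j with rfl | hl
    · simp only [Function.update_self, one_pow]
    · simp only [Function.update_of_ne hl]

lemma evalForm_rescale (e : ℕ) (c : (Fin n → ℕ) → B) {x : Fin n → B} {j : Fin n} (hx : x j = 1) :
    evalForm e (fun α => Polynomial.C (c α) * Polynomial.X ^ α j)
        (Function.update (fun l => Polynomial.C (x l) * Polynomial.X) j 1) =
      Polynomial.C (evalForm e c x) * Polynomial.X ^ e := by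
  simp only [evalForm, map_sum, Finset.sum_mul]
  refine Finset.sum_congr rfl fun α hα => ?_
  have key := pow_mul_prod_update_one_pow
    (fun l => Polynomial.C (x l) * (Polynomial.X : Polynomial B)) j α
  rw [hx, map_one, one_mul] at key
  rw [mul_assoc, key]
  simp only [mul_pow, Finset.prod_mul_distrib, Finset.prod_pow_eq_pow_sum,
    Finset.Nat.mem_antidiagonalTuple.mp hα, map_mul, map_prod, map_pow, mul_assoc]

end Forms

section Vanishing

variable {m n : ℕ} {K : Type u} [CommRing K]

/-- `P` vanishes on every system of forms of degrees `d`, with coefficients in any `K`-algebra,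
that has a zero in the affine chart `x_j = 1`. Allowing all algebras, rather than fields, makes it
possible to test `P` on a tautological zero. -/
def VanishesOnChart (d : Fin m → ℕ) (j : Fin n) (P : MvPolynomial (Fin m × (Fin n → ℕ)) K) :
    Prop :=
  ∀ ⦃B : Type u⦄ [CommRing B] [Algebra K B] (a : Fin m × (Fin n → ℕ) → B) (x : Fin n → B),
    x j = 1 → (∀ i, evalForm (d i) (fun α => a (i, α)) x = 0) → aeval a P = 0

lemma IsIFDZ.vanishesOnChart {d : Fin m → ℕ} {R : MvPolynomial (Fin m × (Fin n → ℕ)) ℚ}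
    (hR : IsIFDZ m n d R) (j : Fin n) : VanishesOnChart d j R := by
  intro B _ _ a x hx ha
  obtain ⟨q, hq⟩ := hR
  let φ : MvPolynomial (Var m n) ℚ →ₐ[ℚ] B := aeval (Sum.elim a x)
  have span_le_ker : Ideal.span (Set.range (genForm m n d)) ≤ RingHom.ker φ := by
    rw [Ideal.span_le]
    rintro _ ⟨i, rfl⟩
    simpa [φ, genForm, evalForm] using ha i
  have xPow_eq_one : φ (xPow m n (Pi.single j q)) = 1 := by
    simp only [φ, xPow, map_prod, map_pow, aeval_X, Sum.elim_inr]
    refine Finset.prod_eq_one fun l _ => ?_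
    rcases eq_or_ne l j with rfl | hl
    · rw [hx, one_pow]
    · rw [Pi.single_eq_of_ne hl, pow_zero]
  have hφ : φ (xPow m n (Pi.single j q) * rename Sum.inl R) = 0 :=
    span_le_ker (hq _ (by simp))
  rw [map_mul, xPow_eq_one, one_mul] at hφ
  simpa only [φ, aeval_rename, Sum.elim_comp_inl] using hφ

lemma VanishesOnChart.weightedHomogeneousComponent {d : Fin m → ℕ} {j : Fin n}
    {P : MvPolynomial (Fin m × (Fin n → ℕ)) K} (hP : VanishesOnChart d j P) (k : ℕ) :
    VanishesOnChart d j (weightedHomogeneousComponent (fun p => p.2 j) k P) := by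
  intro B _ _ a x hx ha
  rw [← coeff_aeval_C_mul_X_pow]
  have vanishes := hP (fun p => Polynomial.C (a p) * Polynomial.X ^ p.2 j)
    (Function.update (fun l => Polynomial.C (x l) * Polynomial.X) j 1) (Function.update_self ..)
    fun i => by rw [evalForm_rescale (d i) (fun α => a (i, α)) hx, ha i, map_zero, zero_mul]
  rw [vanishes, Polynomial.coeff_zero]

end Vanishing

section HomogenizeAt

variable {n : ℕ} {K : Type*} [CommRing K]

/-- The coefficients of the form of degree `e` obtained from `f(y)` by homogenizing with respect to
a new variable that takes the place of `y_j`, the old `y_j` becoming a parameter `t` in the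
coefficients: `y^β` turns into `t^{β_j} x^α`, where `α` agrees with `β` off `j` and `|α| = e`.
The subtraction is truncated, so this is meaningful only for `e ≥ deg f`. -/
noncomputable def homogenizeAt (j : Fin n) (e : ℕ) (f : MvPolynomial (Fin n) K)
    (α : Fin n → ℕ) : Polynomial K :=
  ∑ β ∈ f.support.filter fun β : Fin n →₀ ℕ =>
      Function.update β j (e - ∑ l ∈ Finset.univ.erase j, β l) = α,
    Polynomial.monomial (β j) (coeff β f)

lemma sum_le_of_mem_support {f : MvPolynomial (Fin n) K} {e : ℕ} (hf : f.totalDegree ≤ e)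
    {β : Fin n →₀ ℕ} (hβ : β ∈ f.support) (j : Fin n) :
    β j + ∑ l ∈ Finset.univ.erase j, β l ≤ e := by
  rw [Finset.add_sum_erase _ _ (Finset.mem_univ j)]
  refine le_trans (le_of_eq ?_) ((le_totalDegree hβ).trans hf)
  rw [Finsupp.sum_fintype _ _ fun _ => rfl]

lemma natDegree_homogenizeAt_le {f : MvPolynomial (Fin n) K} {e : ℕ} (hf : f.totalDegree ≤ e)
    (j : Fin n) (α : Fin n → ℕ) : (homogenizeAt j e f α).natDegree ≤ α j := by
  refine Polynomial.natDegree_sum_le_of_forall_le _ _ fun β hβ => ?_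
  obtain ⟨mem_support, rfl⟩ := Finset.mem_filter.mp hβ
  refine (Polynomial.natDegree_monomial_le _).trans ?_
  rw [Function.update_self]
  exact Nat.le_sub_of_add_le (sum_le_of_mem_support hf mem_support j)

lemma evalForm_homogenizeAt {B : Type*} [CommRing B] [Algebra K B] {f : MvPolynomial (Fin n) K}
    {e : ℕ} (hf : f.totalDegree ≤ e) (j : Fin n) (y : Fin n → B) :
    evalForm e (fun α => Polynomial.aeval (y j) (homogenizeAt j e f α)) (Function.update y j 1) =
      aeval y f := by
  have maps_to : ∀ β ∈ f.support, Function.update (⇑β) j (e - ∑ l ∈ Finset.univ.erase j, β l) ∈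
      Finset.Nat.antidiagonalTuple n e := fun β hβ => by
    rw [Finset.Nat.mem_antidiagonalTuple, ← Finset.add_sum_erase _ _ (Finset.mem_univ j),
      Function.update_self, Finset.sum_congr rfl fun l hl =>
        Function.update_of_ne (Finset.ne_of_mem_erase hl) _ _]
    exact Nat.sub_add_cancel ((Nat.le_add_left _ _).trans (sum_le_of_mem_support hf hβ j))
  rw [aeval_def, eval₂_eq', ← Finset.sum_fiberwise_of_maps_to maps_to, evalForm]
  refine Finset.sum_congr rfl fun α _ => ?_
  rw [homogenizeAt, map_sum, Finset.sum_mul]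
  refine Finset.sum_congr rfl fun β hβ => ?_
  rw [← (Finset.mem_filter.mp hβ).2, prod_update_one_pow_update, Polynomial.aeval_monomial,
    mul_assoc, pow_mul_prod_update_one_pow]

end HomogenizeAt

section Descent

variable {D Q : Type*} [CommRing D] [CommRing Q]

lemma eq_zero_of_map_eq_zero_of_injective_at_zero {N : ℕ}
    (φ : Polynomial (Polynomial D) →+* Polynomial Q)
    (hX : φ (Polynomial.C Polynomial.X) = Polynomial.X)
    (hinj : ∀ p : Polynomial (Polynomial D), p.degree < N → (φ p).coeff 0 = 0 →
      p.map Polynomial.constantCoeff = 0)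
    {p : Polynomial (Polynomial D)} (hdeg : p.degree < N) (hp : φ p = 0) : p = 0 := by
  have coeff_coeff_eq_zero (r : ℕ) : ∀ q : Polynomial (Polynomial D), q.degree < N → φ q = 0 →
      ∀ l, (q.coeff l).coeff r = 0 := by
    induction r with
    | zero =>
      intro q hq hφq l
      have map_eq_zero := hinj q hq (by rw [hφq, Polynomial.coeff_zero])
      simpa using congr_arg (Polynomial.coeff · l) map_eq_zero
    | succ r ih =>
      intro q hq hφq l
      have map_eq_zero := hinj q hq (by rw [hφq, Polynomial.coeff_zero])
      obtain ⟨q', rfl⟩ : Polynomial.C Polynomial.X ∣ q :=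
        (Polynomial.C_dvd_iff_dvd_coeff _ _).mpr fun l => Polynomial.X_dvd_iff.mpr <| by
          simpa using congr_arg (Polynomial.coeff · l) map_eq_zero
      have hq' : q'.degree < N := by
        rw [Polynomial.degree_lt_iff_coeff_zero] at hq ⊢
        exact fun l hl => Polynomial.isRegular_X.left (by simpa using hq l hl)
      have hφq' : φ q' = 0 :=
        Polynomial.isRegular_X.left (by simpa [hX] using hφq)
      simpa using ih q' hq' hφq' l
  ext l r
  simpa using coeff_coeff_eq_zero r p hdeg hp l

end Descent

section Tower

variable {n : ℕ} (K : Type*) [CommRing K]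

/-- The iterated powers `y₀ = t`, `y_{i+1} = y_i ^ d_i + z_i`, as polynomials in `t` with
coefficients in `K[z]`. Modulo `y_n` they solve the system `y_i ^ d_i = y_{i+1} - z_i` (`i < n`),
`y_n = 0`, an explicit perturbation of a system whose only zero is the origin, with the
Bézout multiplicity `∏ d_i`. -/
noncomputable def tower (d : Fin n → ℕ) : Fin (n + 1) → Polynomial (MvPolynomial (Fin n) K) :=
  Fin.induction Polynomial.X fun i Y => Y ^ d i + Polynomial.C (X i)

lemma tower_zero (d : Fin n → ℕ) : tower K d 0 = Polynomial.X := rfl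

lemma tower_succ (d : Fin n → ℕ) (i : Fin n) :
    tower K d i.succ = tower K d i.castSucc ^ d i + Polynomial.C (X i) := rfl

variable [Nontrivial K] {d : Fin n → ℕ}

lemma monic_tower_and_natDegree (hd : ∀ i, 1 ≤ d i) (i : Fin (n + 1)) :
    (tower K d i).Monic ∧ (tower K d i).natDegree = Fin.partialProd d i := by
  induction i using Fin.induction with
  | zero => simp [tower_zero]
  | succ i ih =>
    have pow_monic := ih.1.pow (d i)
    have pow_natDegree : (tower K d i.castSucc ^ d i).natDegree = Fin.partialProd d i.succ := by
      rw [ih.1.natDegree_pow, ih.2, Fin.partialProd_succ, mul_comm]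
    have partialProd_pos : 0 < Fin.partialProd d i.succ :=
      List.prod_pos fun e he => by
        obtain ⟨l, rfl⟩ := List.mem_ofFn.mp (List.mem_of_mem_take he)
        exact hd l
    rw [tower_succ, Polynomial.natDegree_add_C]
    refine ⟨pow_monic.add_of_left (Polynomial.degree_C_le.trans_lt ?_), pow_natDegree⟩
    rwa [← Polynomial.natDegree_pos_iff_degree_pos, pow_natDegree]

lemma natDegree_tower_last (hd : ∀ i, 1 ≤ d i) :
    (tower K d (Fin.last n)).natDegree = ∏ i, d i := by
  rw [(monic_tower_and_natDegree K hd _).2, Fin.partialProd, Fin.val_last,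
    List.take_of_length_le (by simp), List.prod_ofFn]

lemma eq_zero_of_mk_tower_eq_zero (hd : ∀ i, 1 ≤ d i)
    {q : Polynomial (MvPolynomial (Fin n) K)} (hdeg : q.degree < (∏ i, d i : ℕ))
    (hq : AdjoinRoot.mk (tower K d (Fin.last n)) q = 0) : q = 0 := by
  have monic := (monic_tower_and_natDegree K hd (Fin.last n)).1
  by_contra q_ne_zero
  refine monic.not_dvd_of_degree_lt q_ne_zero ?_ (AdjoinRoot.mk_eq_zero.mp hq)
  rwa [Polynomial.degree_eq_natDegree monic.ne_zero, natDegree_tower_last K hd]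

end Tower

section Deformation

variable {n : ℕ} {K : Type*} [CommRing K]

/-- The system `(1 - ε) fᵢ + ε bᵢ + zᵢ` in `K[z][ε][t]`, where `fᵢ` is homogenized at `y_j = t` and
the constant `zᵢ` is attached to the monomial `x_j ^ dᵢ`. It joins `f + z` (at `ε = 0`) to an
arbitrary system `b` (at `ε = 1`, `z = 0`). -/
noncomputable def deformation (d : Fin n → ℕ) (j : Fin n) (f : Fin n → MvPolynomial (Fin n) K)
    (b : Fin n × (Fin n → ℕ) → K) (p : Fin n × (Fin n → ℕ)) :
    Polynomial (Polynomial (MvPolynomial (Fin n) K)) :=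
  Polynomial.C (1 - Polynomial.X) *
      Polynomial.aeval Polynomial.X (homogenizeAt j (d p.1) (f p.1) p.2) +
    Polynomial.C Polynomial.X * algebraMap K _ (b p) +
    if p.2 = Pi.single j (d p.1) then Polynomial.C (Polynomial.C (X p.1)) else 0

lemma natDegree_deformation_le {d : Fin n → ℕ} (j : Fin n) {f : Fin n → MvPolynomial (Fin n) K}
    (hf : ∀ i, (f i).totalDegree ≤ d i) (b : Fin n × (Fin n → ℕ) → K)
    (p : Fin n × (Fin n → ℕ)) : (deformation d j f b p).natDegree ≤ p.2 j := by
  refine Polynomial.natDegree_add_le_of_degree_le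
    (Polynomial.natDegree_add_le_of_degree_le ?_ ?_) ?_
  · rw [Polynomial.aeval_X_left_eq_map]
    exact (Polynomial.natDegree_C_mul_le _ _).trans
      (Polynomial.natDegree_map_le.trans (natDegree_homogenizeAt_le (hf _) j _))
  · refine (Polynomial.natDegree_C_mul_le _ _).trans ?_
    rw [Polynomial.algebraMap_apply, Polynomial.natDegree_C]
    exact Nat.zero_le _
  · split_ifs <;> simp

lemma evalForm_map_deformation {B : Type*} [CommRing B] [Algebra K B] {d : Fin n → ℕ} {j : Fin n}
    {f : Fin n → MvPolynomial (Fin n) K} (hf : ∀ i, (f i).totalDegree ≤ d i)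
    (b : Fin n × (Fin n → ℕ) → K)
    (φ : Polynomial (Polynomial (MvPolynomial (Fin n) K)) →ₐ[K] B) {y : Fin n → B}
    (hy : φ Polynomial.X = y j) (i : Fin n) :
    evalForm (d i) (fun α => φ (deformation d j f b (i, α))) (Function.update y j 1) =
      φ (Polynomial.C (1 - Polynomial.X)) * aeval y (f i) +
        φ (Polynomial.C Polynomial.X) *
          evalForm (d i) (fun α => algebraMap K B (b (i, α))) (Function.update y j 1) +
        φ (Polynomial.C (Polynomial.C (X i))) := by
  have single_mem : Pi.single j (d i) ∈ Finset.Nat.antidiagonalTuple n (d i) :=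
    Finset.Nat.mem_antidiagonalTuple.mpr (by simp)
  have prod_single : ∏ l, Function.update y j 1 l ^ (Pi.single j (d i) : Fin n → ℕ) l = 1 :=
    Finset.prod_eq_one fun l _ => by
      rcases eq_or_ne l j with rfl | hl
      · rw [Function.update_self, one_pow]
      · rw [Pi.single_eq_of_ne hl, pow_zero]
  rw [← evalForm_homogenizeAt (hf i) j y]
  simp only [evalForm, deformation, map_add, map_mul, AlgHom.commutes,
    ← Polynomial.aeval_algHom_apply, hy, add_mul, Finset.sum_add_distrib, Finset.mul_sum,
    mul_assoc, apply_ite φ, map_zero, ite_mul, zero_mul, Finset.sum_ite_eq', single_mem, if_true,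
    prod_single, mul_one]

/-- The `K`-algebra homomorphism with `z ↦ ζ`, `ε ↦ e`, `t ↦ τ`. -/
noncomputable def specialize {B : Type*} [CommRing B] [Algebra K B] (ζ : Fin n → B) (e τ : B) :
    Polynomial (Polynomial (MvPolynomial (Fin n) K)) →ₐ[K] B :=
  Polynomial.aevalTower (Polynomial.aevalTower (aeval ζ) e) τ

lemma specialize_zero_one_deformation (d : Fin n → ℕ) (j : Fin n)
    (f : Fin n → MvPolynomial (Fin n) K) (b : Fin n × (Fin n → ℕ) → K) (τ : K)
    (p : Fin n × (Fin n → ℕ)) : specialize 0 1 τ (deformation d j f b p) = b p := by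
  rw [deformation, map_add, map_add, map_mul, map_mul, AlgHom.commutes,
    apply_ite (specialize 0 1 τ)]
  simp [specialize]

end Deformation

section TriangularSystem

variable {n : ℕ} {K : Type u} [CommRing K]

/-- The polynomials `x_{σ i} ^ d_i - x_{σ (i + 1)}`, the variable after the last one being
`0`. -/
noncomputable def triangularSystem (d : Fin n → ℕ) (σ : Equiv.Perm (Fin n)) (i : Fin n) :
    MvPolynomial (Fin n) K :=
  X (σ i) ^ d i -
    Fin.snoc (α := fun _ => MvPolynomial (Fin n) K) (fun l => X (σ l)) 0 i.succ

lemma totalDegree_triangularSystem_le [Nontrivial K] {d : Fin n → ℕ} (hd : ∀ i, 1 ≤ d i)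
    (σ : Equiv.Perm (Fin n)) (i : Fin n) :
    (triangularSystem d σ i : MvPolynomial (Fin n) K).totalDegree ≤ d i := by
  refine (totalDegree_sub _ _).trans (max_le (totalDegree_X_pow _ _).le ?_)
  refine Fin.lastCases ?_ (fun l => ?_) i.succ
  · rw [Fin.snoc_last, totalDegree_zero]
    exact Nat.zero_le _
  · rw [Fin.snoc_castSucc, totalDegree_X]
    exact hd i

/-- The ring over which `triangularSystem d σ + z` acquires its generic zero; it is free of rank
`∏ d_i` over `K[z]`. -/
abbrev TowerQuotient (K : Type u) [CommRing K] (d : Fin n → ℕ) : Type u :=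
  AdjoinRoot (tower K d (Fin.last n))

/-- The generic zero of `triangularSystem d σ + z`. -/
noncomputable def towerZero (K : Type u) [CommRing K] (d : Fin n → ℕ) (σ : Equiv.Perm (Fin n))
    (l : Fin n) : TowerQuotient K d :=
  AdjoinRoot.mk _ (tower K d (σ.symm l).castSucc)

lemma towerZero_eq_root (d : Fin n → ℕ) {σ : Equiv.Perm (Fin n)} {j : Fin n}
    (hσ : (σ.symm j : ℕ) = 0) : towerZero K d σ j = AdjoinRoot.root _ := by
  have castSucc_eq_zero : (σ.symm j).castSucc = 0 := Fin.ext hσ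
  rw [towerZero, castSucc_eq_zero, tower_zero, AdjoinRoot.mk_X]

lemma aeval_triangularSystem_towerZero (d : Fin n → ℕ) (σ : Equiv.Perm (Fin n)) (i : Fin n) :
    aeval (towerZero K d σ) (triangularSystem d σ i : MvPolynomial (Fin n) K) =
      -AdjoinRoot.mk _ (Polynomial.C (X i)) := by
  have aeval_snoc (l : Fin (n + 1)) : aeval (towerZero K d σ)
      (Fin.snoc (α := fun _ => MvPolynomial (Fin n) K) (fun l => X (σ l)) 0 l) =
        AdjoinRoot.mk _ (tower K d l) := by
    refine Fin.lastCases ?_ (fun l => ?_) l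
    · rw [Fin.snoc_last, map_zero, AdjoinRoot.mk_self]
    · rw [Fin.snoc_castSucc, aeval_X, towerZero, Equiv.symm_apply_apply]
  rw [triangularSystem, map_sub, aeval_snoc, map_pow, aeval_X, towerZero, Equiv.symm_apply_apply,
    tower_succ, map_add, map_pow, sub_add_cancel_left]

lemma coeff_zero_specialize_root (d : Fin n → ℕ)
    {ζ : Fin n → Polynomial (TowerQuotient K d)}
    (hζ : ∀ i, (ζ i).coeff 0 = AdjoinRoot.mk _ (Polynomial.C (X i)))
    (p : Polynomial (Polynomial (MvPolynomial (Fin n) K))) :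
    (specialize ζ Polynomial.X (Polynomial.C (AdjoinRoot.root _)) p).coeff 0 =
      AdjoinRoot.mk (tower K d (Fin.last n)) (p.map Polynomial.constantCoeff) := by
  suffices hom_eq : Polynomial.constantCoeff.comp
      (specialize ζ Polynomial.X (Polynomial.C (AdjoinRoot.root _))).toRingHom =
      (AdjoinRoot.mk (tower K d (Fin.last n))).comp
        (Polynomial.mapRingHom Polynomial.constantCoeff) from RingHom.congr_fun hom_eq p
  ext
  · simp only [specialize, AlgHom.toRingHom_eq_coe, RingHom.coe_comp, RingHom.coe_coe,
      Function.comp_apply, Polynomial.aevalTower_C, algHom_C, Polynomial.algebraMap_apply,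
      Polynomial.constantCoeff_apply, Polynomial.coeff_C_zero, Polynomial.coe_mapRingHom,
      Polynomial.map_C, AdjoinRoot.mk_C]
    rfl
  · simp [specialize, hζ]
  · simp [specialize]
  · simp [specialize]

end TriangularSystem

section WeightBound

variable {n : ℕ} {K : Type u} [CommRing K]

lemma VanishesOnChart.aeval_deformation_eq_zero [Nontrivial K] {d : Fin n → ℕ}
    (hd : ∀ i, 1 ≤ d i) {j : Fin n} {σ : Equiv.Perm (Fin n)} (hσ : (σ.symm j : ℕ) = 0)
    {P : MvPolynomial (Fin n × (Fin n → ℕ)) K} (hP : VanishesOnChart d j P) {k : ℕ}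
    (hPk : IsWeightedHomogeneous (fun p => p.2 j) P k) (hk : k < ∏ i, d i)
    (b : Fin n × (Fin n → ℕ) → K) :
    aeval (deformation d j (triangularSystem d σ) b) P = 0 := by
  let y : Fin n → Polynomial (TowerQuotient K d) := fun l => Polynomial.C (towerZero K d σ l)
  let ζ (i : Fin n) : Polynomial (TowerQuotient K d) :=
    -((1 - Polynomial.X) * aeval y (triangularSystem d σ i : MvPolynomial (Fin n) K) +
      Polynomial.X *
        evalForm (d i) (fun α => algebraMap K _ (b (i, α))) (Function.update y j 1))
  let φ := specialize (K := K) ζ Polynomial.X (y j)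
  have aeval_y (f : MvPolynomial (Fin n) K) :
      aeval y f = Polynomial.C (aeval (towerZero K d σ) f) :=
    (comp_aeval_apply _ (Polynomial.CAlgHom (R := K) (A := TowerQuotient K d)) f).symm
  have coeff_zero_ζ (i : Fin n) : (ζ i).coeff 0 = AdjoinRoot.mk _ (Polynomial.C (X i)) := by
    simp [ζ, aeval_y, aeval_triangularSystem_towerZero]
  refine eq_zero_of_map_eq_zero_of_injective_at_zero (N := ∏ i, d i) φ.toRingHom ?_ ?_ ?_ ?_
  · simp [φ, specialize]
  · intro p hp hφp
    refine eq_zero_of_mk_tower_eq_zero K hd (Polynomial.degree_map_le.trans_lt hp) ?_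
    rw [← coeff_zero_specialize_root d coeff_zero_ζ p, ← towerZero_eq_root d hσ]
    exact hφp
  · refine Polynomial.degree_le_natDegree.trans_lt (Nat.cast_lt.mpr (lt_of_le_of_lt ?_ hk))
    exact natDegree_aeval_le_of_isWeightedHomogeneous hPk
      (natDegree_deformation_le j (totalDegree_triangularSystem_le hd σ) b)
  · refine (comp_aeval_apply (deformation d j (triangularSystem d σ) b) φ P).trans
      (hP _ (Function.update y j 1) (Function.update_self ..) fun i => ?_)
    rw [evalForm_map_deformation (totalDegree_triangularSystem_le hd σ) b φ (y := y)
      (by simp [φ, specialize])]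
    simp [φ, specialize, ζ]

lemma VanishesOnChart.eq_zero_of_isWeightedHomogeneous [IsDomain K] [Infinite K] {d : Fin n → ℕ}
    (hd : ∀ i, 1 ≤ d i) {j : Fin n} {P : MvPolynomial (Fin n × (Fin n → ℕ)) K}
    (hP : VanishesOnChart d j P) {k : ℕ} (hPk : IsWeightedHomogeneous (fun p => p.2 j) P k)
    (hk : k < ∏ i, d i) : P = 0 := by
  have : NeZero n := ⟨j.pos.ne'⟩
  refine MvPolynomial.funext fun b => ?_
  have specialized := comp_aeval_apply (deformation d j (triangularSystem d (Equiv.swap 0 j)) b)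
    (specialize 0 1 (0 : K)) P
  rw [hP.aeval_deformation_eq_zero hd (by simp) hPk hk, map_zero] at specialized
  simpa only [specialize_zero_one_deformation, map_zero, ← coe_aeval_eq_eval, RingHom.coe_coe]
    using specialized.symm

lemma VanishesOnChart.prod_le_weight [IsDomain K] [Infinite K] {d : Fin n → ℕ} {j : Fin n}
    {P : MvPolynomial (Fin n × (Fin n → ℕ)) K} (hP : VanishesOnChart d j P)
    {A : (Fin n × (Fin n → ℕ)) →₀ ℕ} (hA : coeff A P ≠ 0) :
    ∏ i, d i ≤ ∑ p ∈ A.support, A p * p.2 j := by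
  by_cases hd : ∀ i, 1 ≤ d i
  · by_contra! weight_lt
    have component_eq_zero := (hP.weightedHomogeneousComponent _).eq_zero_of_isWeightedHomogeneous
      hd (weightedHomogeneousComponent_isWeightedHomogeneous _ _) weight_lt
    classical
    have coeff_eq := coeff_weightedHomogeneousComponent (w := fun p : Fin n × (Fin n → ℕ) => p.2 j)
      (∑ p ∈ A.support, A p * p.2 j) P A
    rw [component_eq_zero, coeff_zero,
      if_pos (by simp only [Finsupp.weight_apply, Finsupp.sum, smul_eq_mul])] at coeff_eq
    exact hA coeff_eq.symm
  · push Not at hd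
    obtain ⟨i, hi⟩ := hd
    rw [Finset.prod_eq_zero (Finset.mem_univ i) (by lia)]
    exact Nat.zero_le _

end WeightBound

lemma sum_weight_eq_sum_mul_rowSum {n : ℕ} {d : Fin n → ℕ} {A : (Fin n × (Fin n → ℕ)) →₀ ℕ}
    (hA : ∀ i α, A (i, α) ≠ 0 → ∑ j, α j = d i) :
    ∑ j, ∑ p ∈ A.support, A p * p.2 j =
      ∑ i, d i * ∑ p ∈ A.support, if p.1 = i then A p else 0 := by
  simp only [Finset.mul_sum]
  refine Finset.sum_comm.trans (Eq.trans ?_ Finset.sum_comm)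
  refine Finset.sum_congr rfl fun p hp => ?_
  rw [← Finset.mul_sum, hA p.1 p.2 (Finsupp.mem_support_iff.mp hp), mul_comm]
  simp only [mul_ite, mul_zero, Finset.sum_ite_eq, Finset.mem_univ, if_true]

theorem coeff_eq_zero_of_unbalanced_weight_general (n : ℕ) (d : Fin n → ℕ)
    (R : MvPolynomial (Fin n × (Fin n → ℕ)) ℚ)
    (hIF : IsIFDZ n n d R)
    (A : (Fin n × (Fin n → ℕ)) →₀ ℕ)
    (hAsupp : ∀ i α, A (i, α) ≠ 0 → ∑ j, α j = d i)
    (hARow : ∀ i, (∑ p ∈ A.support, if p.1 = i then A p else 0)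
      = ∏ j ∈ Finset.univ.erase i, d j)
    (hAwt : (fun j : Fin n => ∑ p ∈ A.support, A p * p.2 j) ≠ (fun _ => ∏ i, d i)) :
    MvPolynomial.coeff A R = 0 := by
  by_contra hA
  have prod_le (j : Fin n) (_ : j ∈ Finset.univ) : ∏ i, d i ≤ ∑ p ∈ A.support, A p * p.2 j :=
    (hIF.vanishesOnChart j).prod_le_weight hA
  have sum_eq : ∑ _j : Fin n, ∏ i, d i = ∑ j, ∑ p ∈ A.support, A p * p.2 j := by
    simp only [sum_weight_eq_sum_mul_rowSum hAsupp, hARow,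
      Finset.mul_prod_erase _ d (Finset.mem_univ _)]
  refine hAwt (funext fun j => ?_)
  exact ((Finset.sum_eq_sum_iff_of_le prod_le).mp sum_eq j (Finset.mem_univ j)).symm

/-- Let `δᵢ = ∏_{j ≠ i} d_j` be the canonical multidegree and let `R`
be an inertia form of degree zero for the format `(n, n, (d₁,…,d_n))` which is
multihomogeneous of multidegree `δ`. If `A` is an effective filling of the diagram
(`A (i,α) ≠ 0 → |α| = dᵢ`) with row sums `Rowᵢ(A) = δᵢ` whose weight vector
`wt(A) = Σ_{(i,α)} A_{i,α}·α` is not `d₁⋯d_n·(1,…,1)`, then the coefficient of the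
monomial `a^A` in `R` is zero. -/
theorem coeff_eq_zero_of_unbalanced_weight (n : ℕ) (hn : 1 ≤ n)
    (d : Fin n → ℕ) (hd : ∀ i, 1 ≤ d i)
    (R : MvPolynomial (Fin n × (Fin n → ℕ)) ℚ)
    (hIF : IsIFDZ n n d R)
    (hMH : MultiHom n n d (fun i => ∏ j ∈ Finset.univ.erase i, d j) R)
    (A : (Fin n × (Fin n → ℕ)) →₀ ℕ)
    (hAsupp : ∀ i α, A (i, α) ≠ 0 → ∑ j, α j = d i)
    (hARow : ∀ i, (∑ p ∈ A.support, if p.1 = i then A p else 0)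
      = ∏ j ∈ Finset.univ.erase i, d j)
    (hAwt : (fun j : Fin n => ∑ p ∈ A.support, A p * p.2 j) ≠ (fun _ => ∏ i, d i)) :
    MvPolynomial.coeff A R = 0 :=
  coeff_eq_zero_of_unbalanced_weight_general n d R hIF A hAsupp hARow hAwt
end

section
/- Let n ≥ 2, d₁,…,d_n ≥ 1, and let δ ∈ ℕⁿ satisfy δ₁ < d₂⋯d_n. Let A ∈ EF(δ), set M := P_T(1_E A) and C := 1_{D∖E}A + M. Suppose M̃ : D → ℕ satisfies M̃ ≤ C pointwise and the weight condition wt(P_E(M̃)) − wt(M̃) = wt(P_E(M)) − wt(M) (an equality in ℤⁿ), and set Ã := C − M̃ + P_E(M̃). If Ã ≠ A, then Z(Ã) < Z(A). -/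
/-!
The correction `M̃` lowers the counter by exactly `Z(M̃)`, because `C` agrees with `A` outside
`E ∪ T` and `P_E(M̃)` lives on `E`. So if the counter does not drop, then `Z(M̃) = 0`, and since
`C` vanishes on `E ∖ T`, both `M̃` and `M` are supported on `T`. For a filling with values `bᵢ` on
`T` and `0` elsewhere, the `j`-th coordinate of `wt(P_E(·)) − wt(·)` is `dⱼ bⱼ − bⱼ₋₁` for
`j ≥ 2`, so the weight condition says that the difference `x` of the values of `M̃` and `M` on `T`
satisfies `xⱼ₋₁ = dⱼ xⱼ`. Hence `d₂⋯dₙ` divides `x₁`, which is too small not to vanish, and then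
all of `x` vanishes. Therefore `M̃ = M`, and this choice gives back `Ã = A`.
-/

namespace ResultantKeyLemma

/-- The row `εᵢ* = dᵢ eᵢ` of the transversal matrix `ε` (monomial `xᵢ^{dᵢ}`). -/
def epsRow (n : ℕ) (d : Fin n → ℕ) (i : Fin n) : Fin n → ℕ :=
  fun j => if j = i then d i else 0

/-- The row `τᵢ* = (dᵢ − 1)e₁ + e_{i+1}` for `i < n`, and `τₙ* = dₙ e₁`, of the
transversal matrix `τ`. -/
def tauRow (n : ℕ) (d : Fin n → ℕ) (i : Fin n) : Fin n → ℕ :=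
  fun j =>
    if i.val + 1 < n then
      (if j.val = 0 then d i - 1 else 0) + (if j.val = i.val + 1 then 1 else 0)
    else
      (if j.val = 0 then d i else 0)

/-- The `i`-th row sum of a filling `A` of the diagram `D` (fillings are encoded as
functions on all pairs `(i, α)`; only the diagram cells, i.e. `α` with `|α| = dᵢ`,
matter). -/
def Row (n : ℕ) (d : Fin n → ℕ) (A : Fin n → (Fin n → ℕ) → ℕ) (i : Fin n) : ℕ :=
  ∑ α ∈ Finset.Nat.antidiagonalTuple n (d i), A i α

/-- The filling `1_E A`: restriction of `A` to the transversal `E`. -/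
def oneE (n : ℕ) (d : Fin n → ℕ) (A : Fin n → (Fin n → ℕ) → ℕ) :
    Fin n → (Fin n → ℕ) → ℕ :=
  fun i α => if α = epsRow n d i then A i α else 0

/-- The filling `1_{D∖E} A`: restriction of `A` to the complement of `E`. -/
def oneDE (n : ℕ) (d : Fin n → ℕ) (A : Fin n → (Fin n → ℕ) → ℕ) :
    Fin n → (Fin n → ℕ) → ℕ :=
  fun i α => if α = epsRow n d i then 0 else A i α

/-- The push `P_E(A)` of a filling to the transversal `E`. -/
def pushE (n : ℕ) (d : Fin n → ℕ) (A : Fin n → (Fin n → ℕ) → ℕ) :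
    Fin n → (Fin n → ℕ) → ℕ :=
  fun i α => if α = epsRow n d i then Row n d A i else 0

/-- The push `P_T(A)` of a filling to the transversal `T`. -/
def pushT (n : ℕ) (d : Fin n → ℕ) (A : Fin n → (Fin n → ℕ) → ℕ) :
    Fin n → (Fin n → ℕ) → ℕ :=
  fun i α => if α = tauRow n d i then Row n d A i else 0

/-- The weight vector `wt(A) = Σ_{(i,α) ∈ D} A_{i,α}·α`, valued in `ℤⁿ`. -/
def wtZ (n : ℕ) (d : Fin n → ℕ) (A : Fin n → (Fin n → ℕ) → ℕ) (j : Fin n) : ℤ :=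
  ∑ i, ∑ α ∈ Finset.Nat.antidiagonalTuple n (d i), (A i α : ℤ) * (α j : ℤ)

/-- The counter `Z(A) = Σ_{(i,α) ∈ D∖(E∪T)} A_{i,α}`. -/
def Zc (n : ℕ) (d : Fin n → ℕ) (A : Fin n → (Fin n → ℕ) → ℕ) : ℕ :=
  ∑ i, ∑ α ∈ Finset.Nat.antidiagonalTuple n (d i),
    if α = epsRow n d i ∨ α = tauRow n d i then 0 else A i α

/-- Fillings, extended to all pairs `(i, α)`; the diagram consists of the pairs with `|α| = dᵢ`. -/
abbrev Filling (n : ℕ) : Type := Fin n → (Fin n → ℕ) → ℕ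

/-- The filling `B` vanishes outside the transversal `{(i, S i)}`. -/
def SupportedOn {n : ℕ} (S : Fin n → Fin n → ℕ) (B : Filling n) : Prop :=
  ∀ i α, α ≠ S i → B i α = 0

/-- The filling `C = 1_{D∖E} A + P_T(1_E A)`, which moves the content of `A` on `E` to `T`. -/
def moveToT (n : ℕ) (d : Fin n → ℕ) (A : Filling n) : Filling n :=
  oneDE n d A + pushT n d (oneE n d A)

/-- The filling `Ã = C − M̃ + P_E(M̃)`, with `M'` for `M̃`. The subtraction truncates, so this is
the intended filling only for `M̃ ≤ C`. -/
def exchange (n : ℕ) (d : Fin n → ℕ) (A M' : Filling n) : Filling n :=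
  moveToT n d A - M' + pushE n d M'

theorem prod_erase_zero {R : Type*} [CommMonoid R] {m : ℕ} (f : Fin (m + 1) → R) :
    ∏ j ∈ Finset.univ.erase 0, f j = ∏ k : Fin m, f k.succ := by
  simp [Fin.univ_succ]

theorem apply_zero_eq_prod_mul_apply_last {R : Type*} [CommMonoid R] {m : ℕ} {c : Fin m → R}
    {x : Fin (m + 1) → R} (hx : ∀ k, x k.castSucc = c k * x k.succ) :
    x 0 = (∏ k, c k) * x (Fin.last m) := by
  induction m with
  | zero => simp
  | succ m ih =>
    calc x 0 = (∏ k : Fin m, c k.castSucc) * x (Fin.last m).castSucc :=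
          ih (x := fun k => x k.castSucc) fun k => hx k.castSucc
      _ = (∏ k, c k) * x (Fin.last (m + 1)) := by
          rw [hx, Fin.prod_univ_castSucc, mul_assoc, Fin.succ_last]

theorem eq_zero_of_castSucc_eq_mul_of_abs_lt_prod {m : ℕ} {c : Fin m → ℤ} {x : Fin (m + 1) → ℤ}
    (hx : ∀ k, x k.castSucc = c k * x k.succ) (hlt : |x 0| < ∏ k, c k) : x = 0 := by
  have hc : ∏ k, c k ≠ 0 := ((abs_nonneg _).trans_lt hlt).ne'
  funext i
  induction i using Fin.induction with
  | zero => exact Int.eq_zero_of_abs_lt_dvd ⟨_, apply_zero_eq_prod_mul_apply_last hx⟩ hlt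
  | succ k ih =>
    rw [hx] at ih
    exact (mul_eq_zero.mp ih).resolve_left (Finset.prod_ne_zero_iff.mp hc k (Finset.mem_univ k))

section Fillings

variable {n : ℕ} {d : Fin n → ℕ} {A B M' : Filling n}

theorem epsRow_mem (i : Fin n) : epsRow n d i ∈ Finset.Nat.antidiagonalTuple n (d i) := by
  simp [Finset.Nat.mem_antidiagonalTuple, epsRow]

theorem tauRow_mem (hd : ∀ i, 1 ≤ d i) (i : Fin n) :
    tauRow n d i ∈ Finset.Nat.antidiagonalTuple n (d i) := by
  have sum_ite_val (l c : ℕ) (hl : l < n) : ∑ j : Fin n, (if j.val = l then c else 0) = c := by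
    simp [← Fin.ext_iff (b := ⟨l, hl⟩)]
  rw [Finset.Nat.mem_antidiagonalTuple]
  unfold tauRow
  split_ifs with hi
  · rw [Finset.sum_add_distrib, sum_ite_val _ _ i.pos, sum_ite_val _ _ hi,
      Nat.sub_add_cancel (hd i)]
  · exact sum_ite_val _ _ i.pos

theorem apply_le_row {i : Fin n} {α : Fin n → ℕ}
    (hα : α ∈ Finset.Nat.antidiagonalTuple n (d i)) : A i α ≤ Row n d A i :=
  Finset.single_le_sum_of_canonicallyOrdered hα

theorem pushE_epsRow (i : Fin n) : pushE n d B i (epsRow n d i) = Row n d B i := if_pos rfl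

theorem pushT_tauRow (i : Fin n) : pushT n d B i (tauRow n d i) = Row n d B i := if_pos rfl

theorem supportedOn_oneE : SupportedOn (epsRow n d) (oneE n d B) := fun _ _ hα => if_neg hα

theorem supportedOn_pushE : SupportedOn (epsRow n d) (pushE n d B) := fun _ _ hα => if_neg hα

theorem supportedOn_pushT : SupportedOn (tauRow n d) (pushT n d B) := fun _ _ hα => if_neg hα

namespace SupportedOn

variable {S : Fin n → Fin n → ℕ}

theorem ext (hA : SupportedOn S A) (hB : SupportedOn S B) (h : ∀ i, A i (S i) = B i (S i)) :
    A = B := by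
  funext i α
  by_cases hα : α = S i
  · rw [hα, h]
  · rw [hA i α hα, hB i α hα]

theorem row_eq (hB : SupportedOn S B) {i : Fin n}
    (hS : S i ∈ Finset.Nat.antidiagonalTuple n (d i)) : Row n d B i = B i (S i) :=
  Finset.sum_eq_single_of_mem _ hS fun α _ hα => hB i α hα

theorem wtZ_eq (hB : SupportedOn S B) (hS : ∀ i, S i ∈ Finset.Nat.antidiagonalTuple n (d i))
    (j : Fin n) : wtZ n d B j = ∑ i, (B i (S i) : ℤ) * S i j :=
  Finset.sum_congr rfl fun i _ =>
    Finset.sum_eq_single_of_mem _ (hS i) fun α _ hα => by simp [hB i α hα]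

end SupportedOn

theorem wtZ_pushE (j : Fin n) : wtZ n d (pushE n d B) j = d j * Row n d B j := by
  simp [supportedOn_pushE.wtZ_eq epsRow_mem, pushE_epsRow, epsRow, mul_comm]

theorem pushT_oneE_tauRow (i : Fin n) :
    pushT n d (oneE n d A) i (tauRow n d i) = A i (epsRow n d i) := by
  rw [pushT_tauRow, supportedOn_oneE.row_eq (epsRow_mem i), oneE, if_pos rfl]

theorem pushE_pushT_oneE (hd : ∀ i, 1 ≤ d i) :
    pushE n d (pushT n d (oneE n d A)) = oneE n d A :=
  supportedOn_pushE.ext supportedOn_oneE fun i => by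
    rw [pushE_epsRow, supportedOn_pushT.row_eq (tauRow_mem hd i), pushT_tauRow,
      supportedOn_oneE.row_eq (epsRow_mem i)]

theorem oneDE_add_oneE : oneDE n d A + oneE n d A = A := by
  funext i α
  by_cases hα : α = epsRow n d i <;> simp [oneDE, oneE, hα]

theorem exchange_pushT_oneE (hd : ∀ i, 1 ≤ d i) :
    exchange n d A (pushT n d (oneE n d A)) = A := by
  rw [exchange, moveToT, add_tsub_cancel_right, pushE_pushT_oneE hd, oneDE_add_oneE]

theorem moveToT_apply {i : Fin n} {α : Fin n → ℕ} (hε : α ≠ epsRow n d i)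
    (hτ : α ≠ tauRow n d i) : moveToT n d A i α = A i α := by
  simp [moveToT, oneDE, pushT, hε, hτ]

theorem moveToT_epsRow {i : Fin n} (h : epsRow n d i ≠ tauRow n d i) :
    moveToT n d A i (epsRow n d i) = 0 := by
  simp [moveToT, oneDE, pushT, h]

theorem moveToT_tauRow_le (i : Fin n) :
    moveToT n d A i (tauRow n d i) ≤ A i (tauRow n d i) + A i (epsRow n d i) := by
  simp only [moveToT, Pi.add_apply, pushT_oneE_tauRow, oneDE]
  split_ifs <;> simp

theorem zc_exchange_add_zc (hM' : M' ≤ moveToT n d A) :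
    Zc n d (exchange n d A M') + Zc n d M' = Zc n d A := by
  simp only [Zc, ← Finset.sum_add_distrib]
  refine Finset.sum_congr rfl fun i _ => Finset.sum_congr rfl fun α _ => ?_
  split_ifs with hα
  · rfl
  · obtain ⟨hε, hτ⟩ := not_or.mp hα
    have hle : M' i α ≤ A i α := (hM' i α).trans_eq (moveToT_apply hε hτ)
    simp [exchange, moveToT_apply hε hτ, supportedOn_pushE i α hε, Nat.sub_add_cancel hle]

theorem apply_eq_zero_of_zc_eq_zero (hZ : Zc n d M' = 0) {i : Fin n} {α : Fin n → ℕ}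
    (hα : α ∈ Finset.Nat.antidiagonalTuple n (d i)) (hε : α ≠ epsRow n d i)
    (hτ : α ≠ tauRow n d i) : M' i α = 0 := by
  have hrow := Finset.sum_eq_zero_iff.mp hZ i (Finset.mem_univ i)
  simpa [hε, hτ] using Finset.sum_eq_zero_iff.mp hrow α hα

theorem supportedOn_tauRow_of_zc_eq_zero
    (hA : ∀ i α, A i α ≠ 0 → α ∈ Finset.Nat.antidiagonalTuple n (d i))
    (hM' : M' ≤ moveToT n d A) (hZ : Zc n d M' = 0) : SupportedOn (tauRow n d) M' := by
  intro i α hτ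
  by_cases hε : α = epsRow n d i
  · subst hε
    exact Nat.eq_zero_of_le_zero (moveToT_epsRow hτ ▸ hM' i _)
  · by_cases hα : α ∈ Finset.Nat.antidiagonalTuple n (d i)
    · exact apply_eq_zero_of_zc_eq_zero hZ hα hε hτ
    · have hAα : A i α = 0 := of_not_not (mt (hA i α) hα)
      exact Nat.eq_zero_of_le_zero (hAα ▸ (hM' i α).trans_eq (moveToT_apply hε hτ))

end Fillings

section Weights

variable {m : ℕ} {d : Fin (m + 1) → ℕ} {A B B' M' : Filling (m + 1)}

theorem tauRow_succ (i : Fin (m + 1)) (k : Fin m) :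
    tauRow (m + 1) d i k.succ = if i = k.castSucc then 1 else 0 := by
  have hk : k.val + 1 ≠ 0 := Nat.succ_ne_zero _
  simp only [tauRow, Fin.ext_iff, Fin.val_succ, Fin.val_castSucc, hk, if_false]
  split_ifs <;> omega

theorem SupportedOn.wtZ_pushE_sub_wtZ (hd : ∀ i, 1 ≤ d i)
    (hB : SupportedOn (tauRow (m + 1) d) B) (k : Fin m) :
    wtZ (m + 1) d (pushE (m + 1) d B) k.succ - wtZ (m + 1) d B k.succ =
      d k.succ * B k.succ (tauRow (m + 1) d k.succ)
        - B k.castSucc (tauRow (m + 1) d k.castSucc) := by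
  rw [wtZ_pushE, hB.row_eq (tauRow_mem hd _), hB.wtZ_eq (tauRow_mem hd)]
  simp [tauRow_succ]

theorem SupportedOn.eq_of_wtZ_pushE_sub_wtZ_eq (hd : ∀ i, 1 ≤ d i)
    (hB : SupportedOn (tauRow (m + 1) d) B) (hB' : SupportedOn (tauRow (m + 1) d) B')
    (hwt : ∀ k : Fin m,
      wtZ (m + 1) d (pushE (m + 1) d B) k.succ - wtZ (m + 1) d B k.succ =
        wtZ (m + 1) d (pushE (m + 1) d B') k.succ - wtZ (m + 1) d B' k.succ)
    (hlt : |(B 0 (tauRow (m + 1) d 0) : ℤ) - B' 0 (tauRow (m + 1) d 0)|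
      < ∏ k : Fin m, (d k.succ : ℤ)) : B = B' := by
  let x (i : Fin (m + 1)) : ℤ := B i (tauRow (m + 1) d i) - B' i (tauRow (m + 1) d i)
  have hrec (k : Fin m) : x k.castSucc = d k.succ * x k.succ := by
    have h := hwt k
    rw [hB.wtZ_pushE_sub_wtZ hd, hB'.wtZ_pushE_sub_wtZ hd] at h
    simp only [x]
    linarith
  have hx : x = 0 := eq_zero_of_castSucc_eq_mul_of_abs_lt_prod hrec hlt
  exact hB.ext hB' fun i => Nat.cast_injective (sub_eq_zero.mp (congrFun hx i))

theorem counter_drops_general (hd : ∀ i, 1 ≤ d i)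
    (hA : ∀ i α, A i α ≠ 0 → α ∈ Finset.Nat.antidiagonalTuple (m + 1) (d i))
    (hε : A 0 (epsRow (m + 1) d 0) < ∏ k : Fin m, d k.succ)
    (hτ : A 0 (tauRow (m + 1) d 0) < ∏ k : Fin m, d k.succ)
    (hM' : M' ≤ moveToT (m + 1) d A)
    (hwt : ∀ k : Fin m,
      wtZ (m + 1) d (pushE (m + 1) d M') k.succ - wtZ (m + 1) d M' k.succ =
        wtZ (m + 1) d (pushE (m + 1) d (pushT (m + 1) d (oneE (m + 1) d A))) k.succ
          - wtZ (m + 1) d (pushT (m + 1) d (oneE (m + 1) d A)) k.succ)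
    (hne : exchange (m + 1) d A M' ≠ A) :
    Zc (m + 1) d (exchange (m + 1) d A M') < Zc (m + 1) d A := by
  have hZ := zc_exchange_add_zc hM'
  by_contra hnlt
  have hsupp : SupportedOn (tauRow (m + 1) d) M' :=
    supportedOn_tauRow_of_zc_eq_zero hA hM' (by omega)
  have hle : M' 0 (tauRow (m + 1) d 0) ≤ A 0 (tauRow (m + 1) d 0) + A 0 (epsRow (m + 1) d 0) :=
    (hM' 0 _).trans (moveToT_tauRow_le 0)
  have hlt : |(M' 0 (tauRow (m + 1) d 0) : ℤ)
      - pushT (m + 1) d (oneE (m + 1) d A) 0 (tauRow (m + 1) d 0)|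
        < ∏ k : Fin m, (d k.succ : ℤ) := by
    rw [pushT_oneE_tauRow, ← Nat.cast_prod, abs_lt]
    omega
  have heq : M' = pushT (m + 1) d (oneE (m + 1) d A) :=
    hsupp.eq_of_wtZ_pushE_sub_wtZ_eq hd supportedOn_pushT hwt hlt
  exact hne (heq ▸ exchange_pushT_oneE hd)

end Weights

/-- key lemma. Let `δ ∈ ℕⁿ` with `δ₁ < d₂⋯d_n`, let `A ∈ EF(δ)`,
set `M := P_T(1_E A)` and `C := 1_{D∖E}A + M`. If `M̃ ≤ C` pointwise satisfies the
weight condition `wt(P_E(M̃)) − wt(M̃) = wt(P_E(M)) − wt(M)` in `ℤⁿ`, and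
`Ã := C − M̃ + P_E(M̃)` is different from `A`, then `Z(Ã) < Z(A)`. -/
theorem counter_drops (n : ℕ) (hn : 2 ≤ n) (d : Fin n → ℕ) (hd : ∀ i, 1 ≤ d i)
    (δ : Fin n → ℕ)
    (hδ : δ ⟨0, by omega⟩ < ∏ j ∈ Finset.univ.erase ⟨0, by omega⟩, d j)
    (A : Fin n → (Fin n → ℕ) → ℕ)
    (hAsupp : ∀ i α, A i α ≠ 0 → α ∈ Finset.Nat.antidiagonalTuple n (d i))
    (hARow : ∀ i, Row n d A i = δ i)
    (M' : Fin n → (Fin n → ℕ) → ℕ)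
    (hM'le : ∀ i α, M' i α ≤ oneDE n d A i α + pushT n d (oneE n d A) i α)
    (hwc : ∀ j, wtZ n d (pushE n d M') j - wtZ n d M' j
      = wtZ n d (pushE n d (pushT n d (oneE n d A))) j
        - wtZ n d (pushT n d (oneE n d A)) j)
    (hne : (fun i α =>
        oneDE n d A i α + pushT n d (oneE n d A) i α - M' i α + pushE n d M' i α) ≠ A) :
    Zc n d (fun i α =>
        oneDE n d A i α + pushT n d (oneE n d A) i α - M' i α + pushE n d M' i α)
      < Zc n d A := by
  obtain ⟨m, rfl⟩ : ∃ m, n = m + 1 := ⟨n - 1, by omega⟩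
  have hbound : δ 0 < ∏ k : Fin m, d k.succ := (prod_erase_zero d).symm ▸ hδ
  have hcell {α : Fin (m + 1) → ℕ} (hα : α ∈ Finset.Nat.antidiagonalTuple (m + 1) (d 0)) :
      A 0 α < ∏ k : Fin m, d k.succ := (apply_le_row hα).trans_lt (hARow 0 ▸ hbound)
  exact counter_drops_general hd hAsupp (hcell (epsRow_mem 0)) (hcell (tauRow_mem hd 0)) hM'le
    (fun k => hwc k.succ) hne

end ResultantKeyLemma
end

section
/- Let n ≥ 2, d₁,…,d_n ≥ 1, with canonical multidegree δ_i := ∏_{j≠i} d_j. Let R ∈ ℚ[a] be an inertia form of degree zero for the format (n,n,(d₁,…,d_n)), multihomogeneous of multidegree (δ₁,…,δ_n), and for each filling A write r_A for the coefficient of ∏_{(i,α)∈D} a_{i,α}^{A_{i,α}} in R. Then for every A ∈ REF ∖ FRR: r_A = Σ_{Ã ∈ REF, Ã ≺ A} 𝒯(A,Ã)·r_Ã. -/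
open MvPolynomial

namespace ResultantMarkov

/-- Variables of the big polynomial ring `ℚ[a, x]`. -/
abbrev Var (n : ℕ) := (Fin n × (Fin n → ℕ)) ⊕ Fin n

/-- The generic form `Fᵢ = Σ_{|α| = dᵢ} a_{i,α} x^α`. -/
noncomputable def genForm (n : ℕ) (d : Fin n → ℕ) (i : Fin n) :
    MvPolynomial (Var n) ℚ :=
  ∑ α ∈ Finset.Nat.antidiagonalTuple n (d i),
    X (Sum.inl (i, α)) * ∏ j, (X (Sum.inr j)) ^ α j

/-- `R` satisfies Bézout(γ): `x^γ · R` is in the ideal generated by `F₁, …, F_n`. -/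
def Bezout (n : ℕ) (d : Fin n → ℕ)
    (R : MvPolynomial (Fin n × (Fin n → ℕ)) ℚ) (γ : Fin n → ℕ) : Prop :=
  (∏ j, (X (Sum.inr j) : MvPolynomial (Var n) ℚ) ^ γ j) * rename Sum.inl R
    ∈ Ideal.span (Set.range (genForm n d))

/-- `R` is an inertia form of degree zero. -/
def IsIFDZ (n : ℕ) (d : Fin n → ℕ)
    (R : MvPolynomial (Fin n × (Fin n → ℕ)) ℚ) : Prop :=
  ∃ q : ℕ, ∀ γ : Fin n → ℕ, ∑ j, γ j = q → Bezout n d R γ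

/-- `R` is multihomogeneous of multidegree `δ`. -/
def MultiHom (n : ℕ) (d : Fin n → ℕ) (δ : Fin n → ℕ)
    (R : MvPolynomial (Fin n × (Fin n → ℕ)) ℚ) : Prop :=
  ∀ A ∈ R.support,
    (∀ i α, A (i, α) ≠ 0 → ∑ j, α j = d i) ∧
    (∀ i, (∑ p ∈ A.support, if p.1 = i then A p else 0) = δ i)

/-- The diagram `D`: cells `(i, α)` with `|α| = dᵢ`, as a finite type. -/
abbrev DiagT (n : ℕ) (d : Fin n → ℕ) :=
  Σ i : Fin n, {α : Fin n → ℕ // α ∈ Finset.Nat.antidiagonalTuple n (d i)}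

/-- The canonical multidegree `δᵢ = ∏_{j ≠ i} d_j`. -/
def canonδ (n : ℕ) (d : Fin n → ℕ) (i : Fin n) : ℕ :=
  ∏ j ∈ Finset.univ.erase i, d j

/-- The row `εᵢ* = dᵢ eᵢ` of the transversal `E`. -/
def epsRow (n : ℕ) (d : Fin n → ℕ) (i : Fin n) : Fin n → ℕ :=
  fun j => if j = i then d i else 0

/-- The row `τᵢ* = (dᵢ − 1)e₁ + e_{i+1}` for `i < n`, and `τₙ* = dₙ e₁`, of the
transversal `T`. -/
def tauRow (n : ℕ) (d : Fin n → ℕ) (i : Fin n) : Fin n → ℕ :=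
  fun j =>
    if i.val + 1 < n then
      (if j.val = 0 then d i - 1 else 0) + (if j.val = i.val + 1 then 1 else 0)
    else
      (if j.val = 0 then d i else 0)

/-- The cell `(i, dᵢ eᵢ)` of the transversal `E`, as an element of the diagram. -/
def Ecell (n : ℕ) (d : Fin n → ℕ) (i : Fin n) : DiagT n d :=
  ⟨i, ⟨epsRow n d i, by
    rw [Finset.Nat.mem_antidiagonalTuple]
    simp [epsRow]⟩⟩

/-- The `i`-th row sum of a filling. -/
def Row (n : ℕ) (d : Fin n → ℕ) (A : DiagT n d → ℕ) (i : Fin n) : ℕ :=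
  ∑ c : DiagT n d, if c.1 = i then A c else 0

/-- The weight vector `wt(A) = Σ_{(i,α) ∈ D} A_{i,α}·α`. -/
def wt (n : ℕ) (d : Fin n → ℕ) (A : DiagT n d → ℕ) (j : Fin n) : ℕ :=
  ∑ c : DiagT n d, A c * (c.2 : Fin n → ℕ) j

/-- `REF`: fillings with row sums `δᵢ = ∏_{j≠i} d_j` and balanced weight
`d₁⋯d_n·(1,…,1)` (the fillings relevant to the resultant), as a `Finset`. -/
def REF (n : ℕ) (d : Fin n → ℕ) : Finset (DiagT n d → ℕ) :=
  (Fintype.piFinset (fun c : DiagT n d => Finset.range (canonδ n d c.1 + 1))).filter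
    (fun A => (∀ i, Row n d A i = canonδ n d i) ∧ (∀ j, wt n d A j = ∏ i, d i))

/-- `A` is first-row-reduced: `A_{1, d₁e₁} = δ₁`. -/
def isFRR (n : ℕ) (d : Fin n → ℕ) (hn : 0 < n) (A : DiagT n d → ℕ) : Prop :=
  A (Ecell n d ⟨0, hn⟩) = canonδ n d ⟨0, hn⟩

instance (n : ℕ) (d : Fin n → ℕ) (hn : 0 < n) :
    DecidablePred (isFRR n d hn) := fun A => by unfold isFRR; infer_instance

/-- The counter `Z(A) = Σ_{(i,α) ∈ D∖(E∪T)} A_{i,α}`. -/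
def Zc (n : ℕ) (d : Fin n → ℕ) (A : DiagT n d → ℕ) : ℕ :=
  ∑ c : DiagT n d,
    if (c.2 : Fin n → ℕ) = epsRow n d c.1 ∨ (c.2 : Fin n → ℕ) = tauRow n d c.1
    then 0 else A c

/-- The strict partial order `Ã ≺ A` on `REF`. -/
def prec (n : ℕ) (d : Fin n → ℕ) (hn : 0 < n) (A' A : DiagT n d → ℕ) : Prop :=
  (isFRR n d hn A' ∧ ¬ isFRR n d hn A) ∨
  (¬ isFRR n d hn A' ∧ ¬ isFRR n d hn A ∧ Zc n d A' < Zc n d A)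

instance (n : ℕ) (d : Fin n → ℕ) (hn : 0 < n) (A : DiagT n d → ℕ) :
    DecidablePred (fun A' => prec n d hn A' A) := fun A' => by
  unfold prec; infer_instance

/-- `1_{D∖E} A`: restriction of a filling to the complement of `E`. -/
def oneDE (n : ℕ) (d : Fin n → ℕ) (A : DiagT n d → ℕ) : DiagT n d → ℕ :=
  fun c => if (c.2 : Fin n → ℕ) = epsRow n d c.1 then 0 else A c

/-- `1_E A`: restriction of a filling to `E`. -/
def oneE (n : ℕ) (d : Fin n → ℕ) (A : DiagT n d → ℕ) : DiagT n d → ℕ :=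
  fun c => if (c.2 : Fin n → ℕ) = epsRow n d c.1 then A c else 0

/-- `P_T(A)`: push of a filling to the transversal `T`. -/
def pushT (n : ℕ) (d : Fin n → ℕ) (A : DiagT n d → ℕ) : DiagT n d → ℕ :=
  fun c => if (c.2 : Fin n → ℕ) = tauRow n d c.1 then Row n d A c.1 else 0

/-- The filling `B = 1_{D∖E}A − 1_{D∖E}Ã + P_T(1_E A)` (for `Ã` admissible this is
nonnegative, supported on `D∖E`, with `i`-th row sum `Ã_{i, dᵢeᵢ}`). -/
def Bfill (n : ℕ) (d : Fin n → ℕ) (A A' : DiagT n d → ℕ) : DiagT n d → ℕ :=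
  fun c => oneDE n d A c + pushT n d (oneE n d A) c - oneDE n d A' c

/-- The transition matrix element `𝒯(A, Ã)`: zero unless
`1_{D∖E}Ã ≤ 1_{D∖E}A + P_T(1_E A)` pointwise, in which case it is
`(−1)^{1 + Σᵢ A_{i,dᵢeᵢ} + Σᵢ Ã_{i,dᵢeᵢ}} · ∏ᵢ (Ã_{i,dᵢeᵢ})! / ∏_{(i,α) ∈ D∖E} B_{i,α}!`,
a signed product of multinomial coefficients. -/
def transT (n : ℕ) (d : Fin n → ℕ) (A A' : DiagT n d → ℕ) : ℚ :=
  if ∀ c : DiagT n d, oneDE n d A' c ≤ oneDE n d A c + pushT n d (oneE n d A) c then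
    (-1 : ℚ) ^ (1 + (∑ i, A (Ecell n d i)) + (∑ i, A' (Ecell n d i))) *
      ∏ i : Fin n,
        ((A' (Ecell n d i)).factorial : ℚ) /
          (∏ c ∈ Finset.univ.filter
              (fun c : DiagT n d =>
                c.1 = i ∧ (c.2 : Fin n → ℕ) ≠ epsRow n d c.1),
            ((Bfill n d A A' c).factorial : ℚ))
  else 0

/-- The exponent Finsupp `a ↦ A` of the monomial `a^A` attached to a filling `A`. -/
noncomputable def expOf (n : ℕ) (d : Fin n → ℕ) (A : DiagT n d → ℕ) :
    (Fin n × (Fin n → ℕ)) →₀ ℕ :=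
  ∑ c : DiagT n d, Finsupp.single (c.1, (c.2 : Fin n → ℕ)) (A c)

/-!
Solving `Fᵢ = 0` for `a_{i,dᵢeᵢ}`, and scaling the whole `i`-th row by `xᵢ^{dᵢ}` to clear the
denominator, gives a substitution that kills every `Fᵢ`. It therefore kills `x^γ · R`, and hence
`R` itself. In the image of `a^Ã` under this substitution, the coefficient of the single monomial
`a^(1_{D∖E}A + P_T(1_E A)) x^v`, with `v` chosen so that `A` itself contributes, vanishes unless `Ã`
and `A` have equal row sums and weights; otherwise it is `𝒯(A, Ã)` up to a sign depending only on
`A`. So `Σ_Ã 𝒯(A, Ã) r_Ã = 0` over `REF`, and `𝒯(A, A) = -1` solves this for `r_A`.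

It remains to see that only `Ã ≺ A` contribute. If `𝒯(A, Ã) ≠ 0` then `Ã ≤ A` off `E ∪ T`, so
`Z(Ã) ≤ Z(A)`. In case of equality `Ã` and `A` differ only on `E ∪ T`, by `uᵢ` in the `i`-th row,
and the balance of weights reads `u_k = d_{k+1} u_{k+1}`; thus `δ₁ = d₂⋯d_n` divides `u₁`. If
neither filling is first-row-reduced then `|u₁| < δ₁`, which forces `u = 0`.
-/

section Coefficients

variable {ι κ R : Type*} {σ : ι → Type*} [CommSemiring R]

theorem prod_C_mul_X_pow [Fintype κ] (t : κ → R) (m : κ →₀ ℕ) :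
    ∏ c, (C (t c) * X c) ^ m c = monomial m (∏ c, t c ^ m c) := by
  rw [monomial_eq, Finsupp.prod_fintype _ _ fun _ ↦ pow_zero _, map_prod]
  simp only [mul_pow, Finset.prod_mul_distrib, map_pow]

theorem sum_filter_support_coeff_mul [Finite κ] (Q : MvPolynomial κ R) (s : Finset (κ → ℕ))
    [DecidablePred fun m : κ →₀ ℕ ↦ (m : κ → ℕ) ∈ s] (f : (κ → ℕ) → R) :
    ∑ m ∈ Q.support.filter fun m : κ →₀ ℕ ↦ (m : κ → ℕ) ∈ s, coeff m Q * f m =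
      ∑ w ∈ s, coeff (Finsupp.equivFunOnFinite.symm w) Q * f w := by
  have hmap : ∑ w ∈ s, coeff (Finsupp.equivFunOnFinite.symm w) Q * f w =
      ∑ m ∈ s.map Finsupp.equivFunOnFinite.symm.toEmbedding, coeff m Q * f m :=
    (Finset.sum_map s Finsupp.equivFunOnFinite.symm.toEmbedding
      fun m : κ →₀ ℕ ↦ coeff m Q * f m).symm
  rw [hmap]
  refine Finset.sum_subset (fun m hm ↦ ?_) fun m hm hmQ ↦ ?_
  · exact Finset.mem_map.2 ⟨m, (Finset.mem_filter.1 hm).2, Equiv.symm_apply_apply _ m⟩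
  · obtain ⟨w, hw, rfl⟩ := Finset.mem_map.1 hm
    rw [Finset.mem_filter, not_and'] at hmQ
    rw [notMem_support_iff.1 (hmQ hw), zero_mul]

variable [Fintype ι] [∀ i, Fintype (σ i)]

theorem prod_sum_pow_eq_sum_piFinset [DecidableEq ι] [∀ i, DecidableEq (σ i)]
    (s : ∀ i, Finset (σ i)) (f : (Σ i, σ i) → R) (k : ι → ℕ) :
    ∏ i, (∑ a ∈ s i, f ⟨i, a⟩) ^ k i =
      ∑ p ∈ Fintype.piFinset fun i ↦ (s i).piAntidiag (k i),
        (∏ i, (Nat.multinomial (s i) (p i) : R)) * ∏ c : Σ i, σ i, f c ^ p c.1 c.2 := by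
  simp_rw [Finset.sum_pow_eq_sum_piAntidiag, Finset.prod_univ_sum, Finset.prod_mul_distrib,
    Fintype.prod_sigma]
  refine Finset.sum_congr rfl fun p hp ↦ congrArg _ (Finset.prod_congr rfl fun i _ ↦ ?_)
  refine Finset.prod_subset (Finset.subset_univ _) fun a _ ha ↦ ?_
  have hpi := (Finset.mem_piAntidiag.1 (Fintype.mem_piFinset.1 hp i)).2 a
  rw [not_ne_iff.1 (mt hpi ha), pow_zero]

theorem coeff_prod_sum_C_mul_X_pow (s : ∀ i, Finset (σ i)) (t : (Σ i, σ i) → R) (k : ι → ℕ)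
    (m : (Σ i, σ i) →₀ ℕ) (hm : ∀ i, ∀ a ∉ s i, m ⟨i, a⟩ = 0) :
    coeff m (∏ i, (∑ a ∈ s i, C (t ⟨i, a⟩) * X ⟨i, a⟩) ^ k i) =
      if ∀ i, ∑ a ∈ s i, m ⟨i, a⟩ = k i then
        (∏ i, (Nat.multinomial (s i) fun a ↦ m ⟨i, a⟩ : R)) * ∏ c, t c ^ m c
      else 0 := by
  classical
  rw [prod_sum_pow_eq_sum_piFinset s fun c ↦ C (t c) * X c, coeff_sum]
  have hterm (p : ∀ i, σ i → ℕ) :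
      coeff m ((∏ i, (Nat.multinomial (s i) (p i) : MvPolynomial _ R)) *
          ∏ c : Σ i, σ i, (C (t c) * X c) ^ p c.1 c.2) =
        if (fun i a ↦ m ⟨i, a⟩) = p then
          (∏ i, (Nat.multinomial (s i) (p i) : R)) * ∏ c : Σ i, σ i, t c ^ p c.1 c.2
        else 0 := by
    have hprod := prod_C_mul_X_pow t
      (Finsupp.equivFunOnFinite.symm fun c : Σ i, σ i ↦ p c.1 c.2)
    have hm_iff : Finsupp.equivFunOnFinite.symm (fun c : Σ i, σ i ↦ p c.1 c.2) = m ↔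
        (fun i a ↦ m ⟨i, a⟩) = p := by
      simp only [DFunLike.ext_iff, funext_iff, Sigma.forall, Finsupp.coe_equivFunOnFinite_symm,
        eq_comm]
    simp only [Finsupp.coe_equivFunOnFinite_symm] at hprod
    simp only [hprod, ← map_natCast (C : R →+* MvPolynomial (Σ i, σ i) R), ← map_prod,
      C_mul_monomial, coeff_monomial, hm_iff]
  simp only [hterm, Finset.sum_ite_eq, Fintype.mem_piFinset, Finset.mem_piAntidiag]
  refine if_congr (forall_congr' fun i ↦ and_iff_left fun a ↦ ?_) rfl rfl
  exact not_imp_comm.1 (hm i a)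

end Coefficients

section Fillings

variable {n : ℕ} {d : Fin n → ℕ}

/-- The exponents `α` of degree `dᵢ`, i.e. the cells of the `i`-th row of the diagram. -/
abbrev RowExp (n : ℕ) (d : Fin n → ℕ) (i : Fin n) :=
  {α : Fin n → ℕ // α ∈ Finset.Nat.antidiagonalTuple n (d i)}

/-- The exponent `dᵢ eᵢ` as a cell of the `i`-th row. -/
def epsExp (n : ℕ) (d : Fin n → ℕ) (i : Fin n) : RowExp n d i :=
  (Ecell n d i).2

theorem coe_eq_epsRow_iff {i : Fin n} {α : RowExp n d i} :
    (α : Fin n → ℕ) = epsRow n d i ↔ α = epsExp n d i :=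
  (Subtype.ext_iff (a2 := epsExp n d i)).symm

/-- The filling `1_{D∖E} A + P_T(1_E A)`: in every row, the entry at `E` is moved to `T`.
The condition `1_{D∖E} Ã ≤ 1_{D∖E} A + P_T(1_E A)` is `oneDE n d Ã ≤ moveEToT n d A`. -/
def moveEToT (n : ℕ) (d : Fin n → ℕ) (A : DiagT n d → ℕ) : DiagT n d → ℕ :=
  oneDE n d A + pushT n d (oneE n d A)

theorem oneDE_epsExp (A : DiagT n d → ℕ) (i : Fin n) : oneDE n d A ⟨i, epsExp n d i⟩ = 0 :=
  if_pos rfl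

theorem oneDE_add_oneE (A : DiagT n d → ℕ) : oneDE n d A + oneE n d A = A := by
  funext c
  by_cases hc : (c.2 : Fin n → ℕ) = epsRow n d c.1 <;> simp [oneDE, oneE, hc]

@[to_additive sum_oneE_nsmul]
theorem prod_pow_oneE {M : Type*} [CommMonoid M] (A : DiagT n d → ℕ) (f : DiagT n d → M) :
    ∏ c, f c ^ oneE n d A c = ∏ i, f (Ecell n d i) ^ A (Ecell n d i) := by
  simp only [oneE, pow_ite, pow_zero, Fintype.prod_sigma, coe_eq_epsRow_iff,
    Finset.prod_ite_eq', Finset.mem_univ, if_true]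
  rfl

theorem Row_eq_sum (A : DiagT n d → ℕ) (i : Fin n) :
    Row n d A i = ∑ α : RowExp n d i, A ⟨i, α⟩ := by
  rw [Row, Fintype.sum_sigma, Fintype.sum_eq_single i fun j hj ↦ by simp [hj]]
  simp only [if_true]

theorem sum_erase_epsExp {A : DiagT n d → ℕ} {i : Fin n} (hA : A (Ecell n d i) = 0) :
    ∑ α ∈ Finset.univ.erase (epsExp n d i), A ⟨i, α⟩ = Row n d A i := by
  rw [Row_eq_sum]
  exact Finset.sum_erase _ hA

theorem Row_add (A B : DiagT n d → ℕ) : Row n d (A + B) = Row n d A + Row n d B := by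
  funext i
  simp only [Pi.add_apply, Row_eq_sum, Finset.sum_add_distrib]

theorem Row_oneE (A : DiagT n d → ℕ) (i : Fin n) : Row n d (oneE n d A) i = A (Ecell n d i) := by
  simp only [Row_eq_sum, oneE, coe_eq_epsRow_iff, Finset.sum_ite_eq', Finset.mem_univ, if_true]
  rfl

theorem sum_Row_smul {M : Type*} [AddCommMonoid M] (A : DiagT n d → ℕ) (f : Fin n → M) :
    ∑ i, Row n d A i • f i = ∑ c, A c • f c.1 := by
  simp only [Row_eq_sum, Finset.sum_smul, Fintype.sum_sigma]

theorem le_Row (A : DiagT n d → ℕ) (i : Fin n) (α : RowExp n d i) :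
    A ⟨i, α⟩ ≤ Row n d A i := by
  rw [Row_eq_sum]
  exact Finset.single_le_sum (f := fun α ↦ A ⟨i, α⟩) (fun _ _ ↦ Nat.zero_le _)
    (Finset.mem_univ α)

theorem wt_eq_sum_smul (A : DiagT n d → ℕ) : wt n d A = ∑ c, A c • (c.2 : Fin n → ℕ) := by
  funext j
  simp only [wt, Finset.sum_apply, Pi.smul_apply, smul_eq_mul]

theorem wt_add (A B : DiagT n d → ℕ) : wt n d (A + B) = wt n d A + wt n d B := by
  simp only [wt_eq_sum_smul, Pi.add_apply, add_smul, Finset.sum_add_distrib]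

theorem wt_oneE (A : DiagT n d → ℕ) :
    wt n d (oneE n d A) = ∑ i, A (Ecell n d i) • epsRow n d i := by
  rw [wt_eq_sum_smul, sum_oneE_nsmul A fun c ↦ (c.2 : Fin n → ℕ)]
  rfl

theorem mem_REF_iff (A : DiagT n d → ℕ) :
    A ∈ REF n d ↔ Row n d A = canonδ n d ∧ wt n d A = fun _ ↦ ∏ i, d i := by
  simp only [REF, Finset.mem_filter, Fintype.mem_piFinset, Finset.mem_range, Order.lt_add_one_iff,
    funext_iff, and_iff_right_iff_imp, and_imp]
  exact fun hA _ c ↦ hA c.1 ▸ le_Row A c.1 c.2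

theorem tauRow_ne_epsRow (hn : 2 ≤ n) (hd : ∀ i, 1 ≤ d i) (i : Fin n) :
    tauRow n d i ≠ epsRow n d i := by
  intro h
  have hi := congrFun h i
  have h0 := congrFun h ⟨0, Nat.zero_lt_of_lt hn⟩
  have hdi := hd i
  simp only [tauRow, epsRow, if_true, Fin.ext_iff] at hi h0
  split_ifs at hi h0 <;> omega

theorem sum_tauRow (hd : ∀ i, 1 ≤ d i) (i : Fin n) : ∑ j, tauRow n d i j = d i := by
  obtain ⟨N, rfl⟩ : ∃ N, n = N + 1 := Nat.exists_eq_add_one.2 i.pos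
  have hzero (j : Fin (N + 1)) : j.val = 0 ↔ j = 0 := Fin.val_eq_zero_iff
  by_cases hi : i.val + 1 < N + 1
  · have hsucc (j : Fin (N + 1)) : j.val = i.val + 1 ↔ j = ⟨i.val + 1, hi⟩ := by
      rw [Fin.ext_iff]
    simp [tauRow, hi, hzero, hsucc, Finset.sum_add_distrib, Nat.sub_add_cancel (hd i)]
  · simp [tauRow, hi, hzero]

/-- The exponent of the transversal `T` as a cell of the `i`-th row. -/
def tauExp (n : ℕ) (d : Fin n → ℕ) (hd : ∀ i, 1 ≤ d i) (i : Fin n) : RowExp n d i :=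
  ⟨tauRow n d i, Finset.Nat.mem_antidiagonalTuple.2 (sum_tauRow hd i)⟩

theorem coe_eq_tauRow_iff (hd : ∀ i, 1 ≤ d i) {i : Fin n} {α : RowExp n d i} :
    (α : Fin n → ℕ) = tauRow n d i ↔ α = tauExp n d hd i :=
  (Subtype.ext_iff (a2 := tauExp n d hd i)).symm

theorem tauExp_ne_epsExp (hn : 2 ≤ n) (hd : ∀ i, 1 ≤ d i) (i : Fin n) :
    tauExp n d hd i ≠ epsExp n d i :=
  fun h ↦ tauRow_ne_epsRow hn hd i (congrArg Subtype.val h)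

theorem pushT_apply (hd : ∀ i, 1 ≤ d i) (A : DiagT n d → ℕ) (i : Fin n) (α : RowExp n d i) :
    pushT n d A ⟨i, α⟩ = if α = tauExp n d hd i then Row n d A i else 0 := by
  simp only [pushT, coe_eq_tauRow_iff hd]

theorem Row_pushT (hd : ∀ i, 1 ≤ d i) (A : DiagT n d → ℕ) :
    Row n d (pushT n d A) = Row n d A := by
  funext i
  simp only [Row_eq_sum (pushT n d A), pushT_apply hd, Finset.sum_ite_eq', Finset.mem_univ,
    if_true]

theorem Row_moveEToT (hd : ∀ i, 1 ≤ d i) (A : DiagT n d → ℕ) :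
    Row n d (moveEToT n d A) = Row n d A := by
  rw [moveEToT, Row_add, Row_pushT hd, ← Row_add, oneDE_add_oneE]

theorem moveEToT_epsExp (hn : 2 ≤ n) (hd : ∀ i, 1 ≤ d i) (A : DiagT n d → ℕ) (i : Fin n) :
    moveEToT n d A ⟨i, epsExp n d i⟩ = 0 := by
  rw [moveEToT, Pi.add_apply, oneDE_epsExp, pushT_apply hd,
    if_neg (tauExp_ne_epsExp hn hd i).symm]

theorem oneDE_le_moveEToT (A : DiagT n d → ℕ) : oneDE n d A ≤ moveEToT n d A :=
  fun _ ↦ Nat.le_add_right _ _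

theorem Bfill_add_oneDE {A B : DiagT n d → ℕ} (hle : oneDE n d B ≤ moveEToT n d A) :
    Bfill n d A B + oneDE n d B = moveEToT n d A :=
  tsub_add_cancel_of_le hle

theorem Bfill_self (A : DiagT n d → ℕ) : Bfill n d A A = pushT n d (oneE n d A) :=
  add_tsub_cancel_left _ _

theorem Bfill_epsExp (hn : 2 ≤ n) (hd : ∀ i, 1 ≤ d i) (A B : DiagT n d → ℕ) (i : Fin n) :
    Bfill n d A B ⟨i, epsExp n d i⟩ = 0 :=
  Nat.sub_eq_zero_of_le ((moveEToT_epsExp hn hd A i).trans_le (Nat.zero_le _))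

theorem Row_Bfill_eq_iff (hd : ∀ i, 1 ≤ d i) {A B : DiagT n d → ℕ}
    (hle : oneDE n d B ≤ moveEToT n d A) :
    (∀ i, Row n d (Bfill n d A B) i = B (Ecell n d i)) ↔ Row n d B = Row n d A := by
  have hsplit := congrArg (Row n d) (oneDE_add_oneE B)
  have hfill := congrArg (Row n d) (Bfill_add_oneDE hle)
  rw [Row_add] at hsplit hfill
  rw [Row_moveEToT hd] at hfill
  rw [← hsplit, ← hfill, add_comm, add_left_inj, funext_iff]
  exact forall_congr' fun i ↦ by rw [Row_oneE, eq_comm]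

end Fillings

section Elimination

variable {n : ℕ} {d : Fin n → ℕ}

/-- The monomial `x^w`. -/
noncomputable def xmon (w : Fin n → ℕ) : MvPolynomial (Fin n) ℚ :=
  monomial (Finsupp.equivFunOnFinite.symm w) 1

theorem prod_X_pow_eq_xmon (w : Fin n → ℕ) :
    ∏ j, (X j : MvPolynomial (Fin n) ℚ) ^ w j = xmon w := by
  rw [xmon, monomial_eq, map_one, one_mul, Finsupp.prod_fintype _ _ fun _ ↦ pow_zero _]
  rfl

theorem prod_xmon_pow {κ : Type*} (s : Finset κ) (w : κ → Fin n → ℕ) (k : κ → ℕ) :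
    ∏ c ∈ s, xmon (w c) ^ k c = xmon (∑ c ∈ s, k c • w c) := by
  simp only [← prod_X_pow_eq_xmon, Finset.sum_apply, Pi.smul_apply, smul_eq_mul,
    ← Finset.prod_pow_eq_pow_sum]
  rw [Finset.prod_comm]
  simp only [← Finset.prod_pow, ← pow_mul, mul_comm]

theorem xmon_mul_xmon (v w : Fin n → ℕ) : xmon v * xmon w = xmon (v + w) := by
  simp only [← prod_X_pow_eq_xmon, ← Finset.prod_mul_distrib, ← pow_add, Pi.add_apply]

theorem coeff_xmon (v w : Fin n → ℕ) :
    coeff (Finsupp.equivFunOnFinite.symm v) (xmon w) = if w = v then 1 else 0 := by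
  simp only [xmon, coeff_monomial, EmbeddingLike.apply_eq_iff_eq]

/-- The variable `a_{i,α}` of a cell of the diagram. -/
def cellVar (c : DiagT n d) : Fin n × (Fin n → ℕ) := (c.1, c.2)

theorem cellVar_injective : Function.Injective (cellVar (n := n) (d := d)) := by
  rintro ⟨i, α⟩ ⟨j, β⟩ h
  obtain ⟨rfl, hαβ⟩ := Prod.mk.inj h
  exact congrArg _ (Subtype.ext hαβ)

theorem mapDomain_cellVar (A : DiagT n d → ℕ) :
    (Finsupp.equivFunOnFinite.symm A).mapDomain cellVar = expOf n d A := by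
  rw [Finsupp.mapDomain, Finsupp.sum_fintype _ _ fun _ ↦ Finsupp.single_zero _]
  rfl

/-- The tail `Fᵢ - a_{i,dᵢeᵢ} xᵢ^{dᵢ}` of the generic form, a linear form over `ℚ[x]` in the
variables `a`. -/
noncomputable def tailForm (n : ℕ) (d : Fin n → ℕ) (i : Fin n) :
    MvPolynomial (DiagT n d) (MvPolynomial (Fin n) ℚ) :=
  ∑ α ∈ Finset.univ.erase (epsExp n d i), C (xmon α) * X ⟨i, α⟩

/-- The image of `a_c` under the substitution that solves `Fᵢ = 0` for `a_{i,dᵢeᵢ}`; all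
variables of the row are scaled by `xᵢ^{dᵢ}` in order to clear the denominator. -/
noncomputable def solvedVar (c : DiagT n d) :
    MvPolynomial (DiagT n d) (MvPolynomial (Fin n) ℚ) :=
  if c.2 = epsExp n d c.1 then -tailForm n d c.1 else C (xmon (epsRow n d c.1)) * X c

/-- The substitution `ℚ[a, x] → ℚ[x][a]` that makes every `Fᵢ` vanish; variables outside the
diagram go to `0`. -/
noncomputable def solveForms (n : ℕ) (d : Fin n → ℕ) :
    MvPolynomial (Var n) ℚ →ₐ[ℚ] MvPolynomial (DiagT n d) (MvPolynomial (Fin n) ℚ) :=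
  aeval (Sum.elim (fun p ↦ aeval solvedVar (killCompl cellVar_injective (X p : MvPolynomial _ ℚ)))
    fun j ↦ C (X j))

theorem solvedVar_Ecell (i : Fin n) : solvedVar (Ecell n d i) = -tailForm n d i :=
  if_pos rfl

theorem solvedVar_of_ne {i : Fin n} {α : RowExp n d i} (hα : α ≠ epsExp n d i) :
    solvedVar ⟨i, α⟩ = C (xmon (epsRow n d i)) * X ⟨i, α⟩ :=
  if_neg hα

theorem solveForms_rename_inl (R : MvPolynomial (Fin n × (Fin n → ℕ)) ℚ) :
    solveForms n d (rename Sum.inl R) = aeval solvedVar (killCompl cellVar_injective R) := by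
  refine AlgHom.congr_fun (φ₁ := (solveForms n d).comp (rename Sum.inl))
    (φ₂ := (aeval solvedVar).comp (killCompl cellVar_injective)) (algHom_ext fun p ↦ ?_) R
  simp only [AlgHom.comp_apply, rename_X, solveForms, aeval_X, Sum.elim_inl]

theorem solveForms_X_inl (c : DiagT n d) :
    solveForms n d (X (Sum.inl (cellVar c))) = solvedVar c := by
  have hX := solveForms_rename_inl (d := d) (rename cellVar (X c))
  rwa [killCompl_rename_app, aeval_X, rename_X, rename_X] at hX

theorem solveForms_prod_X_pow (w : Fin n → ℕ) :
    solveForms n d (∏ j, X (Sum.inr j) ^ w j) = C (xmon w) := by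
  simp only [solveForms, map_prod, map_pow, aeval_X, Sum.elim_inr, ← prod_X_pow_eq_xmon]

theorem solveForms_genForm (i : Fin n) : solveForms n d (genForm n d i) = 0 := by
  have hsum : solveForms n d (genForm n d i) =
      ∑ α : RowExp n d i, solvedVar ⟨i, α⟩ * C (xmon α) := by
    rw [genForm, map_sum, ← Finset.sum_coe_sort]
    refine Finset.sum_congr rfl fun α _ ↦ ?_
    rw [map_mul, solveForms_prod_X_pow, ← solveForms_X_inl]
    rfl
  have htail : ∑ α ∈ Finset.univ.erase (epsExp n d i), solvedVar ⟨i, α⟩ * C (xmon α) =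
      tailForm n d i * C (xmon (epsRow n d i)) := by
    rw [tailForm, Finset.sum_mul]
    refine Finset.sum_congr rfl fun α hα ↦ ?_
    rw [solvedVar_of_ne (Finset.ne_of_mem_erase hα)]
    ring
  rw [hsum, ← Finset.add_sum_erase _ _ (Finset.mem_univ (epsExp n d i)), htail,
    show solvedVar ⟨i, epsExp n d i⟩ = _ from solvedVar_Ecell i]
  change -tailForm n d i * C (xmon (epsRow n d i)) + _ = 0
  ring

theorem aeval_solvedVar_killCompl_eq_zero {R : MvPolynomial (Fin n × (Fin n → ℕ)) ℚ}
    {γ : Fin n → ℕ} (hR : Bezout n d R γ) :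
    aeval solvedVar (killCompl (cellVar_injective (d := d)) R) = 0 := by
  have hspan : Ideal.span (Set.range (genForm n d)) ≤ RingHom.ker (solveForms n d) :=
    Ideal.span_le.2 (Set.range_subset_iff.2 solveForms_genForm)
  have hker := RingHom.mem_ker.1 (hspan hR)
  rw [map_mul, solveForms_prod_X_pow, solveForms_rename_inl] at hker
  refine (mul_eq_zero.1 hker).resolve_left fun hγ ↦ ?_
  exact one_ne_zero (monomial_eq_zero.1 (C_eq_zero.1 hγ))

end Elimination

section Extraction

variable {n : ℕ} {d : Fin n → ℕ}

theorem transT_of_not_le {A B : DiagT n d → ℕ} (hle : ¬ oneDE n d B ≤ moveEToT n d A) :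
    transT n d A B = 0 :=
  if_neg hle

theorem transT_of_le {A B : DiagT n d → ℕ} (hle : oneDE n d B ≤ moveEToT n d A) :
    transT n d A B = (-1) ^ (1 + (∑ i, A (Ecell n d i)) + ∑ i, B (Ecell n d i)) *
      ∏ i, ((B (Ecell n d i)).factorial : ℚ) /
        ∏ α ∈ Finset.univ.erase (epsExp n d i), ((Bfill n d A B ⟨i, α⟩).factorial : ℚ) := by
  refine (if_pos hle).trans (congrArg _ (Finset.prod_congr rfl fun i _ ↦ congrArg _ ?_))
  rw [Finset.prod_filter, Fintype.prod_sigma, Fintype.prod_eq_single i fun j hj ↦ by simp [hj],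
    ← Finset.filter_ne', Finset.prod_filter]
  simp only [ne_eq, coe_eq_epsRow_iff, true_and]

theorem transT_eq_prod_multinomial (hn : 2 ≤ n) (hd : ∀ i, 1 ≤ d i) {A B : DiagT n d → ℕ}
    (hle : oneDE n d B ≤ moveEToT n d A) (hRow : Row n d B = Row n d A) :
    transT n d A B = (-1) ^ (1 + (∑ i, A (Ecell n d i)) + ∑ i, B (Ecell n d i)) *
      ∏ i, (Nat.multinomial (Finset.univ.erase (epsExp n d i))
        fun α ↦ Bfill n d A B ⟨i, α⟩ : ℚ) := by
  rw [transT_of_le hle]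
  refine congrArg _ (Finset.prod_congr rfl fun i _ ↦ (div_eq_iff ?_).2 ?_)
  · exact Finset.prod_ne_zero_iff.2 fun α _ ↦ Nat.cast_ne_zero.2 (Nat.factorial_ne_zero _)
  · rw [← (Row_Bfill_eq_iff hd hle).2 hRow i, ← sum_erase_epsExp (Bfill_epsExp hn hd A B i),
      ← Nat.multinomial_spec]
    push_cast
    exact mul_comm _ _

theorem transT_self (hn : 2 ≤ n) (hd : ∀ i, 1 ≤ d i) (A : DiagT n d → ℕ) :
    transT n d A A = -1 := by
  have hsign : (-1 : ℚ) ^ (1 + (∑ i, A (Ecell n d i)) + ∑ i, A (Ecell n d i)) = -1 := by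
    rw [add_assoc, ← two_mul, pow_add, pow_mul, neg_one_sq, one_pow, pow_one, mul_one]
  rw [transT_of_le (oneDE_le_moveEToT A), hsign, mul_eq_left₀ (neg_ne_zero.2 one_ne_zero)]
  refine Finset.prod_eq_one fun i _ ↦ ?_
  have htau : tauExp n d hd i ∈ Finset.univ.erase (epsExp n d i) :=
    Finset.mem_erase.2 ⟨tauExp_ne_epsExp hn hd i, Finset.mem_univ _⟩
  rw [Bfill_self, Finset.prod_eq_single_of_mem _ htau fun α _ hα ↦ by
      rw [pushT_apply hd, if_neg hα, Nat.factorial_zero, Nat.cast_one],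
    pushT_apply hd, if_pos rfl, Row_oneE]
  exact div_self (Nat.cast_ne_zero.2 (Nat.factorial_ne_zero _))

/-- The exponent of `x` that goes with `a^(moveEToT A)` when the substitution `solvedVar` is
applied to `a^B`: the forms `tailForm` contribute the first summand and the scaling factors
`xᵢ^{dᵢ}` the second. -/
def elimWt (A B : DiagT n d → ℕ) : Fin n → ℕ :=
  wt n d (Bfill n d A B) + ∑ i, Row n d (oneDE n d B) i • epsRow n d i

theorem elimWt_add_wt {A B : DiagT n d → ℕ} (hle : oneDE n d B ≤ moveEToT n d A) :
    elimWt A B + wt n d B = wt n d (moveEToT n d A) + ∑ i, Row n d B i • epsRow n d i := by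
  rw [← Bfill_add_oneDE hle, elimWt, wt_add, ← oneDE_add_oneE B, wt_add, wt_oneE, Row_add]
  simp only [oneDE_add_oneE, Pi.add_apply, Row_oneE, add_smul, Finset.sum_add_distrib]
  abel

theorem elimWt_eq_elimWt_self_iff {A B : DiagT n d → ℕ} (hle : oneDE n d B ≤ moveEToT n d A)
    (hRow : Row n d B = Row n d A) : elimWt A B = elimWt A A ↔ wt n d B = wt n d A := by
  have hsum : elimWt A B + wt n d B = elimWt A A + wt n d A := by
    rw [elimWt_add_wt hle, elimWt_add_wt (oneDE_le_moveEToT A), hRow]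
  constructor <;> intro h
  · exact add_left_cancel (h ▸ hsum)
  · exact add_right_cancel (h ▸ hsum)

theorem prod_solvedVar_pow (B : DiagT n d → ℕ) :
    ∏ c, solvedVar c ^ B c =
      (∏ i, (-tailForm n d i) ^ B (Ecell n d i)) *
        monomial (Finsupp.equivFunOnFinite.symm (oneDE n d B))
          (xmon (∑ i, Row n d (oneDE n d B) i • epsRow n d i)) := by
  have hscaled (c : DiagT n d) : solvedVar c ^ oneDE n d B c =
      (C (xmon (epsRow n d c.1)) * X c) ^ oneDE n d B c := by
    obtain ⟨i, α⟩ := c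
    obtain rfl | hα := eq_or_ne α (epsExp n d i)
    · rw [oneDE_epsExp, pow_zero, pow_zero]
    · rw [solvedVar_of_ne hα]
  have hmonomial := prod_C_mul_X_pow (fun c : DiagT n d ↦ xmon (epsRow n d c.1))
    (Finsupp.equivFunOnFinite.symm (oneDE n d B))
  rw [Finsupp.coe_equivFunOnFinite_symm, prod_xmon_pow, ← sum_Row_smul] at hmonomial
  calc ∏ c, solvedVar c ^ B c
      = (∏ c, solvedVar c ^ oneE n d B c) * ∏ c, solvedVar c ^ oneDE n d B c := by
        rw [← Finset.prod_mul_distrib, ← oneDE_add_oneE B]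
        simp only [oneDE_add_oneE, Pi.add_apply, pow_add, mul_comm]
    _ = _ := by
        rw [prod_pow_oneE, Finset.prod_congr rfl fun c _ ↦ hscaled c, hmonomial]
        simp only [solvedVar_Ecell]

theorem coeff_prod_tailForm_pow {m : DiagT n d → ℕ} (hm : ∀ i, m (Ecell n d i) = 0)
    (k : Fin n → ℕ) :
    coeff (Finsupp.equivFunOnFinite.symm m) (∏ i, tailForm n d i ^ k i) =
      if Row n d m = k then
        C (∏ i, (Nat.multinomial (Finset.univ.erase (epsExp n d i)) fun α ↦ m ⟨i, α⟩ : ℚ)) *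
          xmon (wt n d m)
      else 0 := by
  have hsupp (i : Fin n) (α : RowExp n d i) (hα : α ∉ Finset.univ.erase (epsExp n d i)) :
      m ⟨i, α⟩ = 0 := by
    rw [Finset.mem_erase, and_iff_left (Finset.mem_univ α), not_not] at hα
    exact hα ▸ hm i
  have hcoeff := coeff_prod_sum_C_mul_X_pow (fun i ↦ Finset.univ.erase (epsExp n d i))
    (fun c : DiagT n d ↦ xmon (c.2 : Fin n → ℕ)) k (Finsupp.equivFunOnFinite.symm m) hsupp
  simp only [Finsupp.coe_equivFunOnFinite_symm, sum_erase_epsExp (hm _), ← funext_iff,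
    prod_xmon_pow, ← wt_eq_sum_smul] at hcoeff
  simpa only [tailForm, map_prod, map_natCast] using hcoeff

theorem coeff_prod_solvedVar_pow (hn : 2 ≤ n) (hd : ∀ i, 1 ≤ d i) (A B : DiagT n d → ℕ) :
    coeff (Finsupp.equivFunOnFinite.symm (moveEToT n d A)) (∏ c, solvedVar c ^ B c) =
      if Row n d B = Row n d A then
        C ((-1) ^ (1 + ∑ i, A (Ecell n d i)) * transT n d A B) * xmon (elimWt A B)
      else 0 := by
  have hneg : ∏ i, (-tailForm n d i) ^ B (Ecell n d i) =
      C (C ((-1) ^ ∑ i, B (Ecell n d i))) * ∏ i, tailForm n d i ^ B (Ecell n d i) := by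
    simp only [neg_pow (tailForm n d _), Finset.prod_mul_distrib, Finset.prod_pow_eq_pow_sum,
      map_pow, map_neg, map_one]
  have hle_iff : Finsupp.equivFunOnFinite.symm (oneDE n d B) ≤
      Finsupp.equivFunOnFinite.symm (moveEToT n d A) ↔ oneDE n d B ≤ moveEToT n d A := Iff.rfl
  rw [prod_solvedVar_pow, coeff_mul_monomial', hneg, coeff_C_mul]
  by_cases hle : oneDE n d B ≤ moveEToT n d A
  · have hBfill : Finsupp.equivFunOnFinite.symm (moveEToT n d A) -
        Finsupp.equivFunOnFinite.symm (oneDE n d B) =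
          Finsupp.equivFunOnFinite.symm (Bfill n d A B) := Finsupp.ext fun _ ↦ rfl
    have hRow_iff : (Row n d (Bfill n d A B) = fun i ↦ B (Ecell n d i)) ↔
        Row n d B = Row n d A := funext_iff.trans (Row_Bfill_eq_iff hd hle)
    rw [if_pos (hle_iff.2 hle), hBfill, coeff_prod_tailForm_pow (Bfill_epsExp hn hd A B)]
    simp only [hRow_iff]
    split_ifs with hRow
    · have hsign : (-1 : ℚ) ^ (1 + ∑ i, A (Ecell n d i)) * transT n d A B =
          (-1) ^ (∑ i, B (Ecell n d i)) * ∏ i, (Nat.multinomial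
            (Finset.univ.erase (epsExp n d i)) fun α ↦ Bfill n d A B ⟨i, α⟩ : ℚ) := by
        rw [transT_eq_prod_multinomial hn hd hle hRow, pow_add _ (1 + _), mul_assoc, ← mul_assoc,
          ← mul_pow, neg_one_mul, neg_neg, one_pow, one_mul]
      rw [hsign, elimWt, ← xmon_mul_xmon, map_mul]
      ring
    · rw [mul_zero, zero_mul]
  · rw [if_neg (mt hle_iff.1 hle), transT_of_not_le hle, mul_zero, map_zero, zero_mul, ite_self]

theorem coeff_coeff_prod_solvedVar_pow (hn : 2 ≤ n) (hd : ∀ i, 1 ≤ d i) (A B : DiagT n d → ℕ) :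
    coeff (Finsupp.equivFunOnFinite.symm (elimWt A A))
        (coeff (Finsupp.equivFunOnFinite.symm (moveEToT n d A)) (∏ c, solvedVar c ^ B c)) =
      if Row n d B = Row n d A ∧ wt n d B = wt n d A then
        (-1) ^ (1 + ∑ i, A (Ecell n d i)) * transT n d A B
      else 0 := by
  rw [coeff_prod_solvedVar_pow hn hd, ite_and]
  by_cases hRow : Row n d B = Row n d A
  · rw [if_pos hRow, if_pos hRow]
    by_cases hle : oneDE n d B ≤ moveEToT n d A
    · rw [coeff_C_mul, coeff_xmon, mul_ite, mul_one, mul_zero]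
      exact if_congr (elimWt_eq_elimWt_self_iff hle hRow) rfl rfl
    · rw [transT_of_not_le hle, mul_zero, map_zero, zero_mul, coeff_zero, ite_self]
  · rw [if_neg hRow, if_neg hRow, coeff_zero]

theorem sum_transT_mul_coeff_eq_zero (hn : 2 ≤ n) (hd : ∀ i, 1 ≤ d i)
    {R : MvPolynomial (Fin n × (Fin n → ℕ)) ℚ} {γ : Fin n → ℕ} (hR : Bezout n d R γ)
    (A : DiagT n d → ℕ) {s : Finset (DiagT n d → ℕ)}
    (hs : ∀ B, B ∈ s ↔ Row n d B = Row n d A ∧ wt n d B = wt n d A) :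
    ∑ B ∈ s, transT n d A B * coeff (expOf n d B) R = 0 := by
  have hexpand : ∑ m ∈ (killCompl (cellVar_injective (d := d)) R).support,
      C (C (coeff m (killCompl (cellVar_injective (d := d)) R))) *
        ∏ c : DiagT n d, solvedVar c ^ m c = 0 := by
    have heval := aeval_solvedVar_killCompl_eq_zero (d := d) hR
    rwa [aeval_def, eval₂_eq'] at heval
  have hextract := congrArg (fun p ↦ coeff (Finsupp.equivFunOnFinite.symm (elimWt A A))
    (coeff (Finsupp.equivFunOnFinite.symm (moveEToT n d A)) p)) hexpand
  simp only [coeff_sum, coeff_C_mul, coeff_coeff_prod_solvedVar_pow hn hd, coeff_zero, ← hs,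
    mul_ite, mul_zero, ← Finset.sum_filter, mul_left_comm _ ((-1 : ℚ) ^ _),
    ← Finset.mul_sum] at hextract
  rw [sum_filter_support_coeff_mul] at hextract
  refine Eq.trans (Finset.sum_congr rfl fun B _ ↦ ?_) ((mul_eq_zero.1 hextract).resolve_left
    (pow_ne_zero _ (neg_ne_zero.2 one_ne_zero)))
  rw [coeff_killCompl, mapDomain_cellVar, mul_comm]

end Extraction

section Chain

variable {M : Type*} {N : ℕ}

theorem apply_zero_eq_prod_mul_apply_last [CommMonoid M] {u : Fin (N + 1) → M} {e : Fin N → M}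
    (h : ∀ k, u k.castSucc = e k * u k.succ) : u 0 = (∏ k, e k) * u (Fin.last N) := by
  induction N with
  | zero => rw [Fin.prod_univ_zero, one_mul]; rfl
  | succ N ih =>
    rw [Fin.prod_univ_castSucc, mul_assoc, ← Fin.succ_last, ← h, ← Fin.castSucc_zero]
    exact ih (u := fun k ↦ u k.castSucc) fun k ↦ h k.castSucc

theorem eq_zero_of_castSucc_eq_mul [MulZeroClass M] [NoZeroDivisors M] {u : Fin (N + 1) → M}
    {e : Fin N → M} (he : ∀ k, e k ≠ 0) (h : ∀ k, u k.castSucc = e k * u k.succ) (h0 : u 0 = 0) :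
    u = 0 := by
  funext i
  induction i using Fin.induction with
  | zero => exact h0
  | succ k ih => exact (mul_eq_zero.1 ((h k).symm.trans ih)).resolve_left (he k)

end Chain

section Order

variable {n : ℕ} {d : Fin n → ℕ}

theorem canonδ_zero {N : ℕ} (d : Fin (N + 1) → ℕ) : canonδ (N + 1) d 0 = ∏ k : Fin N, d k.succ := by
  simp [canonδ, Fin.univ_succ]

theorem tauRow_succ {N : ℕ} (d : Fin (N + 1) → ℕ) (i : Fin (N + 1)) (k : Fin N) :
    tauRow (N + 1) d i k.succ = if i = k.castSucc then 1 else 0 := by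
  have hk := k.isLt
  simp only [tauRow, Fin.ext_iff, Fin.val_succ, Fin.val_castSucc, Nat.succ_ne_zero, if_false,
    Nat.add_right_cancel_iff, zero_add, Nat.add_lt_add_iff_right]
  split_ifs <;> omega

theorem castSucc_eq_mul_of_balanced {N : ℕ} {d : Fin (N + 1) → ℕ} {u : Fin (N + 1) → ℤ}
    (hu : ∀ j, ∑ i, u i * ((tauRow (N + 1) d i j : ℤ) - epsRow (N + 1) d i j) = 0) (k : Fin N) :
    u k.castSucc = d k.succ * u k.succ := by
  have hk := hu k.succ
  simp only [tauRow_succ, epsRow, mul_sub, Finset.sum_sub_distrib, Nat.cast_ite, Nat.cast_one,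
    Nat.cast_zero, mul_ite, mul_one, mul_zero, Finset.sum_ite_eq, Finset.sum_ite_eq',
    Finset.mem_univ, if_true] at hk
  linarith

theorem eq_zero_of_balanced {N : ℕ} {d : Fin (N + 1) → ℕ} (hd : ∀ i, 1 ≤ d i)
    {u : Fin (N + 1) → ℤ}
    (hu : ∀ j, ∑ i, u i * ((tauRow (N + 1) d i j : ℤ) - epsRow (N + 1) d i j) = 0)
    (hu0 : |u 0| < canonδ (N + 1) d 0) : u = 0 := by
  have hchain := castSucc_eq_mul_of_balanced hu
  have hd_ne (k : Fin N) : (d k.succ : ℤ) ≠ 0 :=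
    Nat.cast_ne_zero.2 (Nat.one_le_iff_ne_zero.1 (hd k.succ))
  refine eq_zero_of_castSucc_eq_mul hd_ne hchain (Int.eq_zero_of_abs_lt_dvd ?_ hu0)
  rw [apply_zero_eq_prod_mul_apply_last hchain, canonδ_zero, Nat.cast_prod]
  exact dvd_mul_right _ _

theorem sum_row_sub_mul (hn : 2 ≤ n) (hd : ∀ i, 1 ≤ d i) {A B : DiagT n d → ℕ} {i : Fin n}
    (hRow : Row n d B i = Row n d A i)
    (hoff : ∀ α, α ≠ epsExp n d i → α ≠ tauExp n d hd i → B ⟨i, α⟩ = A ⟨i, α⟩)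
    (f : RowExp n d i → ℤ) :
    ∑ α, ((B ⟨i, α⟩ : ℤ) - A ⟨i, α⟩) * f α =
      ((A (Ecell n d i) : ℤ) - B (Ecell n d i)) * (f (tauExp n d hd i) - f (epsExp n d i)) := by
  have hsum (g : RowExp n d i → ℤ) : ∑ α, ((B ⟨i, α⟩ : ℤ) - A ⟨i, α⟩) * g α =
      ((B (Ecell n d i) : ℤ) - A (Ecell n d i)) * g (epsExp n d i) +
        ((B ⟨i, tauExp n d hd i⟩ : ℤ) - A ⟨i, tauExp n d hd i⟩) * g (tauExp n d hd i) :=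
    Fintype.sum_eq_add _ _ (tauExp_ne_epsExp hn hd i).symm fun α hα ↦ by
      rw [hoff α hα.1 hα.2, sub_self, zero_mul]
  have hbalance := hsum 1
  simp only [Pi.one_apply, mul_one, Finset.sum_sub_distrib, ← Nat.cast_sum, ← Row_eq_sum, hRow,
    sub_self] at hbalance
  rw [hsum, eq_neg_of_add_eq_zero_right hbalance.symm]
  ring

theorem eq_of_agree_off_transversals (hn : 2 ≤ n) (hd : ∀ i, 1 ≤ d i) {A B : DiagT n d → ℕ}
    (hRow : Row n d B = Row n d A) (hwt : wt n d B = wt n d A)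
    (hoff : ∀ i α, α ≠ epsExp n d i → α ≠ tauExp n d hd i → B ⟨i, α⟩ = A ⟨i, α⟩)
    (hE : |(A (Ecell n d ⟨0, Nat.zero_lt_of_lt hn⟩) : ℤ) -
      B (Ecell n d ⟨0, Nat.zero_lt_of_lt hn⟩)| < canonδ n d ⟨0, Nat.zero_lt_of_lt hn⟩) :
    B = A := by
  have hrow (i : Fin n) := sum_row_sub_mul hn hd (congrFun hRow i) (hoff i)
  have hbalanced (j : Fin n) : ∑ i, ((A (Ecell n d i) : ℤ) - B (Ecell n d i)) *
      ((tauRow n d i j : ℤ) - epsRow n d i j) = 0 := by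
    calc _ = ∑ i, ∑ α : RowExp n d i, ((B ⟨i, α⟩ : ℤ) - A ⟨i, α⟩) * (α : Fin n → ℕ) j :=
          Finset.sum_congr rfl fun i _ ↦ (hrow i _).symm
      _ = (wt n d B j : ℤ) - wt n d A j := by
          simp only [wt, Nat.cast_sum, Nat.cast_mul, ← Finset.sum_sub_distrib, ← sub_mul,
            Fintype.sum_sigma]
      _ = 0 := by rw [hwt, sub_self]
  obtain ⟨N, rfl⟩ : ∃ N, n = N + 1 := Nat.exists_eq_add_one.2 (Nat.zero_lt_of_lt hn)
  have hu := eq_zero_of_balanced hd hbalanced hE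
  funext ⟨i, α⟩
  have hα := hrow i (Pi.single α 1)
  rw [congrFun hu i, Pi.zero_apply, zero_mul] at hα
  simpa [Pi.single_apply, sub_eq_zero] using hα

theorem le_of_oneDE_le_moveEToT {A B : DiagT n d → ℕ} (hle : oneDE n d B ≤ moveEToT n d A)
    {c : DiagT n d} (hE : (c.2 : Fin n → ℕ) ≠ epsRow n d c.1)
    (hT : (c.2 : Fin n → ℕ) ≠ tauRow n d c.1) : B c ≤ A c := by
  simpa [moveEToT, oneDE, pushT, hE, hT] using hle c

theorem Zc_lt_of_oneDE_le_moveEToT (hd : ∀ i, 1 ≤ d i) {A B : DiagT n d → ℕ}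
    (hle : oneDE n d B ≤ moveEToT n d A)
    (hoff : ∃ i α, α ≠ epsExp n d i ∧ α ≠ tauExp n d hd i ∧ B ⟨i, α⟩ ≠ A ⟨i, α⟩) :
    Zc n d B < Zc n d A := by
  obtain ⟨i, α, hE, hT, hne⟩ := hoff
  rw [ne_eq, ← coe_eq_epsRow_iff] at hE
  rw [ne_eq, ← coe_eq_tauRow_iff] at hT
  refine Finset.sum_lt_sum (fun c _ ↦ ?_) ⟨⟨i, α⟩, Finset.mem_univ _, ?_⟩
  · split_ifs with hc
    · exact le_rfl
    · rw [not_or] at hc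
      exact le_of_oneDE_le_moveEToT hle hc.1 hc.2
  · rw [if_neg (not_or.2 ⟨hE, hT⟩), if_neg (not_or.2 ⟨hE, hT⟩)]
    exact (le_of_oneDE_le_moveEToT hle hE hT).lt_of_ne hne

theorem prec_of_oneDE_le_moveEToT (hn : 2 ≤ n) (hd : ∀ i, 1 ≤ d i) {A B : DiagT n d → ℕ}
    (hA : A ∈ REF n d) (hB : B ∈ REF n d) (hAfrr : ¬ isFRR n d (Nat.zero_lt_of_lt hn) A)
    (hle : oneDE n d B ≤ moveEToT n d A) (hne : B ≠ A) : prec n d (Nat.zero_lt_of_lt hn) B A := by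
  by_cases hBfrr : isFRR n d (Nat.zero_lt_of_lt hn) B
  · exact Or.inl ⟨hBfrr, hAfrr⟩
  refine Or.inr ⟨hBfrr, hAfrr, Zc_lt_of_oneDE_le_moveEToT hd hle ?_⟩
  obtain ⟨hRowA, hwtA⟩ := (mem_REF_iff A).1 hA
  obtain ⟨hRowB, hwtB⟩ := (mem_REF_iff B).1 hB
  by_contra! hoff
  refine hne (eq_of_agree_off_transversals hn hd (hRowB.trans hRowA.symm)
    (hwtB.trans hwtA.symm) hoff ?_)
  have hltA := ((le_Row A _ _).trans_eq (congrFun hRowA _)).lt_of_ne hAfrr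
  have hltB := ((le_Row B _ _).trans_eq (congrFun hRowB _)).lt_of_ne hBfrr
  exact abs_sub_lt_of_nonneg_of_lt (Nat.cast_nonneg _) (Nat.cast_lt.2 hltA) (Nat.cast_nonneg _)
    (Nat.cast_lt.2 hltB)

theorem not_prec_self (hn : 0 < n) (A : DiagT n d → ℕ) : ¬ prec n d hn A A := by
  simp [prec]

end Order

theorem resolvent_equation_general (n : ℕ) (hn : 2 ≤ n) (d : Fin n → ℕ) (hd : ∀ i, 1 ≤ d i)
    (R : MvPolynomial (Fin n × (Fin n → ℕ)) ℚ) {γ : Fin n → ℕ} (hR : Bezout n d R γ)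
    (A : DiagT n d → ℕ) (hA : A ∈ REF n d) (hAnfrr : ¬ isFRR n d (Nat.zero_lt_of_lt hn) A) :
    coeff (expOf n d A) R =
      ∑ B ∈ (REF n d).filter (fun B ↦ prec n d (Nat.zero_lt_of_lt hn) B A),
        transT n d A B * coeff (expOf n d B) R := by
  obtain ⟨hRow, hwt⟩ := (mem_REF_iff A).1 hA
  have hsum : ∑ B ∈ REF n d, transT n d A B * coeff (expOf n d B) R = 0 :=
    sum_transT_mul_coeff_eq_zero hn hd hR A fun B ↦ by rw [mem_REF_iff, hRow, hwt]
  have hprec : ∑ B ∈ (REF n d).filter (fun B ↦ prec n d (Nat.zero_lt_of_lt hn) B A),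
      transT n d A B * coeff (expOf n d B) R =
        ∑ B ∈ (REF n d).erase A, transT n d A B * coeff (expOf n d B) R := by
    refine Finset.sum_subset (fun B hB ↦ ?_) fun B hB hBprec ↦ ?_
    · obtain ⟨hBREF, hBA⟩ := Finset.mem_filter.1 hB
      exact Finset.mem_erase.2 ⟨fun h ↦ not_prec_self _ A (h ▸ hBA), hBREF⟩
    · obtain ⟨hne, hBREF⟩ := Finset.mem_erase.1 hB
      rw [transT_of_not_le fun hle ↦ hBprec (Finset.mem_filter.2
        ⟨hBREF, prec_of_oneDE_le_moveEToT hn hd hA hBREF hAnfrr hle hne⟩), zero_mul]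
  rw [← Finset.add_sum_erase _ _ hA, transT_self hn hd, neg_one_mul] at hsum
  rw [hprec, neg_add_eq_zero.1 hsum]

/-- Let `R` be an inertia form of degree zero for the format
`(n, n, (d₁,…,d_n))`, multihomogeneous of the canonical multidegree, and let
`r_A = [a^A] R`. Then for every `A ∈ REF ∖ FRR`,
`r_A = Σ_{Ã ∈ REF, Ã ≺ A} 𝒯(A, Ã) · r_Ã`. -/
theorem resolvent_equation (n : ℕ) (hn : 2 ≤ n) (d : Fin n → ℕ) (hd : ∀ i, 1 ≤ d i)
    (R : MvPolynomial (Fin n × (Fin n → ℕ)) ℚ)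
    (hIF : IsIFDZ n d R)
    (hMH : MultiHom n d (canonδ n d) R)
    (A : DiagT n d → ℕ) (hA : A ∈ REF n d) (hAnfrr : ¬ isFRR n d (by omega) A) :
    MvPolynomial.coeff (expOf n d A) R
      = ∑ A' ∈ (REF n d).filter (fun A' => prec n d (by omega) A' A),
          transT n d A A' * MvPolynomial.coeff (expOf n d A') R := by
  obtain ⟨q, hq⟩ := hIF
  have hγ : Bezout n d R (Pi.single ⟨0, Nat.zero_lt_of_lt hn⟩ q) := hq _ (by simp)
  exact resolvent_equation_general n hn d hd R hγ A hA hAnfrr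

end ResultantMarkov
end

section
/- Let n ≥ 2, let σ and σ̃ be permutations of {1,…,n}, let ρ be the n-cycle with ρ(i) = i+1 for i < n and ρ(n) = 1, and suppose the pair (σ,σ̃) satisfies condition (C). If a ∈ {1,…,n} satisfies σ(a) ≠ a and σ̃(a) ≠ a, then for every natural number k ≥ 0, σ̃(σ^k(a)) = σ^{k+1}(a). -/
/-- Condition (C) on a pair of permutations `(σ, σ')` relative to the `n`-cycle `ρ`:
for every `i` with `σ' i ≠ i`, either `σ' i = σ i`, or both `σ i = i` and
`σ' i = ρ i`. -/
def CondC (n : ℕ) (ρ σ σ' : Equiv.Perm (Fin n)) : Prop :=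
  ∀ i, σ' i ≠ i → (σ' i = σ i ∨ (σ i = i ∧ σ' i = ρ i))

open Function Set

theorem CondC.eqOn_compl_fixedPoints {n : ℕ} {ρ σ σ' : Equiv.Perm (Fin n)}
    (hC : CondC n ρ σ σ') : EqOn σ' σ ((fixedPoints σ)ᶜ ∩ (fixedPoints σ')ᶜ) :=
  fun i ⟨hσ, hσ'⟩ ↦ (hC i hσ').resolve_right fun h ↦ hσ h.1

section InjectiveSelfMaps

variable {α : Type*} {f g : α → α}

theorem mapsTo_compl_fixedPoints_inter_of_eqOn (hf : Injective f) (hg : Injective g)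
    (hfg : EqOn g f ((fixedPoints f)ᶜ ∩ (fixedPoints g)ᶜ)) :
    MapsTo f ((fixedPoints f)ᶜ ∩ (fixedPoints g)ᶜ) ((fixedPoints f)ᶜ ∩ (fixedPoints g)ᶜ) := by
  intro b hb
  have not_fixed_f : ¬ IsFixedPt f (f b) := mt hf.isFixedPt_apply_iff.1 hb.1
  have not_fixed_g : ¬ IsFixedPt g (g b) := mt hg.isFixedPt_apply_iff.1 hb.2
  exact ⟨not_fixed_f, hfg hb ▸ not_fixed_g⟩

theorem lin_lem2_general (hf : Injective f) (hg : Injective g)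
    (hfg : EqOn g f ((fixedPoints f)ᶜ ∩ (fixedPoints g)ᶜ))
    {a : α} (ha : f a ≠ a) (ha' : g a ≠ a) (k : ℕ) : g (f^[k] a) = f^[k + 1] a := by
  have moved := (mapsTo_compl_fixedPoints_inter_of_eqOn hf hg hfg).iterate k ⟨ha, ha'⟩
  rw [iterate_succ_apply', hfg moved]

end InjectiveSelfMaps

/-- If `σ a ≠ a` and `σ' a ≠ a`, then `σ'(σ^k(a)) = σ^{k+1}(a)` for all `k ≥ 0`. -/
theorem lin_lem2 (n : ℕ) (hn : 2 ≤ n) (ρ σ σ' : Equiv.Perm (Fin n))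
    (hρ : ∀ i : Fin n, (ρ i).val = if i.val + 1 < n then i.val + 1 else 0)
    (hC : CondC n ρ σ σ')
    (a : Fin n) (ha : σ a ≠ a) (ha' : σ' a ≠ a) :
    ∀ k : ℕ, σ' ((σ ^ k) a) = (σ ^ (k + 1)) a := by
  simpa only [Equiv.Perm.iterate_eq_pow] using
    lin_lem2_general σ.injective σ'.injective hC.eqOn_compl_fixedPoints ha ha'
end
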